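/- arXiv:2106.02717 — 3 statements merged into one kernel-verified Lean document; each statement's English description precedes it below -/
import Mathlib

section
/- Let β ∈ {0, 1}, d ≥ 1, and λ ∈ 2^ℤ. Then there is a constant C (independent of λ, t and f) such that for every Schwartz function f on ℝ^d, every t ≠ 0, and either choice of sign, ‖S_{m_β}(±t) P_λ f‖_{L^∞(ℝ^d)} ≤ C · c_{β,d}(λ) · |t|^{-d/2} · ‖f‖_{L^1(ℝ^d)}, where c_{β,d}(λ) = λ^{d/2-1} ⟨√β λ⟩^{-d/2} ⟨λ⟩^{d/4+1}. -/
noncomputable section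

open MeasureTheory Complex Real
open scoped FourierTransform ENNReal

/-- Euclidean space `ℝ^d`. -/
abbrev Euc (d : ℕ) := EuclideanSpace ℝ (Fin d)

/-- Japanese bracket `⟨x⟩ = (1+|x|²)^{1/2}`. -/
def jap (x : ℝ) : ℝ := Real.sqrt (1 + x ^ 2)

/-- The symbol `m_β(r) = √(r(1+βr²)tanh r)`. -/
def mSymb (β r : ℝ) : ℝ := Real.sqrt (r * (1 + β * r ^ 2) * Real.tanh r)

/-- The constant `c_{β,d}(λ) = λ^{d/2-1}⟨√β λ⟩^{-d/2}⟨λ⟩^{d/4+1}`. -/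
def cFactor (β : ℝ) (d : ℕ) (lam : ℝ) : ℝ :=
  lam ^ ((d : ℝ) / 2 - 1) * jap (Real.sqrt β * lam) ^ (-(d : ℝ) / 2) *
    jap lam ^ ((d : ℝ) / 4 + 1)

/-- `χ ∈ C_0^∞(ℝ)`, `0 ≤ χ ≤ 1`, `χ ≡ 1` on `[-1,1]`, `supp χ ⊆ [-2,2]`. -/
def IsCutoff (χ : ℝ → ℝ) : Prop :=
  ContDiff ℝ (⊤ : ℕ∞) χ ∧ HasCompactSupport χ ∧ (∀ s, 0 ≤ χ s ∧ χ s ≤ 1) ∧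
    (∀ s ∈ Set.Icc (-1 : ℝ) 1, χ s = 1) ∧ Function.support χ ⊆ Set.Icc (-2 : ℝ) 2

/-- `ρ(s) = χ(s) - χ(2s)`. -/
def rho (χ : ℝ → ℝ) (s : ℝ) : ℝ := χ s - χ (2 * s)

/-- Fourier multiplier operator with symbol `m`. -/
def mulOp {d : ℕ} (m : Euc d → ℂ) (f : Euc d → ℂ) : Euc d → ℂ :=
  𝓕⁻ fun ξ => m ξ * 𝓕 f ξ

/-- The Littlewood–Paley type projection `P_λ` with multiplier `ρ(|ξ|/λ)`. -/
def proj {d : ℕ} (χ : ℝ → ℝ) (lam : ℝ) (f : Euc d → ℂ) : Euc d → ℂ :=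
  mulOp (fun ξ => (rho χ (‖ξ‖ / lam) : ℂ)) f

/-- The propagator `S_{m_β}(t) = exp(-it m_β(D))`, so that `S_{m_β}(±t) = prop β (±t)`. -/
def propg (β : ℝ) {d : ℕ} (t : ℝ) (f : Euc d → ℂ) : Euc d → ℂ :=
  mulOp (fun ξ => Complex.exp (-Complex.I * (t * mSymb β ‖ξ‖))) f

section DispersiveKernel

open scoped ContDiff RealInnerProductSpace

/-- **Van der Corput**, first derivative test with monotone derivative. -/
theorem norm_integral_exp_le_of_deriv_ge {a b κ : ℝ} (hab : a ≤ b) (hκ : 0 < κ)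
    {φ φ' φ'' : ℝ → ℝ} (h1 : ∀ x ∈ Set.Icc a b, HasDerivAt φ (φ' x) x)
    (h2 : ∀ x ∈ Set.Icc a b, HasDerivAt φ' (φ'' x) x) (hc : ContinuousOn φ'' (Set.Icc a b))
    (h3 : ∀ x ∈ Set.Icc a b, 0 ≤ φ'' x) (h4 : ∀ x ∈ Set.Icc a b, κ ≤ φ' x) :
    ‖∫ x in a..b, cexp (φ x * I)‖ ≤ 3 / κ := by
  have hI : Set.uIcc a b = Set.Icc a b := Set.uIcc_of_le hab
  have hpos : ∀ x ∈ Set.Icc a b, 0 < φ' x := fun x hx => hκ.trans_le (h4 x hx)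
  have hc1 : ContinuousOn φ' (Set.Icc a b) := fun x hx => (h2 x hx).continuousAt.continuousWithinAt
  have hc0 : ContinuousOn φ (Set.Icc a b) := fun x hx => (h1 x hx).continuousAt.continuousWithinAt
  have hinv : ∀ x ∈ Set.Icc a b, HasDerivAt (fun x => (φ' x)⁻¹) (-φ'' x / φ' x ^ 2) x :=
    fun x hx => (h2 x hx).inv (hpos x hx).ne'
  have hinvc : ContinuousOn (fun x => -φ'' x / φ' x ^ 2) (Set.Icc a b) :=
    hc.neg.div (hc1.pow 2) fun x hx => (pow_pos (hpos x hx) 2).ne'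
  have hpc : ContinuousOn (fun x => φ'' x / φ' x ^ 2) (Set.Icc a b) :=
    hc.div (hc1.pow 2) fun x hx => (pow_pos (hpos x hx) 2).ne'
  have hu : ∀ x ∈ Set.uIcc a b, HasDerivAt (fun x => (((φ' x)⁻¹ : ℝ) : ℂ) * (-I))
      (((-φ'' x / φ' x ^ 2 : ℝ) : ℂ) * (-I)) x := fun x hx =>
    ((hinv x (hI ▸ hx)).ofReal_comp).mul_const _
  have hv : ∀ x ∈ Set.uIcc a b, HasDerivAt (fun x => cexp (φ x * I))
      (cexp (φ x * I) * (φ' x * I)) x := fun x hx =>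
    ((h1 x (hI ▸ hx)).ofReal_comp.mul_const I).cexp
  have hexpc : ContinuousOn (fun x => cexp (φ x * I)) (Set.Icc a b) := by fun_prop
  have hu' : IntervalIntegrable (fun x => ((-φ'' x / φ' x ^ 2 : ℝ) : ℂ) * (-I)) volume a b := by
    apply ContinuousOn.intervalIntegrable
    rw [hI]
    exact (continuous_ofReal.comp_continuousOn hinvc).mul continuousOn_const
  have hv' : IntervalIntegrable (fun x => cexp (φ x * I) * (φ' x * I)) volume a b := by
    apply ContinuousOn.intervalIntegrable
    rw [hI]
    fun_prop
  have key := intervalIntegral.integral_mul_deriv_eq_deriv_mul hu hv hu' hv'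
  have e1 : ∫ x in a..b, cexp (φ x * I)
      = ∫ x in a..b, (((φ' x)⁻¹ : ℝ) : ℂ) * (-I) * (cexp (φ x * I) * (φ' x * I)) := by
    apply intervalIntegral.integral_congr
    intro x hx
    have : (φ' x : ℂ) ≠ 0 := by exact_mod_cast (hpos x (hI ▸ hx)).ne'
    simp only [ofReal_inv]
    field_simp
    rw [I_sq]; ring
  rw [e1, key]
  have hnorm : ∀ x, ‖cexp (φ x * I)‖ = 1 := fun x => norm_exp_ofReal_mul_I _
  have b1 : ∀ x ∈ Set.Icc a b, ‖(((φ' x)⁻¹ : ℝ) : ℂ) * (-I) * cexp (φ x * I)‖ = (φ' x)⁻¹ := by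
    intro x hx
    rw [norm_mul, hnorm, norm_mul, norm_neg, norm_I, Complex.norm_real, Real.norm_eq_abs,
      abs_of_pos (inv_pos.2 (hpos x hx))]
    ring
  have b2 : ‖∫ x in a..b, ((-φ'' x / φ' x ^ 2 : ℝ) : ℂ) * (-I) * cexp (φ x * I)‖
      ≤ (φ' a)⁻¹ - (φ' b)⁻¹ := by
    have hFTC : ∫ x in a..b, (φ'' x / φ' x ^ 2) = (φ' a)⁻¹ - (φ' b)⁻¹ := by
      have := intervalIntegral.integral_eq_sub_of_hasDerivAt (a := a) (b := b)
        (f := fun x => -(φ' x)⁻¹) (f' := fun x => φ'' x / φ' x ^ 2)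
        (fun x hx => by simpa [neg_div] using (hinv x (hI ▸ hx)).fun_neg)
        (by apply ContinuousOn.intervalIntegrable
            rw [hI]; exact hpc)
      rw [this]; ring
    rw [← hFTC]
    apply intervalIntegral.norm_integral_le_of_norm_le hab
    · refine Filter.Eventually.of_forall fun x hx => ?_
      have hx' : x ∈ Set.Icc a b := Set.Ioc_subset_Icc_self hx
      rw [norm_mul, hnorm, norm_mul, norm_neg, norm_I, Complex.norm_real, Real.norm_eq_abs,
        neg_div, abs_neg, abs_of_nonneg (div_nonneg (h3 x hx') (sq_nonneg _))]
      simp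
    · apply ContinuousOn.intervalIntegrable
      rw [hI]; exact hpc
  have ha : a ∈ Set.Icc a b := ⟨le_rfl, hab⟩
  have hb : b ∈ Set.Icc a b := ⟨hab, le_rfl⟩
  have ia : (φ' a)⁻¹ ≤ κ⁻¹ := inv_anti₀ hκ (h4 a ha)
  have ib : (φ' b)⁻¹ ≤ κ⁻¹ := inv_anti₀ hκ (h4 b hb)
  have ib0 : 0 < (φ' b)⁻¹ := inv_pos.2 (hpos b hb)
  calc _ ≤ _ := norm_sub_le _ _
    _ ≤ (‖_‖ + ‖_‖) + _ := by gcongr; exact norm_sub_le _ _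
    _ ≤ ((φ' b)⁻¹ + (φ' a)⁻¹) + ((φ' a)⁻¹ - (φ' b)⁻¹) := by
        rw [b1 a ha, b1 b hb]; gcongr
    _ ≤ 3 * κ⁻¹ := by linarith [inv_pos.2 hκ]
    _ = 3 / κ := by rw [div_eq_mul_inv]

theorem norm_integral_exp_le_length {a b : ℝ} (hab : a ≤ b) (φ : ℝ → ℝ) :
    ‖∫ x in a..b, cexp (φ x * I)‖ ≤ b - a := by
  have := intervalIntegral.norm_integral_le_of_norm_le_const (a := a) (b := b) (C := 1)
    (f := fun x => cexp (φ x * I)) (fun x _ => (norm_exp_ofReal_mul_I _).le)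
  rwa [one_mul, abs_of_nonneg (sub_nonneg.2 hab)] at this

/-- Second derivative test on an interval to the right of the critical point. -/
theorem norm_integral_exp_le_of_deriv_nonneg {a b κ : ℝ} (hab : a ≤ b) (hκ : 0 < κ)
    {φ φ' φ'' : ℝ → ℝ} (h1 : ∀ x ∈ Set.Icc a b, HasDerivAt φ (φ' x) x)
    (h2 : ∀ x ∈ Set.Icc a b, HasDerivAt φ' (φ'' x) x) (hc : ContinuousOn φ'' (Set.Icc a b))
    (h3 : ∀ x ∈ Set.Icc a b, κ ≤ φ'' x) (h4 : 0 ≤ φ' a) :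
    ‖∫ x in a..b, cexp (φ x * I)‖ ≤ 4 / √κ := by
  have hs : 0 < √κ := Real.sqrt_pos.2 hκ
  set δ : ℝ := 1 / √κ with hδ
  have hδ0 : 0 < δ := by positivity
  have h4δ : 4 / √κ = 4 * δ := by rw [hδ]; ring
  rcases le_total b (a + δ) with hb | hb
  · refine (norm_integral_exp_le_length hab φ).trans ?_
    rw [h4δ]; linarith
  · have hc0 : ContinuousOn φ (Set.Icc a b) :=
      fun x hx => (h1 x hx).continuousAt.continuousWithinAt
    have hexpc : ContinuousOn (fun x => cexp (φ x * I)) (Set.Icc a b) := by fun_prop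
    have hsub : Set.Icc (a + δ) b ⊆ Set.Icc a b := Set.Icc_subset_Icc_left (by linarith)
    have hinteg : ∀ u v, a ≤ u → u ≤ v → v ≤ b →
        IntervalIntegrable (fun x => cexp (φ x * I)) volume u v := fun u v h h' h'' =>
      (hexpc.mono (by rw [Set.uIcc_of_le h']; exact Set.Icc_subset_Icc h h'')).intervalIntegrable
    rw [← intervalIntegral.integral_add_adjacent_intervals
      (hinteg a (a + δ) le_rfl (by linarith) hb) (hinteg (a + δ) b (by linarith) hb le_rfl)]
    have hlow : ∀ x ∈ Set.Icc (a + δ) b, κ * δ ≤ φ' x := by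
      intro x hx
      have hax : a ≤ x := by linarith [hx.1]
      have := Convex.mul_sub_le_image_sub_of_le_deriv (convex_Icc a b) (f := φ') (C := κ)
        (fun x hx => (h2 x hx).continuousAt.continuousWithinAt)
        (fun x hx => (h2 x (interior_subset hx)).differentiableAt.differentiableWithinAt)
        (fun x hx => by rw [(h2 x (interior_subset hx)).deriv]; exact h3 x (interior_subset hx))
        a ⟨le_rfl, hab⟩ x ⟨hax, hx.2⟩ hax
      have h5 : κ * δ ≤ κ * (x - a) := by gcongr; linarith [hx.1]
      linarith
    have hfar := norm_integral_exp_le_of_deriv_ge hb (κ := κ * δ) (by positivity)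
      (fun x hx => h1 x (hsub hx)) (fun x hx => h2 x (hsub hx)) (hc.mono hsub)
      (fun x hx => hκ.le.trans (h3 x (hsub hx))) hlow
    have hnear := norm_integral_exp_le_length (show a ≤ a + δ by linarith) φ
    have h3δ : 3 / (κ * δ) = 3 * δ := by
      rw [hδ]
      field_simp
      rw [Real.sq_sqrt hκ.le]
    rw [h4δ]
    rw [h3δ] at hfar
    refine (norm_add_le _ _).trans ?_
    linarith

theorem norm_integral_exp_le_of_deriv_nonpos {a b κ : ℝ} (hab : a ≤ b) (hκ : 0 < κ)
    {φ φ' φ'' : ℝ → ℝ} (h1 : ∀ x ∈ Set.Icc a b, HasDerivAt φ (φ' x) x)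
    (h2 : ∀ x ∈ Set.Icc a b, HasDerivAt φ' (φ'' x) x) (hc : ContinuousOn φ'' (Set.Icc a b))
    (h3 : ∀ x ∈ Set.Icc a b, κ ≤ φ'' x) (h4 : φ' b ≤ 0) :
    ‖∫ x in a..b, cexp (φ x * I)‖ ≤ 4 / √κ := by
  have hm : ∀ x ∈ Set.Icc (-b) (-a), -x ∈ Set.Icc a b := fun x hx =>
    ⟨by linarith [hx.2], by linarith [hx.1]⟩
  have := norm_integral_exp_le_of_deriv_nonneg (a := -b) (b := -a) (by linarith) hκ
    (φ := fun x => φ (-x)) (φ' := fun x => -φ' (-x)) (φ'' := fun x => φ'' (-x))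
    (fun x hx => ((h1 (-x) (hm x hx)).comp x (hasDerivAt_neg' x)).congr_deriv (by ring))
    (fun x hx => ((h2 (-x) (hm x hx)).comp x (hasDerivAt_neg' x)).fun_neg.congr_deriv (by ring))
    (hc.comp continuousOn_neg hm) (fun x hx => h3 _ (hm x hx)) (by simpa using h4)
  rwa [intervalIntegral.integral_comp_neg (fun x => cexp (φ x * I)), neg_neg, neg_neg] at this

/-- **Van der Corput**, second derivative test. -/
theorem norm_integral_exp_le_of_deriv2_ge {a b κ : ℝ} (hab : a ≤ b) (hκ : 0 < κ)
    {φ φ' φ'' : ℝ → ℝ} (h1 : ∀ x ∈ Set.Icc a b, HasDerivAt φ (φ' x) x)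
    (h2 : ∀ x ∈ Set.Icc a b, HasDerivAt φ' (φ'' x) x) (hc : ContinuousOn φ'' (Set.Icc a b))
    (h3 : ∀ x ∈ Set.Icc a b, κ ≤ φ'' x) :
    ‖∫ x in a..b, cexp (φ x * I)‖ ≤ 8 / √κ := by
  have h48 : 4 / √κ + 4 / √κ = 8 / √κ := by ring
  have hp : 0 ≤ 4 / √κ := by positivity
  rcases le_total 0 (φ' a) with ha | ha
  · have := norm_integral_exp_le_of_deriv_nonneg hab hκ h1 h2 hc h3 ha
    linarith
  rcases le_total (φ' b) 0 with hb | hb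
  · have := norm_integral_exp_le_of_deriv_nonpos hab hκ h1 h2 hc h3 hb
    linarith
  have hc1 : ContinuousOn φ' (Set.Icc a b) := fun x hx => (h2 x hx).continuousAt.continuousWithinAt
  obtain ⟨c, hcab, hc0⟩ := intermediate_value_Icc hab hc1 ⟨ha, hb⟩
  have s1 : Set.Icc a c ⊆ Set.Icc a b := Set.Icc_subset_Icc_right hcab.2
  have s2 : Set.Icc c b ⊆ Set.Icc a b := Set.Icc_subset_Icc_left hcab.1
  have hcφ : ContinuousOn φ (Set.Icc a b) := fun x hx => (h1 x hx).continuousAt.continuousWithinAt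
  have hexpc : ContinuousOn (fun x => cexp (φ x * I)) (Set.Icc a b) := by fun_prop
  rw [← intervalIntegral.integral_add_adjacent_intervals (b := c)
    ((hexpc.mono (by rwa [Set.uIcc_of_le hcab.1])).intervalIntegrable)
    ((hexpc.mono (by rwa [Set.uIcc_of_le hcab.2])).intervalIntegrable)]
  have l := norm_integral_exp_le_of_deriv_nonpos hcab.1 hκ (fun x hx => h1 x (s1 hx))
    (fun x hx => h2 x (s1 hx)) (hc.mono s1) (fun x hx => h3 x (s1 hx)) hc0.le
  have r := norm_integral_exp_le_of_deriv_nonneg hcab.2 hκ (fun x hx => h1 x (s2 hx))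
    (fun x hx => h2 x (s2 hx)) (hc.mono s2) (fun x hx => h3 x (s2 hx)) hc0.ge
  refine (norm_add_le _ _).trans ?_
  linarith

/-- An oscillatory integral with amplitude, in terms of its truncations without amplitude. -/
theorem norm_integral_exp_mul_le {a b M D : ℝ} (hab : a ≤ b) {φ : ℝ → ℝ}
    (hφ : ContinuousOn φ (Set.Icc a b)) {A A' : ℝ → ℂ}
    (hA : ∀ x ∈ Set.Icc a b, HasDerivAt A (A' x) x) (hb : A b = 0)
    (hA' : ∀ x ∈ Set.Icc a b, ‖A' x‖ ≤ D)
    (hM : ∀ c ∈ Set.Icc a b, ‖∫ x in a..c, cexp (φ x * I)‖ ≤ M) :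
    ‖∫ x in a..b, cexp (φ x * I) * A x‖ ≤ M * D * (b - a) := by
  have hexpc : ContinuousOn (fun x => cexp (φ x * I)) (Set.Icc a b) := by fun_prop
  have hderiv : ∀ x ∈ Set.Icc a b, deriv A x = A' x := fun x hx => (hA x hx).deriv
  have hAi : IntervalIntegrable (deriv A) volume a b := by
    rw [intervalIntegrable_iff_integrableOn_Ioc_of_le hab]
    refine Measure.integrableOn_of_bounded (M := D) (by simp)
      (stronglyMeasurable_deriv A).aestronglyMeasurable ?_
    filter_upwards [ae_restrict_mem measurableSet_Ioc] with x hx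
    have hx' := Set.Ioc_subset_Icc_self hx
    rw [hderiv x hx']
    exact hA' x hx'
  have hMain : ∫ x in a..b, cexp (φ x * I) * A x
      = - ∫ x in a..b, (∫ y in a..x, cexp (φ y * I)) * deriv A x := by
    have := intervalIntegral.integral_mul_deriv_eq_deriv_mul_of_hasDeriv_right (a := a) (b := b)
      (u := fun x => ∫ y in a..x, cexp (φ y * I)) (v := A)
      (u' := fun x => cexp (φ x * I)) (v' := deriv A) ?_ ?_ ?_ ?_ ?_ hAi
    · rw [this, hb]; simp
    · rw [Set.uIcc_of_le hab]
      have := intervalIntegral.continuousOn_primitive_interval (a := a) (b := b)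
        (f := fun x => cexp (φ x * I)) (μ := volume)
        (by rw [Set.uIcc_of_le hab]; exact hexpc.integrableOn_Icc)
      rwa [Set.uIcc_of_le hab] at this
    · rw [Set.uIcc_of_le hab]
      exact fun x hx => (hA x hx).continuousAt.continuousWithinAt
    · intro x hx
      rw [min_eq_left hab, max_eq_right hab] at hx
      have hx' := Set.Ioo_subset_Icc_self hx
      apply HasDerivAt.hasDerivWithinAt
      apply intervalIntegral.integral_hasDerivAt_right
      · apply ContinuousOn.intervalIntegrable
        rw [Set.uIcc_of_le hx.1.le]
        exact hexpc.mono (Set.Icc_subset_Icc_right hx.2.le)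
      · exact (hexpc.mono Set.Ioo_subset_Icc_self).stronglyMeasurableAtFilter isOpen_Ioo x hx
      · exact hexpc.continuousAt (Icc_mem_nhds hx.1 hx.2)
    · intro x hx
      rw [min_eq_left hab, max_eq_right hab] at hx
      have hx' := Set.Ioo_subset_Icc_self hx
      rw [hderiv x hx']
      exact (hA x hx').hasDerivWithinAt
    · apply ContinuousOn.intervalIntegrable
      rwa [Set.uIcc_of_le hab]
  rw [hMain, norm_neg]
  have := intervalIntegral.norm_integral_le_of_norm_le_const (a := a) (b := b) (C := M * D)
    (f := fun x => (∫ y in a..x, cexp (φ y * I)) * deriv A x) (fun x hx => by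
      rw [Set.uIoc_of_le hab] at hx
      have hx' := Set.Ioc_subset_Icc_self hx
      rw [norm_mul, hderiv x hx']
      have := hM x hx'
      have h0 := (norm_nonneg _).trans this
      gcongr
      exact hA' x hx')
  rwa [abs_of_nonneg (sub_nonneg.2 hab)] at this

/-- Partial derivative in the last (real) variable of a function on `E × ℝ`. -/
def sndDeriv {E F : Type*} [NormedAddCommGroup E] [NormedSpace ℝ E] [NormedAddCommGroup F]
    [NormedSpace ℝ F] (f : E × ℝ → F) (z : E × ℝ) : F := fderiv ℝ f z (0, 1)

section sndDeriv
variable {E F : Type*} [NormedAddCommGroup E] [NormedSpace ℝ E] [NormedAddCommGroup F]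
    [NormedSpace ℝ F]

theorem hasDerivAt_sndDeriv {f : E × ℝ → F} {p : E} {u : ℝ} (hf : DifferentiableAt ℝ f (p, u)) :
    HasDerivAt (fun v => f (p, v)) (sndDeriv f (p, u)) u :=
  hf.hasFDerivAt.comp_hasDerivAt u ((hasDerivAt_const u p).prodMk (hasDerivAt_id u))

theorem contDiffOn_sndDeriv {f : E × ℝ → F} {W : Set (E × ℝ)} (hf : ContDiffOn ℝ ∞ f W)
    (hW : IsOpen W) : ContDiffOn ℝ ∞ (sndDeriv f) W :=
  (hf.fderiv_of_isOpen hW (by simp)).clm_apply contDiffOn_const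

theorem hasDerivAt_sndDeriv_of_contDiffOn {f : E × ℝ → F} {W : Set (E × ℝ)}
    (hf : ContDiffOn ℝ ∞ f W) (hW : IsOpen W) {p : E} {u : ℝ} (h : (p, u) ∈ W) :
    HasDerivAt (fun v => f (p, v)) (sndDeriv f (p, u)) u :=
  hasDerivAt_sndDeriv ((hf.contDiffAt (hW.mem_nhds h)).differentiableAt (by simp))

theorem sndDeriv_eq_zero_of_notMem_Icc {f : E × ℝ → F} {a b : ℝ}
    (hf : ∀ p u, u ∉ Set.Icc a b → f (p, u) = 0) (p : E) (u : ℝ) (hu : u ∉ Set.Icc a b) :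
    sndDeriv f (p, u) = 0 := by
  have : f =ᶠ[nhds (p, u)] fun _ => 0 := by
    have ho : IsOpen {z : E × ℝ | z.2 ∉ Set.Icc a b} :=
      isClosed_Icc.isOpen_compl.preimage continuous_snd
    filter_upwards [ho.mem_nhds hu] with z hz using hf z.1 z.2 hz
  rw [sndDeriv, this.fderiv_eq]
  simp

/-- **Nonstationary phase**, uniformly for parameters in a compact set. -/
theorem exists_norm_integral_exp_le_pow {P : Set E} (hP : IsCompact P) {a a₀ b₀ b : ℝ}
    (ha : a < a₀) (hab : a₀ ≤ b₀) (hb : b₀ < b) {W : Set (E × ℝ)} (hW : IsOpen W)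
    (hPW : P ×ˢ Set.Icc a b ⊆ W) {θ : E × ℝ → ℝ} (hθ : ContDiffOn ℝ ∞ θ W)
    (hθ' : ∀ z ∈ W, sndDeriv θ z ≠ 0) (N : ℕ) (q : E × ℝ → ℝ) (hq : ContDiffOn ℝ ∞ q W)
    (hq0 : ∀ p u, u ∉ Set.Icc a₀ b₀ → q (p, u) = 0) :
    ∃ C, ∀ p ∈ P, ∀ T > 0,
      ‖∫ u in a..b, cexp ((T * θ (p, u) : ℝ) * I) * q (p, u)‖ ≤ C * T⁻¹ ^ N := by
  have hab' : a ≤ b := by linarith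
  induction N generalizing q with
  | zero =>
    obtain ⟨C, hC⟩ := (hP.prod isCompact_Icc).exists_bound_of_continuousOn
      (hq.continuousOn.mono hPW)
    refine ⟨C * |b - a|, fun p hp T _ => ?_⟩
    rw [pow_zero, mul_one]
    apply intervalIntegral.norm_integral_le_of_norm_le_const
    intro u hu
    rw [Set.uIoc_of_le hab'] at hu
    rw [norm_mul, norm_exp_ofReal_mul_I, one_mul, Complex.norm_real]
    exact hC (p, u) ⟨hp, Set.Ioc_subset_Icc_self hu⟩
  | succ N ih =>
    have hθs := contDiffOn_sndDeriv hθ hW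
    have hqs : ContDiffOn ℝ ∞ (fun z => q z / sndDeriv θ z) W := hq.div hθs hθ'
    have hqs0 : ∀ p u, u ∉ Set.Icc a₀ b₀ → q (p, u) / sndDeriv θ (p, u) = 0 :=
      fun p u hu => by rw [hq0 p u hu, zero_div]
    obtain ⟨C, hC⟩ := ih (sndDeriv fun z => q z / sndDeriv θ z) (contDiffOn_sndDeriv hqs hW)
      (sndDeriv_eq_zero_of_notMem_Icc hqs0)
    refine ⟨C, fun p hp T hT => ?_⟩
    have hmem : ∀ u ∈ Set.uIcc a b, (p, u) ∈ W := fun u hu =>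
      hPW ⟨hp, by rwa [Set.uIcc_of_le hab'] at hu⟩
    have hslice : ∀ {G : Type _} [NormedAddCommGroup G] [NormedSpace ℝ G] {f : E × ℝ → G},
        ContDiffOn ℝ ∞ f W → ContinuousOn (fun u => f (p, u)) (Set.uIcc a b) := fun hf =>
      hf.continuousOn.comp (by fun_prop) hmem
    have hu : ∀ u ∈ Set.uIcc a b, HasDerivAt (fun u => ((q (p, u) / sndDeriv θ (p, u) : ℝ) : ℂ))
        ((sndDeriv (fun z => q z / sndDeriv θ z) (p, u) : ℝ) : ℂ) u := fun u hu =>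
      (hasDerivAt_sndDeriv_of_contDiffOn hqs hW (hmem u hu)).ofReal_comp
    have hv : ∀ u ∈ Set.uIcc a b, HasDerivAt (fun u => cexp ((T * θ (p, u) : ℝ) * I))
        (cexp ((T * θ (p, u) : ℝ) * I) * ((T * sndDeriv θ (p, u) : ℝ) * I)) u := fun u hu =>
      ((((hasDerivAt_sndDeriv_of_contDiffOn hθ hW (hmem u hu)).const_mul T).ofReal_comp).mul_const
        I).cexp
    have c2 := hslice hθs
    have c3 := hslice (contDiffOn_sndDeriv hqs hW)
    have c4 : ContinuousOn (fun u => cexp ((T * θ (p, u) : ℝ) * I)) (Set.uIcc a b) :=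
      fun u hu => (hv u hu).continuousAt.continuousWithinAt
    have c5 : ContinuousOn (fun u => ((sndDeriv (fun z => q z / sndDeriv θ z) (p, u) : ℝ) : ℂ))
        (Set.uIcc a b) := continuous_ofReal.comp_continuousOn c3
    have c6 : ContinuousOn (fun u => ((T * sndDeriv θ (p, u) : ℝ) : ℂ) * I) (Set.uIcc a b) :=
      (continuous_ofReal.comp_continuousOn (continuousOn_const.mul c2)).mul continuousOn_const
    have key := intervalIntegral.integral_mul_deriv_eq_deriv_mul hu hv
      c5.intervalIntegrable (c4.mul c6).intervalIntegrable
    rw [hqs0 p a (fun h => by linarith [h.1]), hqs0 p b (fun h => by linarith [h.2])] at key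
    have e1 : ∫ u in a..b, cexp ((T * θ (p, u) : ℝ) * I) * q (p, u)
        = (T * I)⁻¹ * ∫ u in a..b, ((q (p, u) / sndDeriv θ (p, u) : ℝ) : ℂ) *
          (cexp ((T * θ (p, u) : ℝ) * I) * ((T * sndDeriv θ (p, u) : ℝ) * I)) := by
      rw [← intervalIntegral.integral_const_mul]
      apply intervalIntegral.integral_congr
      intro u hu
      have h1 : ((sndDeriv θ (p, u) : ℝ) : ℂ) ≠ 0 := by exact_mod_cast hθ' _ (hmem u hu)
      have h2 : (T : ℂ) ≠ 0 := by exact_mod_cast hT.ne'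
      push_cast
      field_simp [I_ne_zero]
    rw [e1, key]
    have h3 := hC p hp T hT
    simp only [ofReal_zero, zero_mul, sub_zero, zero_sub, norm_mul, norm_neg, norm_inv, norm_I,
      mul_one, Complex.norm_real, Real.norm_eq_abs, abs_of_pos hT]
    rw [pow_succ]
    calc _ ≤ T⁻¹ * (C * T⁻¹ ^ N) := by
          gcongr
          simpa only [mul_comm] using h3
      _ = _ := by ring

end sndDeriv

/-- The phase `(√σ r - y/√σ)²`, written without square roots. -/
def squarePhase (y r σ : ℝ) : ℝ := σ * r ^ 2 + y ^ 2 / σ - 2 * r * y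

theorem hasDerivAt_squarePhase (y r : ℝ) {σ : ℝ} (hσ : σ ≠ 0) :
    HasDerivAt (squarePhase y r) (r ^ 2 - y ^ 2 / σ ^ 2) σ := by
  have := (((hasDerivAt_id σ).mul_const (r ^ 2)).add
    ((hasDerivAt_inv hσ).const_mul (y ^ 2))).sub_const (2 * r * y)
  refine (this.congr_deriv ?_).congr_of_eventuallyEq (.of_forall fun x => ?_)
  · field_simp
    ring
  · simp [squarePhase, div_eq_mul_inv]

theorem hasDerivAt_deriv_squarePhase (y r : ℝ) {σ : ℝ} (hσ : σ ≠ 0) :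
    HasDerivAt (fun σ => r ^ 2 - y ^ 2 / σ ^ 2) (2 * y ^ 2 / σ ^ 3) σ := by
  have := (((hasDerivAt_pow 2 σ).inv (pow_ne_zero 2 hσ)).const_mul (y ^ 2)).const_sub (r ^ 2)
  refine (this.congr_deriv ?_).congr_of_eventuallyEq (.of_forall fun x => ?_)
  · simp only [Nat.cast_ofNat, Nat.add_one_sub_one, pow_one]
    field_simp
  · simp [div_eq_mul_inv]

theorem hasDerivAt_squarePhase_snd (y σ r : ℝ) :
    HasDerivAt (fun r => squarePhase y r σ) (2 * σ * r - 2 * y) r := by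
  have := ((((hasDerivAt_pow 2 r).const_mul σ).add_const (y ^ 2 / σ))).sub
    (((hasDerivAt_id r).const_mul 2).mul_const y)
  refine (this.congr_deriv ?_).congr_of_eventuallyEq (.of_forall fun x => ?_)
  · simp
    ring
  · simp [squarePhase]

/-- Uniform square root decay of the oscillatory integrals with phase `squarePhase`. -/
theorem exists_norm_integral_exp_squarePhase_le {σ₀ σ₁ : ℝ} (h0 : 0 < σ₀) (h1 : σ₀ ≤ σ₁) :
    ∃ K > 0, ∀ τ ≥ 1, ∀ y ≥ 0, ∀ r ∈ Set.Icc (1 / 2 : ℝ) 2, ∀ (B B' : ℝ → ℂ) (D : ℝ),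
      (∀ σ ∈ Set.Icc σ₀ σ₁, HasDerivAt B (B' σ) σ) → B σ₁ = 0 →
      (∀ σ ∈ Set.Icc σ₀ σ₁, ‖B' σ‖ ≤ D) →
      ‖∫ σ in σ₀..σ₁, cexp ((2 * π * τ * squarePhase y r σ : ℝ) * I) * B σ‖ ≤ K * D / √τ := by
  set κ : ℝ := σ₀ ^ 2 / (8 * σ₁ ^ 3) with hκ
  have h1' : 0 < σ₁ := h0.trans_le h1
  have hκ0 : 0 < κ := by positivity
  refine ⟨(8 / √(2 * π * κ) + 8) * (σ₁ - σ₀) + 1, ?_, ?_⟩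
  · have : 0 ≤ σ₁ - σ₀ := by linarith
    positivity
  intro τ hτ y hy r hr B B' D hB hB1 hB'
  have hτ0 : 0 < τ := by linarith
  have hs : 0 < √τ := Real.sqrt_pos.2 hτ0
  have hD : 0 ≤ D := (norm_nonneg _).trans (hB' σ₀ ⟨le_rfl, h1⟩)
  have hne : ∀ σ ∈ Set.Icc σ₀ σ₁, σ ≠ 0 := fun σ hσ => (h0.trans_le hσ.1).ne'
  have d1 : ∀ σ ∈ Set.Icc σ₀ σ₁, HasDerivAt (fun σ => 2 * π * τ * squarePhase y r σ)
      (2 * π * τ * (r ^ 2 - y ^ 2 / σ ^ 2)) σ := fun σ hσ =>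
    (hasDerivAt_squarePhase y r (hne σ hσ)).const_mul _
  have d2 : ∀ σ ∈ Set.Icc σ₀ σ₁, HasDerivAt (fun σ => 2 * π * τ * (r ^ 2 - y ^ 2 / σ ^ 2))
      (2 * π * τ * (2 * y ^ 2 / σ ^ 3)) σ := fun σ hσ =>
    (hasDerivAt_deriv_squarePhase y r (hne σ hσ)).const_mul _
  have cont2 : ContinuousOn (fun σ => 2 * π * τ * (2 * y ^ 2 / σ ^ 3)) (Set.Icc σ₀ σ₁) := by
    apply continuousOn_const.mul
    exact continuousOn_const.div (by fun_prop) fun σ hσ => pow_ne_zero 3 (hne σ hσ)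
  have hM : ∀ c ∈ Set.Icc σ₀ σ₁,
      ‖∫ σ in σ₀..c, cexp ((2 * π * τ * squarePhase y r σ : ℝ) * I)‖
        ≤ (8 / √(2 * π * κ) + 8) / √τ := by
    intro c hc
    have hsub : Set.Icc σ₀ c ⊆ Set.Icc σ₀ σ₁ := Set.Icc_subset_Icc_right hc.2
    rcases le_total (σ₀ / 4) y with hy1 | hy1
    · have := norm_integral_exp_le_of_deriv2_ge hc.1 (κ := 2 * π * κ * τ) (by positivity)
        (fun σ hσ => d1 σ (hsub hσ)) (fun σ hσ => d2 σ (hsub hσ)) (cont2.mono hsub)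
        (fun σ hσ => by
          have hσ' := hsub hσ
          have hσ0 : 0 < σ := h0.trans_le hσ'.1
          have : κ ≤ 2 * y ^ 2 / σ ^ 3 := by
            have e : κ = 2 * (σ₀ / 4) ^ 2 / σ₁ ^ 3 := by rw [hκ]; field_simp; norm_num
            rw [e]
            gcongr
            exact hσ'.2
          calc 2 * π * κ * τ = 2 * π * τ * κ := by ring
            _ ≤ _ := by gcongr)
      refine this.trans ?_
      rw [Real.sqrt_mul (by positivity), add_div, div_div]
      have : 0 ≤ 8 / √τ := by positivity
      linarith
    · have := norm_integral_exp_le_of_deriv_ge hc.1 (κ := 3 / 8 * π * τ) (by positivity)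
        (fun σ hσ => d1 σ (hsub hσ)) (fun σ hσ => d2 σ (hsub hσ)) (cont2.mono hsub)
        (fun σ hσ => by
          have hσ0 : 0 < σ := h0.trans_le hσ.1
          positivity)
        (fun σ hσ => by
          have hσ0 : 0 < σ := h0.trans_le hσ.1
          have e1 : y ^ 2 / σ ^ 2 ≤ 1 / 16 := by
            rw [div_le_iff₀ (by positivity)]
            have : y ≤ σ / 4 := by linarith [hσ.1]
            nlinarith
          have e2 : 1 / 4 ≤ r ^ 2 := by nlinarith [hr.1]
          calc 3 / 8 * π * τ = 2 * π * τ * (3 / 16) := by ring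
            _ ≤ _ := by gcongr; linarith)
      refine this.trans ?_
      have e3 : 3 / (3 / 8 * π * τ) ≤ 8 / τ := by
        rw [div_le_div_iff₀ (by positivity) hτ0]
        nlinarith [Real.pi_gt_three, mul_pos hτ0 hτ0]
      have e4 : 8 / τ ≤ 8 / √τ := by
        gcongr
        rw [Real.sqrt_le_left hτ0.le]
        nlinarith
      have : 0 ≤ 8 / √(2 * π * κ) / √τ := by positivity
      rw [add_div]
      linarith
  have cφ : ContinuousOn (fun σ => 2 * π * τ * squarePhase y r σ) (Set.Icc σ₀ σ₁) :=
    fun σ hσ => (d1 σ hσ).continuousAt.continuousWithinAt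
  have := norm_integral_exp_mul_le h1 cφ hB hB1 hB' hM
  refine this.trans ?_
  have : 0 ≤ D / √τ := by positivity
  calc _ = (8 / √(2 * π * κ) + 8) * (σ₁ - σ₀) * (D / √τ) := by ring
    _ ≤ ((8 / √(2 * π * κ) + 8) * (σ₁ - σ₀) + 1) * (D / √τ) := by gcongr; linarith
    _ = _ := by ring

theorem deriv_eq_zero_of_notMem_Icc {F : Type*} [NormedAddCommGroup F] [NormedSpace ℝ F]
    {f : ℝ → F} {a b : ℝ} (hf : ∀ u, u ∉ Set.Icc a b → f u = 0) (u : ℝ)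
    (hu : u ∉ Set.Icc a b) : deriv f u = 0 := by
  have : f =ᶠ[nhds u] fun _ => 0 := by
    filter_upwards [isClosed_Icc.isOpen_compl.mem_nhds hu] with z hz using hf z hz
  rw [this.deriv_eq]
  simp

/-- The `σ`-integral as a function of `r` is an amplitude of size `τ^{-1/2}`. -/
theorem exists_squarePhase_amplitude_bound {σ₀ a₀ b₀ σ₁ : ℝ} (h0 : 0 < σ₀) (ha : σ₀ < a₀)
    (hab : a₀ ≤ b₀) (hb : b₀ < σ₁) {A : ℝ → ℝ} (hA : ContDiff ℝ ∞ A)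
    (hA0 : ∀ σ, σ ∉ Set.Icc a₀ b₀ → A σ = 0) :
    ∃ C > 0, ∀ τ ≥ 1, ∀ y ≥ 0, ∀ r ∈ Set.Icc (1 / 2 : ℝ) 2,
      ‖∫ σ in σ₀..σ₁, cexp ((2 * π * τ * squarePhase y r σ : ℝ) * I) * A σ‖ ≤ C / √τ ∧
      ∃ b' : ℂ, HasDerivAt
        (fun r => ∫ σ in σ₀..σ₁, cexp ((2 * π * τ * squarePhase y r σ : ℝ) * I) * A σ) b' r ∧
        ‖b'‖ ≤ C / √τ := by
  have h1 : σ₀ ≤ σ₁ := by linarith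
  have hI : Set.uIcc σ₀ σ₁ = Set.Icc σ₀ σ₁ := Set.uIcc_of_le h1
  obtain ⟨K, hK0, hK⟩ := exists_norm_integral_exp_squarePhase_le h0 h1
  set A₂ : ℝ → ℝ := fun σ => 2 * σ ^ 2 * A σ with hA₂
  have hA₂s : ContDiff ℝ ∞ A₂ := by fun_prop
  have hA₂0 : ∀ σ, σ ∉ Set.Icc a₀ b₀ → A₂ σ = 0 := fun σ hσ => by simp [hA₂, hA0 σ hσ]
  have hdA : ContDiff ℝ ∞ (deriv A) := (contDiff_infty_iff_deriv.1 hA).2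
  have hd1 : ContDiff ℝ ∞ (deriv A₂) := (contDiff_infty_iff_deriv.1 hA₂s).2
  have hd2 : ContDiff ℝ ∞ (deriv (deriv A₂)) := (contDiff_infty_iff_deriv.1 hd1).2
  have hA₂d0 := deriv_eq_zero_of_notMem_Icc hA₂0
  obtain ⟨L, hL⟩ : ∃ L, ∀ σ ∈ Set.Icc σ₀ σ₁, ‖A₂ σ‖ ≤ L ∧ ‖deriv A₂ σ‖ ≤ L ∧
      ‖deriv (deriv A₂) σ‖ ≤ L ∧ ‖A σ‖ ≤ L ∧ ‖deriv A σ‖ ≤ L := by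
    obtain ⟨L, hL⟩ := isCompact_Icc.exists_bound_of_continuousOn (s := Set.Icc σ₀ σ₁)
      (f := fun σ => (A₂ σ, deriv A₂ σ, deriv (deriv A₂) σ, A σ, deriv A σ))
      (by
        have := hA₂s.continuous; have := hd1.continuous; have := hd2.continuous
        have := hA.continuous; have := hdA.continuous
        fun_prop)
    refine ⟨L, fun σ hσ => ?_⟩
    simpa [Prod.norm_def] using hL σ hσ
  set w : ℝ := 2 / σ₀ with hw
  have hw0 : 0 < w := by positivity
  have hL0 : 0 ≤ L := (norm_nonneg _).trans (hL σ₀ ⟨le_rfl, h1⟩).1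
  set D : ℝ := L + L * (w + 4 * w ^ 2 + 8 * w ^ 3) + 1 with hD
  have hDpos : 0 < D := by positivity
  have hDL : L ≤ D := by
    have : 0 ≤ L * (w + 4 * w ^ 2 + 8 * w ^ 3) := by positivity
    linarith
  refine ⟨K * D, by positivity, fun τ hτ y hy r hr => ⟨?_, ?_⟩⟩
  · exact hK τ hτ y hy r hr (fun σ => A σ) (fun σ => (deriv A σ : ℝ)) D
      (fun σ _ => (hA.differentiable (by simp) σ).hasDerivAt.ofReal_comp)
      (by rw [hA0 σ₁ fun h => by linarith [h.2]]; simp)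
      (fun σ hσ => by rw [Complex.norm_real]; exact (hL σ hσ).2.2.2.2.trans hDL)
  have hτ0 : 0 < τ := by linarith
  have hr0 : 0 < r := by linarith [hr.1]
  have hne : ∀ σ ∈ Set.Icc σ₀ σ₁, σ ≠ 0 := fun σ hσ => (h0.trans_le hσ.1).ne'
  have hAc : Continuous A := hA.continuous
  have contE : ∀ s, ContinuousOn (fun σ => cexp ((2 * π * τ * squarePhase y s σ : ℝ) * I))
      (Set.Icc σ₀ σ₁) := by
    intro s
    have : ContinuousOn (fun σ => squarePhase y s σ) (Set.Icc σ₀ σ₁) :=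
      fun σ hσ => (hasDerivAt_squarePhase y s (hne σ hσ)).continuousAt.continuousWithinAt
    fun_prop
  have contAC : Continuous fun σ => (A σ : ℂ) := by fun_prop
  have hF' : ∀ s σ, HasDerivAt
      (fun s => cexp ((2 * π * τ * squarePhase y s σ : ℝ) * I) * A σ)
      (cexp ((2 * π * τ * squarePhase y s σ : ℝ) * I) *
        ((2 * π * τ * (2 * σ * s - 2 * y) : ℝ) * I) * A σ) s := fun s σ =>
    (((hasDerivAt_squarePhase_snd y σ s).const_mul (2 * π * τ)).ofReal_comp.mul_const
      I).cexp.mul_const _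
  have contF' : ∀ s, ContinuousOn (fun σ => cexp ((2 * π * τ * squarePhase y s σ : ℝ) * I) *
        ((2 * π * τ * (2 * σ * s - 2 * y) : ℝ) * I) * A σ) (Set.Icc σ₀ σ₁) := fun s =>
    ((contE s).mul (by fun_prop)).mul contAC.continuousOn
  have hder := intervalIntegral.hasDerivAt_integral_of_dominated_loc_of_deriv_le (μ := volume)
    (a := σ₀) (b := σ₁) (s := Metric.ball r 1)
    (F := fun s σ => cexp ((2 * π * τ * squarePhase y s σ : ℝ) * I) * A σ)
    (F' := fun s σ => cexp ((2 * π * τ * squarePhase y s σ : ℝ) * I) *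
        ((2 * π * τ * (2 * σ * s - 2 * y) : ℝ) * I) * A σ) (x₀ := r)
    (bound := fun _ => 2 * π * τ * (2 * σ₁ * (r + 1) + 2 * y) * L)
    (Metric.ball_mem_nhds r one_pos)
    (.of_forall fun s => by
      rw [Set.uIoc_of_le h1]
      exact (((contE s).mul contAC.continuousOn).mono
        Set.Ioc_subset_Icc_self).aestronglyMeasurable measurableSet_Ioc)
    (ContinuousOn.intervalIntegrable (by
      rw [hI]; exact (contE r).mul contAC.continuousOn))
    (by
      rw [Set.uIoc_of_le h1]
      exact ((contF' r).mono Set.Ioc_subset_Icc_self).aestronglyMeasurable measurableSet_Ioc)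
    (.of_forall fun σ hσ s hs => by
      rw [Set.uIoc_of_le h1] at hσ
      have hσ' := Set.Ioc_subset_Icc_self hσ
      have hσ0 : 0 < σ := h0.trans_le hσ'.1
      have hσ1 : 0 < σ₁ := h0.trans_le h1
      rw [norm_mul, norm_mul, norm_exp_ofReal_mul_I, norm_mul, norm_I, Complex.norm_real,
        Complex.norm_real, one_mul, mul_one, norm_mul, Real.norm_of_nonneg (by positivity)]
      have hs' : |s| ≤ r + 1 := by
        rw [Metric.mem_ball, Real.dist_eq, abs_lt] at hs
        rw [abs_le]; constructor <;> linarith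
      refine mul_le_mul (mul_le_mul_of_nonneg_left ?_ (by positivity)) (hL σ hσ').2.2.2.1
        (norm_nonneg _) (by positivity)
      · rw [Real.norm_eq_abs]
        calc |2 * σ * s - 2 * y| ≤ |2 * σ * s| + |2 * y| := abs_sub _ _
          _ = 2 * σ * |s| + 2 * y := by
            rw [abs_mul, abs_of_nonneg (by positivity : 0 ≤ 2 * σ),
              abs_of_nonneg (by positivity : 0 ≤ 2 * y)]
          _ ≤ _ := by gcongr; exact hσ'.2)
    intervalIntegrable_const
    (.of_forall fun σ _ s _ => hF' s σ)
  refine ⟨_, hder.2, ?_⟩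
  have hden : ∀ σ ∈ Set.Icc σ₀ σ₁, 0 < σ * r + y := fun σ hσ => by
    have : 0 < σ * r := mul_pos (h0.trans_le hσ.1) hr0
    linarith
  have hdw : ∀ σ ∈ Set.Icc σ₀ σ₁, (σ * r + y)⁻¹ ≤ w := fun σ hσ => by
    have hσ0 : 0 < σ := h0.trans_le hσ.1
    rw [hw, inv_le_comm₀ (hden σ hσ) (by positivity), inv_div]
    nlinarith [hσ.1, hr.1, mul_le_mul hσ.1 hr.1 (by norm_num) hσ0.le]
  have hinv : ∀ σ ∈ Set.Icc σ₀ σ₁, HasDerivAt (fun σ => (σ * r + y)⁻¹)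
      (-r * (σ * r + y)⁻¹ ^ 2) σ := fun σ hσ => by
    have := (((hasDerivAt_id σ).mul_const r).add_const y).inv (hden σ hσ).ne'
    refine this.congr_deriv ?_
    simp [div_eq_mul_inv]
  have hdA2 : ∀ σ, HasDerivAt A₂ (deriv A₂ σ) σ := fun σ =>
    (hA₂s.differentiable (by simp) σ).hasDerivAt
  have hddA2 : ∀ σ, HasDerivAt (deriv A₂) (deriv (deriv A₂) σ) σ := fun σ =>
    (hd1.differentiable (by simp) σ).hasDerivAt
  have hB1 : ∀ σ ∈ Set.Icc σ₀ σ₁, HasDerivAt (fun σ => A₂ σ * (σ * r + y)⁻¹)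
      (deriv A₂ σ * (σ * r + y)⁻¹ + A₂ σ * (-r * (σ * r + y)⁻¹ ^ 2)) σ := fun σ hσ =>
    (hdA2 σ).mul (hinv σ hσ)
  have hB2 : ∀ σ ∈ Set.Icc σ₀ σ₁, HasDerivAt
      (fun σ => deriv A₂ σ * (σ * r + y)⁻¹ + A₂ σ * (-r * (σ * r + y)⁻¹ ^ 2))
      (deriv (deriv A₂) σ * (σ * r + y)⁻¹ - 2 * r * deriv A₂ σ * (σ * r + y)⁻¹ ^ 2
        + 2 * r ^ 2 * A₂ σ * (σ * r + y)⁻¹ ^ 3) σ := fun σ hσ => by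
    refine (((hddA2 σ).mul (hinv σ hσ)).add
      ((hdA2 σ).mul (((hinv σ hσ).pow 2).const_mul (-r)))).congr_deriv ?_
    simp only [Pi.pow_apply, Nat.cast_ofNat, Nat.add_one_sub_one, pow_one]
    generalize (σ * r + y)⁻¹ = v
    ring
  have hcomplex : ∀ σ ∈ Set.Icc σ₀ σ₁, HasDerivAt
      (fun σ => cexp ((2 * π * τ * squarePhase y r σ : ℝ) * I))
      (cexp ((2 * π * τ * squarePhase y r σ : ℝ) * I) *
        ((2 * π * τ * (r ^ 2 - y ^ 2 / σ ^ 2) : ℝ) * I)) σ := fun σ hσ =>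
    (((hasDerivAt_squarePhase y r (hne σ hσ)).const_mul (2 * π * τ)).ofReal_comp.mul_const I).cexp
  have key := intervalIntegral.integral_mul_deriv_eq_deriv_mul (a := σ₀) (b := σ₁)
    (fun σ hσ => (hB1 σ (hI ▸ hσ)).ofReal_comp) (fun σ hσ => hcomplex σ (hI ▸ hσ))
    (ContinuousOn.intervalIntegrable (by
      rw [hI]
      exact continuous_ofReal.comp_continuousOn
        fun σ hσ => (hB2 σ hσ).continuousAt.continuousWithinAt))
    (ContinuousOn.intervalIntegrable (by
      rw [hI]
      refine (contE r).mul (ContinuousOn.mul (continuous_ofReal.comp_continuousOn ?_)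
        continuousOn_const)
      exact continuousOn_const.mul
        fun σ hσ => (hasDerivAt_deriv_squarePhase y r (hne σ hσ)).continuousAt.continuousWithinAt))
  rw [hA₂0 σ₁ (fun h => by linarith [h.2]), hA₂0 σ₀ (fun h => by linarith [h.1])] at key
  have e1 : ∫ σ in σ₀..σ₁, cexp ((2 * π * τ * squarePhase y r σ : ℝ) * I) *
        ((2 * π * τ * (2 * σ * r - 2 * y) : ℝ) * I) * A σ
      = ∫ σ in σ₀..σ₁, ((A₂ σ * (σ * r + y)⁻¹ : ℝ) : ℂ) *
        (cexp ((2 * π * τ * squarePhase y r σ : ℝ) * I) *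
        ((2 * π * τ * (r ^ 2 - y ^ 2 / σ ^ 2) : ℝ) * I)) := by
    apply intervalIntegral.integral_congr
    intro σ hσ
    rw [hI] at hσ
    have hreal : 2 * π * τ * (2 * σ * r - 2 * y) * A σ
        = A₂ σ * (σ * r + y)⁻¹ * (2 * π * τ * (r ^ 2 - y ^ 2 / σ ^ 2)) := by
      have := (hden σ hσ).ne'
      have := hne σ hσ
      simp only [hA₂]
      field_simp
      ring
    calc _ = cexp ((2 * π * τ * squarePhase y r σ : ℝ) * I) * I *
          ((2 * π * τ * (2 * σ * r - 2 * y) * A σ : ℝ) : ℂ) := by push_cast; ring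
      _ = _ := by rw [hreal]; push_cast; ring
  have e2 := hK τ hτ y hy r hr
    (fun σ => ((deriv A₂ σ * (σ * r + y)⁻¹ + A₂ σ * (-r * (σ * r + y)⁻¹ ^ 2) : ℝ) : ℂ))
    _ D (fun σ hσ => (hB2 σ hσ).ofReal_comp)
    (by
      have h := fun h : σ₁ ∈ Set.Icc a₀ b₀ => not_lt_of_ge h.2 hb
      rw [hA₂0 σ₁ h, hA₂d0 σ₁ h]; simp)
    (fun σ hσ => by
      rw [Complex.norm_real]
      obtain ⟨l0, l1, l2, -, -⟩ := hL σ hσ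
      rw [Real.norm_eq_abs] at *
      have hpos := inv_pos.2 (hden σ hσ)
      have hle := hdw σ hσ
      have hr2 := hr.2
      calc _ ≤ |deriv (deriv A₂) σ * (σ * r + y)⁻¹| + |2 * r * deriv A₂ σ * (σ * r + y)⁻¹ ^ 2|
            + |2 * r ^ 2 * A₂ σ * (σ * r + y)⁻¹ ^ 3| :=
            (abs_add_le _ _).trans (by gcongr; exact abs_sub _ _)
        _ = |deriv (deriv A₂) σ| * (σ * r + y)⁻¹ + 2 * r * |deriv A₂ σ| * (σ * r + y)⁻¹ ^ 2
            + 2 * r ^ 2 * |A₂ σ| * (σ * r + y)⁻¹ ^ 3 := by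
            simp only [abs_mul, abs_pow, abs_of_pos hpos, abs_of_pos hr0, abs_two]
        _ ≤ L * w + 2 * 2 * L * w ^ 2 + 2 * 2 ^ 2 * L * w ^ 3 := by gcongr
        _ ≤ D := by rw [hD]; linarith)
  rw [e1, key]
  simp only [zero_mul, ofReal_zero, sub_zero, zero_sub, norm_neg]
  simpa only [mul_comm (cexp _)] using e2

theorem Complex.mul_cpow_of_arg {x y : ℂ} (hx : x ≠ 0) (hy : y ≠ 0)
    (h : arg x + arg y ∈ Set.Ioc (-π) π) (a : ℂ) : (x * y) ^ a = x ^ a * y ^ a := by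
  rw [cpow_def_of_ne_zero (mul_ne_zero hx hy), cpow_def_of_ne_zero hx, cpow_def_of_ne_zero hy,
    (Complex.log_mul_eq_add_log_iff hx hy).2 h, add_mul, Complex.exp_add]

/-- Inverse Fourier transform of the complex Gaussian `e^{-(1+2πis)|η|²}`. -/
def gaussianKernel {d : ℕ} (s : ℝ) (x : Euc d) : ℂ :=
  ∫ η : Euc d, cexp (-(1 + 2 * π * s * I) * ‖η‖ ^ 2 + 2 * π * I * ⟪x, η⟫)

theorem norm_cexp_gaussian {d : ℕ} (s : ℝ) (x η : Euc d) :
    ‖cexp (-(1 + 2 * π * s * I) * ‖η‖ ^ 2 + 2 * π * I * ⟪x, η⟫)‖ = rexp (-1 * ‖η‖ ^ 2) := by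
  rw [Complex.norm_exp]
  congr 1
  have e : (-(1 + 2 * π * s * I) * ‖η‖ ^ 2 + 2 * π * I * ⟪x, η⟫ : ℂ)
      = ((-1 * ‖η‖ ^ 2 : ℝ) : ℂ) + ((-(2 * π * s * ‖η‖ ^ 2) + 2 * π * ⟪x, η⟫ : ℝ) : ℂ) * I := by
    push_cast; ring
  rw [e]
  simp only [add_re, ofReal_re, re_ofReal_mul, I_re, mul_zero, add_zero]

theorem norm_gaussianKernel_le {d : ℕ} (s : ℝ) (x : Euc d) :
    ‖gaussianKernel s x‖ ≤ ∫ η : Euc d, rexp (-1 * ‖η‖ ^ 2) := by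
  refine (norm_integral_le_integral_norm _).trans_eq ?_
  simp only [norm_cexp_gaussian]

/-- For `s > 0` the Gaussian kernel is a Gaussian average of the Schrödinger kernel. -/
theorem gaussianKernel_eq {d : ℕ} {s : ℝ} (hs : 0 < s) (x : Euc d) :
    gaussianKernel s x = (2 * I / π : ℂ) ^ (-(d / 2 : ℂ)) * ((s ^ (-(d / 2 : ℝ)) : ℝ) : ℂ) *
      ∫ z : Euc d, cexp (-π ^ 2 * ‖z‖ ^ 2) * cexp ((π / (2 * s) * ‖x - z‖ ^ 2 : ℝ) * I) := by
  have hπ : (π : ℂ) ≠ 0 := by exact_mod_cast Real.pi_ne_zero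
  have hs' : (s : ℂ) ≠ 0 := by exact_mod_cast hs.ne'
  set b : ℂ := 1 + 2 * π * s * I with hb
  have hbre : b.re = 1 := by
    have : b = ((1 : ℝ) : ℂ) + ((2 * π * s : ℝ) : ℂ) * I := by rw [hb]; push_cast; ring
    rw [this]
    simp only [add_re, ofReal_re, re_ofReal_mul, I_re, mul_zero, add_zero]
  have hb0 : b ≠ 0 := fun h => by rw [h] at hbre; simp at hbre
  set B : ℂ := π ^ 2 - π / (2 * s) * I with hB
  have hBre : B.re = π ^ 2 := by
    have : B = ((π ^ 2 : ℝ) : ℂ) + ((-(π / (2 * s)) : ℝ) : ℂ) * I := by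
      rw [hB]; push_cast; ring
    rw [this]
    simp only [add_re, ofReal_re, re_ofReal_mul, I_re, mul_zero, add_zero]
  have hB0 : B ≠ 0 := fun h => by
    have : (0 : ℝ) < π ^ 2 := by positivity
    rw [← hBre, h] at this
    simp at this
  have hBb : B = -(π / (2 * s) * I) * b := by
    rw [hB, hb]
    field_simp
    linear_combination (2 * π * s : ℂ) * I_sq
  have hJ : gaussianKernel s x = (π / b) ^ (d / 2 : ℂ) * cexp (-π ^ 2 * ‖x‖ ^ 2 / b) := by
    have := GaussianFourier.integral_cexp_neg_mul_sq_norm_add (b := b) (by rw [hbre]; norm_num)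
      (2 * π * I) x
    rw [gaussianKernel, this, finrank_euclideanSpace_fin]
    congr 2
    field_simp
    linear_combination (4 * ‖x‖ ^ 2 : ℂ) * I_sq
  have hZ : ∫ z : Euc d, cexp (-π ^ 2 * ‖z‖ ^ 2) * cexp ((π / (2 * s) * ‖x - z‖ ^ 2 : ℝ) * I)
      = (π / B) ^ (d / 2 : ℂ) * cexp (-π ^ 2 * ‖x‖ ^ 2 / b) := by
    have := GaussianFourier.integral_cexp_neg_mul_sq_norm_add (b := B)
      (by rw [hBre]; positivity) (-(π / s) * I) x
    rw [finrank_euclideanSpace_fin] at this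
    have e : ∀ z : Euc d, cexp (-π ^ 2 * ‖z‖ ^ 2) * cexp ((π / (2 * s) * ‖x - z‖ ^ 2 : ℝ) * I)
        = cexp (π / (2 * s) * I * ‖x‖ ^ 2) *
          cexp (-B * ‖z‖ ^ 2 + -(π / s) * I * ⟪x, z⟫) := by
      intro z
      rw [← Complex.exp_add, ← Complex.exp_add, norm_sub_sq_real]
      congr 1
      rw [hB]
      push_cast
      field_simp
      ring
    simp_rw [e]
    rw [integral_const_mul, this]
    rw [mul_left_comm, ← Complex.exp_add]
    congr 2
    rw [hBb]
    field_simp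
    rw [hb]
    ring_nf
    simp only [I_sq]
    ring
  have hmul : (π / B : ℂ) = (π / b) * ((s : ℝ) * (2 * I / π)) := by
    rw [hBb]
    field_simp
    linear_combination (-1 : ℂ) * I_sq
  have hc0 : (2 * I / π : ℂ) ≠ 0 := by simp [hπ]
  have harg : arg ((s : ℝ) * (2 * I / π) : ℂ) = π / 2 := by
    have : ((s : ℝ) * (2 * I / π) : ℂ) = ((s * 2 / π : ℝ) : ℂ) * I := by push_cast; ring
    rw [this, Complex.arg_real_mul _ (by positivity), arg_I]
  have harg1 : |arg (π / b)| < π / 2 := by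
    rw [Complex.abs_arg_lt_pi_div_two_iff]
    left
    rw [div_eq_mul_inv, re_ofReal_mul, inv_re, hbre]
    have : 0 < normSq b := normSq_pos.2 hb0
    positivity
  rw [abs_lt] at harg1
  have hpow : (π / B : ℂ) ^ (d / 2 : ℂ)
      = (π / b) ^ (d / 2 : ℂ) * (((s ^ (d / 2 : ℝ) : ℝ) : ℂ) * (2 * I / π : ℂ) ^ (d / 2 : ℂ)) := by
    rw [hmul, Complex.mul_cpow_of_arg (div_ne_zero hπ hb0) (mul_ne_zero hs' hc0)]
    · congr 1
      rw [Complex.mul_cpow_of_arg hs' hc0, ofReal_cpow hs.le]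
      · push_cast; rfl
      · rw [arg_ofReal_of_nonneg hs.le, zero_add]
        exact ⟨neg_pi_lt_arg _, arg_le_pi _⟩
    · rw [harg]
      constructor <;> linarith [harg1.1, harg1.2, Real.pi_pos]
  rw [hJ, hZ, hpow, cpow_neg, Real.rpow_neg hs.le]
  have h1 : (2 * I / π : ℂ) ^ (d / 2 : ℂ) ≠ 0 := by
    rw [Complex.cpow_ne_zero_iff]; exact Or.inl hc0
  have h2 : ((s ^ (d / 2 : ℝ) : ℝ) : ℂ) ≠ 0 := by
    exact_mod_cast (Real.rpow_pos_of_pos hs _).ne'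
  push_cast
  field_simp

theorem fourierInv_real_eq (F : ℝ → ℂ) (s : ℝ) :
    𝓕⁻ F s = ∫ u, cexp ((2 * π * s * u : ℝ) * I) * F u := by
  rw [Real.fourierInv_eq']
  congr 1
  ext u
  simp only [smul_eq_mul, RCLike.inner_apply, conj_trivial]
  push_cast
  ring_nf

theorem integrable_fourierInv_of_hasCompactSupport {F : ℝ → ℂ} (hF : ContDiff ℝ ∞ F)
    (hc : HasCompactSupport F) : Integrable (𝓕⁻ F) := by
  have h := (𝓕⁻ (hc.toSchwartzMap hF)).integrable (μ := volume)
  rwa [SchwartzMap.fourierInv_coe] at h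

theorem continuous_fourierInv_of_hasCompactSupport {F : ℝ → ℂ} (hF : ContDiff ℝ ∞ F)
    (hc : HasCompactSupport F) : Continuous (𝓕⁻ F) := by
  have h := (𝓕⁻ (hc.toSchwartzMap hF)).continuous
  rwa [SchwartzMap.fourierInv_coe] at h

theorem eq_integral_fourierInv_of_hasCompactSupport {F : ℝ → ℂ} (hF : ContDiff ℝ ∞ F)
    (hc : HasCompactSupport F) (u : ℝ) :
    F u = ∫ s, cexp ((-(2 * π * s * u) : ℝ) * I) * 𝓕⁻ F s := by
  have h := hF.continuous.fourier_fourierInv_eq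
    (hF.continuous.integrable_of_hasCompactSupport hc)
    (by
      have h := (𝓕 (hc.toSchwartzMap hF)).integrable (μ := volume)
      rwa [SchwartzMap.fourier_coe] at h)
  conv_lhs => rw [← h]
  rw [Real.fourier_eq']
  congr 1
  ext s
  simp only [smul_eq_mul, RCLike.inner_apply, conj_trivial]
  push_cast
  ring_nf

theorem integrable_rexp_neg_mul_sq_norm {d : ℕ} {c : ℝ} (hc : 0 < c) :
    Integrable fun z : Euc d => rexp (-c * ‖z‖ ^ 2) := by
  have := (GaussianFourier.integrable_cexp_neg_mul_sq_norm_add (V := Euc d) (b := c)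
    (by rwa [ofReal_re]) 0 0).norm
  refine this.congr (ae_of_all _ fun η => ?_)
  dsimp only
  rw [Complex.norm_exp]
  congr 1
  have : (-(c : ℂ) * ‖η‖ ^ 2 + 0 * ⟪(0 : Euc d), η⟫) = ((-c * ‖η‖ ^ 2 : ℝ) : ℂ) := by
    push_cast; ring
  rw [this, ofReal_re]

/-- A radial oscillatory integral as a superposition of Gaussian kernels. -/
theorem integral_gaussian_mul_comp_sq {d : ℕ} {F : ℝ → ℂ} (hF : ContDiff ℝ ∞ F)
    (hc : HasCompactSupport F) (x : Euc d) :
    ∫ η : Euc d, cexp (-‖η‖ ^ 2 + 2 * π * I * ⟪x, η⟫) * F (‖η‖ ^ 2)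
      = ∫ s, 𝓕⁻ F s * gaussianKernel s x := by
  have hg := integrable_fourierInv_of_hasCompactSupport hF hc
  have hgc := continuous_fourierInv_of_hasCompactSupport hF hc
  set g := 𝓕⁻ F with hgdef
  have e1 : ∀ η : Euc d, cexp (-‖η‖ ^ 2 + 2 * π * I * ⟪x, η⟫) * F (‖η‖ ^ 2)
      = ∫ s, g s * cexp (-(1 + 2 * π * s * I) * ‖η‖ ^ 2 + 2 * π * I * ⟪x, η⟫) := by
    intro η
    rw [eq_integral_fourierInv_of_hasCompactSupport hF hc, ← integral_const_mul]
    congr 1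
    ext s
    rw [← mul_assoc, ← Complex.exp_add, mul_comm]
    congr 2
    push_cast
    ring
  simp_rw [e1]
  rw [integral_integral_swap]
  · simp_rw [integral_const_mul]
    rfl
  · have hprod : Integrable (fun z : Euc d × ℝ => ((rexp (-1 * ‖z.1‖ ^ 2) : ℝ) : ℂ) * g z.2)
        (volume.prod volume) := by
      refine Integrable.mul_prod (f := fun η : Euc d => ((rexp (-1 * ‖η‖ ^ 2) : ℝ) : ℂ)) ?_ hg
      exact (integrable_rexp_neg_mul_sq_norm one_pos).ofReal
    refine hprod.mono ?_ (ae_of_all _ fun z => ?_)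
    · apply Continuous.aestronglyMeasurable
      simp only [Function.uncurry_def]
      fun_prop
    · simp only [Function.uncurry, norm_mul, norm_cexp_gaussian, norm_real, Real.norm_eq_abs,
        Real.abs_exp]
      rw [mul_comm]

theorem norm_integral_mul_gaussianKernel_le {d : ℕ} {G : ℝ → ℂ} {M : ℝ}
    (hG0 : ∀ s ≤ 0, G s = 0)
    (hG : Integrable fun s => ((s ^ (-(d / 2 : ℝ)) : ℝ) : ℂ) * G s)
    (hM : ∀ Y ≥ 0, ‖∫ s, ((s ^ (-(d / 2 : ℝ)) : ℝ) : ℂ) * G s *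
      cexp ((π / (2 * s) * Y ^ 2 : ℝ) * I)‖ ≤ M) (x : Euc d) :
    ‖∫ s, G s * gaussianKernel s x‖ ≤
      ‖(2 * I / π : ℂ) ^ (-(d / 2 : ℂ))‖ * (∫ z : Euc d, rexp (-π ^ 2 * ‖z‖ ^ 2)) * M := by
  set c₀ := (2 * I / π : ℂ) ^ (-(d / 2 : ℂ))
  have e1 : ∀ s, G s * gaussianKernel s x = c₀ * ∫ z : Euc d, (((s ^ (-(d / 2 : ℝ)) : ℝ) : ℂ) * G s)
      * (cexp (-π ^ 2 * ‖z‖ ^ 2) * cexp ((π / (2 * s) * ‖x - z‖ ^ 2 : ℝ) * I)) := by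
    intro s
    rw [integral_const_mul]
    rcases le_or_gt s 0 with h | h
    · simp [hG0 s h]
    · rw [gaussianKernel_eq h]
      ring
  have hn : ∀ z : Euc d, cexp (-π ^ 2 * ‖z‖ ^ 2) = ((rexp (-π ^ 2 * ‖z‖ ^ 2) : ℝ) : ℂ) := by
    intro z; push_cast; rfl
  simp_rw [e1]
  rw [integral_const_mul, integral_integral_swap]
  · rw [norm_mul, mul_assoc]
    gcongr
    rw [← integral_mul_const]
    refine norm_integral_le_of_norm_le ((integrable_rexp_neg_mul_sq_norm (by positivity)).mul_const M)
      (ae_of_all _ fun z => ?_)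
    have e2 : ∀ s, (((s ^ (-(d / 2 : ℝ)) : ℝ) : ℂ) * G s) *
        (cexp (-π ^ 2 * ‖z‖ ^ 2) * cexp ((π / (2 * s) * ‖x - z‖ ^ 2 : ℝ) * I))
        = cexp (-π ^ 2 * ‖z‖ ^ 2) * (((s ^ (-(d / 2 : ℝ)) : ℝ) : ℂ) * G s *
          cexp ((π / (2 * s) * ‖x - z‖ ^ 2 : ℝ) * I)) := fun s => by ring
    simp_rw [e2]
    rw [integral_const_mul, norm_mul, hn, norm_real, Real.norm_eq_abs, Real.abs_exp]
    gcongr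
    exact hM _ (norm_nonneg _)
  · have hprod := hG.mul_prod ((integrable_rexp_neg_mul_sq_norm (d := d) (c := π ^ 2)
      (by positivity)).ofReal (𝕜 := ℂ))
    have hmeas : AEStronglyMeasurable (fun z : ℝ × Euc d =>
        cexp ((π / (2 * z.1) * ‖x - z.2‖ ^ 2 : ℝ) * I)) (volume.prod volume) := by
      apply Measurable.aestronglyMeasurable
      fun_prop
    have := hprod.mul_bdd (c := 1) hmeas (ae_of_all _ fun z => ?_)
    · refine this.congr (ae_of_all _ fun z => ?_)
      simp only [Function.uncurry, hn]
      exact mul_assoc _ _ _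
    · rw [norm_exp_ofReal_mul_I]

theorem norm_integral_exp_mul_le_of_deriv2_ge {a b κ D : ℝ} (hab : a ≤ b) (hκ : 0 < κ)
    {φ φ' φ'' : ℝ → ℝ} (h1 : ∀ x ∈ Set.Icc a b, HasDerivAt φ (φ' x) x)
    (h2 : ∀ x ∈ Set.Icc a b, HasDerivAt φ' (φ'' x) x) (hc : ContinuousOn φ'' (Set.Icc a b))
    (h3 : ∀ x ∈ Set.Icc a b, κ ≤ φ'' x)
    {A A' : ℝ → ℂ} (hA : ∀ x ∈ Set.Icc a b, HasDerivAt A (A' x) x) (hb : A b = 0)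
    (hA' : ∀ x ∈ Set.Icc a b, ‖A' x‖ ≤ D) :
    ‖∫ x in a..b, cexp (φ x * I) * A x‖ ≤ 8 / √κ * D * (b - a) := by
  refine norm_integral_exp_mul_le hab (fun x hx => (h1 x hx).continuousAt.continuousWithinAt)
    hA hb hA' fun c hc' => ?_
  have hs : Set.Icc a c ⊆ Set.Icc a b := Set.Icc_subset_Icc_right hc'.2
  exact norm_integral_exp_le_of_deriv2_ge hc'.1 hκ (fun x hx => h1 x (hs hx))
    (fun x hx => h2 x (hs hx)) (hc.mono hs) fun x hx => h3 x (hs hx)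

theorem norm_integral_exp_mul_le_of_sign_deriv2_ge {a b κ D sgn : ℝ} (hab : a ≤ b) (hκ : 0 < κ)
    (hsgn : sgn = 1 ∨ sgn = -1)
    {φ φ' φ'' : ℝ → ℝ} (h1 : ∀ x ∈ Set.Icc a b, HasDerivAt φ (φ' x) x)
    (h2 : ∀ x ∈ Set.Icc a b, HasDerivAt φ' (φ'' x) x) (hc : ContinuousOn φ'' (Set.Icc a b))
    (h3 : ∀ x ∈ Set.Icc a b, κ ≤ sgn * φ'' x)
    {A A' : ℝ → ℂ} (hA : ∀ x ∈ Set.Icc a b, HasDerivAt A (A' x) x) (hb : A b = 0)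
    (hA' : ∀ x ∈ Set.Icc a b, ‖A' x‖ ≤ D) :
    ‖∫ x in a..b, cexp (φ x * I) * A x‖ ≤ 8 / √κ * D * (b - a) := by
  rcases hsgn with rfl | rfl
  · exact norm_integral_exp_mul_le_of_deriv2_ge hab hκ h1 h2 hc (by simpa using h3) hA hb hA'
  · have := norm_integral_exp_mul_le_of_deriv2_ge (φ := fun x => -φ x) (φ' := fun x => -φ' x)
      (φ'' := fun x => -φ'' x) (A := fun x => (starRingEnd ℂ) (A x))
      (A' := fun x => (starRingEnd ℂ) (A' x)) (D := D) hab hκ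
      (fun x hx => (h1 x hx).neg) (fun x hx => (h2 x hx).neg) hc.neg
      (by simpa using h3) (fun x hx => ?_) (by simp [hb]) (by simpa using hA')
    · rw [← Complex.norm_conj, intervalIntegral.integral_of_le hab, ← integral_conj,
        ← intervalIntegral.integral_of_le hab]
      refine (congrArg norm (intervalIntegral.integral_congr fun x _ => ?_)).trans_le this
      rw [map_mul, ← Complex.exp_conj, map_mul, conj_I, conj_ofReal]
      push_cast
      ring_nf
    · exact (conjCLE.toContinuousLinearMap.hasFDerivAt.comp_hasDerivAt x (hA x hx))

theorem exists_core_bound {σ₀ a₀ b₀ σ₁ : ℝ} (h0 : 0 < σ₀) (ha : σ₀ < a₀)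
    (hab : a₀ ≤ b₀) (hb : b₀ < σ₁) {A : ℝ → ℝ} (hA : ContDiff ℝ ∞ A)
    (hA0 : ∀ σ, σ ∉ Set.Icc a₀ b₀ → A σ = 0) {α : ℝ → ℝ} (hα : ContDiff ℝ ∞ α) (hα2 : α 2 = 0) :
    ∃ C > 0, ∀ sgn : ℝ, sgn = 1 ∨ sgn = -1 → ∀ φ φ' φ'' : ℝ → ℝ, ∀ κ > 0,
      (∀ r ∈ Set.Icc (1 / 2 : ℝ) 2, HasDerivAt φ (φ' r) r) →
      (∀ r ∈ Set.Icc (1 / 2 : ℝ) 2, HasDerivAt φ' (φ'' r) r) →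
      ContinuousOn φ'' (Set.Icc (1 / 2 : ℝ) 2) →
      (∀ r ∈ Set.Icc (1 / 2 : ℝ) 2, κ ≤ sgn * φ'' r) → ∀ τ ≥ 1, ∀ y ≥ 0,
      ‖∫ r in (1 / 2 : ℝ)..2, (cexp ((-(τ * φ r) : ℝ) * I) * α r) * ∫ σ in σ₀..σ₁,
        cexp ((2 * π * τ * (σ * r ^ 2 + y ^ 2 / σ) : ℝ) * I) * A σ‖ ≤ C / (τ * √κ) := by
  obtain ⟨C, hC0, hC⟩ := exists_squarePhase_amplitude_bound h0 ha hab hb hA hA0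
  obtain ⟨M, hM⟩ := isCompact_Icc.exists_bound_of_continuousOn (s := Set.Icc (1 / 2 : ℝ) 2)
    hα.continuous.continuousOn
  obtain ⟨M', hM'⟩ := isCompact_Icc.exists_bound_of_continuousOn (s := Set.Icc (1 / 2 : ℝ) 2)
    (hα.continuous_deriv (by simp)).continuousOn
  have hM0 : 0 ≤ M := (norm_nonneg _).trans (hM 1 (by norm_num))
  have hM'0 : 0 ≤ M' := (norm_nonneg _).trans (hM' 1 (by norm_num))
  refine ⟨12 * ((M + M' + 1) * C), by positivity, ?_⟩
  intro sgn hsgn φ φ' φ'' κ hκ h1 h2 hc h3 τ hτ y hy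
  have hτ0 : 0 < τ := by linarith
  set J : ℝ → ℂ := fun r => ∫ σ in σ₀..σ₁, cexp ((2 * π * τ * squarePhase y r σ : ℝ) * I) * A σ
  choose! hJ J' hJ' hJ'n using hC τ hτ y hy
  have key := norm_integral_exp_mul_le_of_sign_deriv2_ge (a := 1 / 2) (b := 2) (κ := τ * κ)
    (D := (M + M' + 1) * C / √τ) (sgn := -sgn)
    (φ := fun r => -(τ * φ r) + 4 * π * τ * y * r) (φ' := fun r => -(τ * φ' r) + 4 * π * τ * y * 1)
    (φ'' := fun r => -(τ * φ'' r)) (A := fun r => (α r : ℂ) * J r)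
    (A' := fun r => ((deriv α r : ℝ) : ℂ) * J r + α r * J' r) (by norm_num) (by positivity)
    (by rcases hsgn with rfl | rfl <;> simp)
    (fun r hr => (((h1 r hr).const_mul τ).neg).add ((hasDerivAt_id r).const_mul _))
    (fun r hr => (((h2 r hr).const_mul τ).neg).add_const _)
    (hc.const_mul τ).neg (fun r hr => by nlinarith [h3 r hr]) (fun r hr => ?_) (by simp [hα2])
    (fun r hr => ?_)
  · calc _ = ‖∫ x in (1 / 2 : ℝ)..2, cexp (((-(τ * φ x) + 4 * π * τ * y * x : ℝ) : ℂ) * I) *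
          ((α x : ℂ) * J x)‖ := by
          refine congrArg norm (intervalIntegral.integral_congr fun r _ => ?_)
          simp only [J]
          simp only [← intervalIntegral.integral_const_mul]
          refine intervalIntegral.integral_congr fun σ _ => ?_
          rw [squarePhase, show (((-(τ * φ r) + 4 * π * τ * y * r : ℝ) : ℂ) * I)
              = ((-(τ * φ r) : ℝ) : ℂ) * I + ((4 * π * τ * y * r : ℝ) : ℂ) * I by push_cast; ring,
            show (((2 * π * τ * (σ * r ^ 2 + y ^ 2 / σ) : ℝ) : ℂ) * I)
              = ((4 * π * τ * y * r : ℝ) : ℂ) * I +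
                ((2 * π * τ * (σ * r ^ 2 + y ^ 2 / σ - 2 * r * y) : ℝ) : ℂ) * I by
              push_cast; ring, Complex.exp_add, Complex.exp_add]
          ring
      _ ≤ _ := key
      _ = _ := by
        rw [Real.sqrt_mul hτ0.le]
        have : √τ * √τ = τ := Real.mul_self_sqrt hτ0.le
        have h1 : 0 < √τ := Real.sqrt_pos.2 hτ0
        have h2 : 0 < √κ := Real.sqrt_pos.2 hκ
        have h3 : 12 * ((M + M' + 1) * C) / (τ * √κ)
            = 12 * ((M + M' + 1) * C) / (√τ * √τ * √κ) := by rw [this]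
        rw [h3]
        field_simp
        ring
  · exact (((hα.differentiable (by simp)) r).hasDerivAt.ofReal_comp).mul (hJ' r hr)
  · have e1 := hM r hr
    have e2 := hM' r hr
    have e3 := hJ r hr
    have e4 := hJ'n r hr
    have e5 : 0 ≤ C / √τ := by positivity
    calc _ ≤ ‖((deriv α r : ℝ) : ℂ)‖ * ‖J r‖ + ‖(α r : ℂ)‖ * ‖J' r‖ := by
          refine (norm_add_le _ _).trans_eq ?_
          rw [norm_mul, norm_mul]
      _ ≤ M' * (C / √τ) + M * (C / √τ) := by
          rw [norm_real, norm_real]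
          gcongr
      _ ≤ _ := by rw [mul_div_assoc]; nlinarith

theorem intervalIntegral_swap_of_continuousOn {a b c e : ℝ} (hab : a ≤ b) (hce : c ≤ e)
    {f : ℝ → ℝ → ℂ} (hf : ContinuousOn (Function.uncurry f) (Set.Icc a b ×ˢ Set.Icc c e)) :
    ∫ x in a..b, ∫ y in c..e, f x y = ∫ y in c..e, ∫ x in a..b, f x y := by
  simp only [intervalIntegral.integral_of_le hab, intervalIntegral.integral_of_le hce]
  refine integral_integral_swap ?_
  rw [Measure.prod_restrict]
  exact (hf.integrableOn_compact (isCompact_Icc.prod isCompact_Icc)).mono_set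
    (Set.prod_mono Set.Ioc_subset_Icc_self Set.Ioc_subset_Icc_self)

theorem fourierInv_eq_integral_sq {F : ℝ → ℂ} (hF : Continuous F)
    (hF0 : ∀ u, u ∉ Set.Icc (1 / 4 : ℝ) 4 → F u = 0) (s : ℝ) :
    𝓕⁻ F s = ∫ r in (1 / 2 : ℝ)..2, cexp ((2 * π * s * r ^ 2 : ℝ) * I) * (F (r ^ 2) * (2 * r)) := by
  rw [fourierInv_real_eq]
  have h1 : ∫ u, cexp ((2 * π * s * u : ℝ) * I) * F u
      = ∫ u in (1 / 4 : ℝ)..4, cexp ((2 * π * s * u : ℝ) * I) * F u := by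
    rw [intervalIntegral.integral_of_le (by norm_num), ← integral_Icc_eq_integral_Ioc,
      setIntegral_eq_integral_of_forall_compl_eq_zero]
    intro u hu
    rw [hF0 u hu, mul_zero]
  have h2 := intervalIntegral.integral_deriv_smul_comp' (a := 1 / 2) (b := 2)
    (f := fun r : ℝ => r ^ 2) (f' := fun r => 2 * r)
    (g := fun u => cexp ((2 * π * s * u : ℝ) * I) * F u)
    (fun r _ => by simpa using hasDerivAt_pow 2 r) (by fun_prop) (by fun_prop)
  norm_num at h2
  rw [h1]
  norm_num
  rw [← h2]
  refine intervalIntegral.integral_congr fun r _ => ?_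
  ring

theorem integral_core_eq {σ₀ σ₁ τ : ℝ} (d : ℕ) (h0 : 0 < σ₀) (h1 : σ₀ ≤ σ₁) (hτ : 0 < τ) (y : ℝ)
    {F : ℝ → ℂ} (hF : Continuous F) (hF0 : ∀ u, u ∉ Set.Icc (1 / 4 : ℝ) 4 → F u = 0)
    {ψ : ℝ → ℝ} (hψ : Continuous ψ) (hψ0 : ∀ σ, σ ∉ Set.Ioc σ₀ σ₁ → ψ σ = 0) :
    ∫ s, ((s ^ (-(d / 2 : ℝ)) : ℝ) : ℂ) * (ψ (s / τ) * 𝓕⁻ F s) *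
      cexp ((π / (2 * s) * (2 * τ * y) ^ 2 : ℝ) * I)
    = ((τ * τ ^ (-(d / 2 : ℝ)) : ℝ) : ℂ) * ∫ r in (1 / 2 : ℝ)..2, (F (r ^ 2) * (2 * r)) *
      ∫ σ in σ₀..σ₁, cexp ((2 * π * τ * (σ * r ^ 2 + y ^ 2 / σ) : ℝ) * I) *
        ((σ ^ (-(d / 2 : ℝ)) * ψ σ : ℝ) : ℂ) := by
  set H : ℝ → ℂ := fun s => ((s ^ (-(d / 2 : ℝ)) : ℝ) : ℂ) * (ψ (s / τ) * 𝓕⁻ F s) *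
      cexp ((π / (2 * s) * (2 * τ * y) ^ 2 : ℝ) * I) with hH
  have e1 : ∫ s, H s = (τ : ℂ) * ∫ σ, H (τ * σ) := by
    rw [Measure.integral_comp_mul_left, abs_of_pos (by positivity), real_smul, ← mul_assoc]
    push_cast
    rw [mul_inv_cancel₀ (by exact_mod_cast hτ.ne'), one_mul]
  have e2 : ∫ σ, H (τ * σ) = ∫ σ in σ₀..σ₁, H (τ * σ) := by
    rw [intervalIntegral.integral_eq_integral_of_support_subset]
    intro σ hσ
    by_contra hc
    apply hσ
    simp only [hH, mul_div_cancel_left₀ σ hτ.ne', hψ0 σ hc]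
    simp
  have e3 : ∀ σ ∈ Set.uIcc σ₀ σ₁, H (τ * σ) = ∫ r in (1 / 2 : ℝ)..2,
      ((τ ^ (-(d / 2 : ℝ)) : ℝ) : ℂ) * ((F (r ^ 2) * (2 * r)) *
      (cexp ((2 * π * τ * (σ * r ^ 2 + y ^ 2 / σ) : ℝ) * I) *
        ((σ ^ (-(d / 2 : ℝ)) * ψ σ : ℝ) : ℂ))) := by
    intro σ hσ
    rw [Set.uIcc_of_le h1] at hσ
    have hσ0 : 0 < σ := h0.trans_le hσ.1
    simp only [hH, mul_div_cancel_left₀ σ hτ.ne']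
    rw [fourierInv_eq_integral_sq hF hF0, Real.mul_rpow hτ.le hσ0.le,
      show ∀ a b c e : ℂ, a * (b * c) * e = (a * b * e) * c by intros; ring, ← intervalIntegral.integral_const_mul]
    refine intervalIntegral.integral_congr fun r _ => ?_
    have : (((2 * π * τ * (σ * r ^ 2 + y ^ 2 / σ) : ℝ) : ℂ) * I) =
        ((2 * π * (τ * σ) * r ^ 2 : ℝ) : ℂ) * I +
        ((π / (2 * (τ * σ)) * (2 * τ * y) ^ 2 : ℝ) : ℂ) * I := by
      rw [← add_mul, ← ofReal_add]
      congr 2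
      field_simp
    rw [this, Complex.exp_add]
    push_cast
    ring
  rw [e1, e2, intervalIntegral.integral_congr e3, intervalIntegral_swap_of_continuousOn h1
    (by norm_num), ofReal_mul]
  · simp only [intervalIntegral.integral_const_mul]
    exact (mul_assoc _ _ _).symm
  · have hne : ∀ z ∈ Set.Icc σ₀ σ₁ ×ˢ Set.Icc (1 / 2 : ℝ) 2, z.1 ≠ 0 :=
      fun z hz => (h0.trans_le hz.1.1).ne'
    have hr : ContinuousOn (fun z : ℝ × ℝ => z.1 ^ (-(d / 2 : ℝ)))
        (Set.Icc σ₀ σ₁ ×ˢ Set.Icc (1 / 2 : ℝ) 2) :=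
      continuousOn_fst.rpow_const fun z hz => Or.inl (hne z hz)
    have hd' : ContinuousOn (fun z : ℝ × ℝ => y ^ 2 / z.1)
        (Set.Icc σ₀ σ₁ ×ˢ Set.Icc (1 / 2 : ℝ) 2) := continuousOn_const.div continuousOn_fst hne
    simp only [Function.uncurry_def]
    have i1 : ContinuousOn (fun z : ℝ × ℝ => cexp ((2 * π * τ * (z.1 * z.2 ^ 2 + y ^ 2 / z.1) : ℝ) * I))
        (Set.Icc σ₀ σ₁ ×ˢ Set.Icc (1 / 2 : ℝ) 2) := by fun_prop
    have i2 : ContinuousOn (fun z : ℝ × ℝ => ((z.1 ^ (-(d / 2 : ℝ)) * ψ z.1 : ℝ) : ℂ))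
        (Set.Icc σ₀ σ₁ ×ˢ Set.Icc (1 / 2 : ℝ) 2) := by fun_prop
    have i3 : Continuous (fun z : ℝ × ℝ => (F (z.2 ^ 2) * (2 * z.2))) := by fun_prop
    exact continuousOn_const.mul (i3.continuousOn.mul (i1.mul i2))

theorem isCompact_nonresonant (c C : ℝ) : IsCompact {z : ℝ × ℝ × ℝ | z.1 ∈ Set.Icc 0 1 ∧
    0 ≤ z.2.2 ∧ |z.2.1| + z.2.2 = 1 ∧ (z.2.1 ≤ c * z.2.2 ∨ C * z.2.2 ≤ z.2.1)} := by
  have hK : IsCompact (Set.Icc (0 : ℝ) 1 ×ˢ Set.Icc (-1 : ℝ) 1 ×ˢ Set.Icc (-1 : ℝ) 1) :=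
    isCompact_Icc.prod (isCompact_Icc.prod isCompact_Icc)
  refine hK.of_isClosed_subset ?_ ?_
  · have h1 : IsClosed {z : ℝ × ℝ × ℝ | z.1 ∈ Set.Icc 0 1} := isClosed_Icc.preimage continuous_fst
    have h2 : IsClosed {z : ℝ × ℝ × ℝ | 0 ≤ z.2.2} := isClosed_le (by fun_prop) (by fun_prop)
    have h3 : IsClosed {z : ℝ × ℝ × ℝ | |z.2.1| + z.2.2 = 1} :=
      isClosed_eq (by fun_prop) (by fun_prop)
    have h4 : IsClosed {z : ℝ × ℝ × ℝ | z.2.1 ≤ c * z.2.2} := isClosed_le (by fun_prop) (by fun_prop)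
    have h5 : IsClosed {z : ℝ × ℝ × ℝ | C * z.2.2 ≤ z.2.1} := isClosed_le (by fun_prop) (by fun_prop)
    exact h1.inter (h2.inter (h3.inter (h4.union h5)))
  · rintro ⟨p, a, b⟩ ⟨h1, h2, h3, -⟩
    dsimp only at h1 h2 h3
    have := abs_nonneg a
    have h4 : |a| ≤ 1 := by linarith
    exact ⟨h1, abs_le.1 h4, by constructor <;> linarith⟩

theorem exists_norm_fourierInv_nonresonant_le {Φ : ℝ × ℝ → ℝ}
    (hΦ : ContDiffOn ℝ ∞ Φ (Set.univ ×ˢ Set.Ioi 0)) {c C : ℝ} (hc : 0 < c)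
    (hcΦ : ∀ p ∈ Set.Icc (0 : ℝ) 1, ∀ u ∈ Set.Icc (1 / 8 : ℝ) 8,
      c ≤ sndDeriv Φ (p, u) ∧ sndDeriv Φ (p, u) ≤ C) {q : ℝ → ℝ} (hq : ContDiff ℝ ∞ q)
    (hq0 : ∀ u, u ∉ Set.Icc (1 / 4 : ℝ) 4 → q u = 0) (k : ℕ) :
    ∃ M, ∀ p ∈ Set.Icc (0 : ℝ) 1, ∀ τ ≥ 1, ∀ s,
      2 * π * s ≤ c / 2 * τ ∨ 2 * C * τ ≤ 2 * π * s →
      ‖𝓕⁻ (fun u => cexp ((-(τ * Φ (p, u)) : ℝ) * I) * (q u : ℂ)) s‖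
        ≤ M * (τ⁻¹ ^ k * (1 + s ^ 2)⁻¹) := by
  have hcC : c ≤ C := by
    have := hcΦ 0 (by norm_num) 1 (by norm_num)
    linarith
  have hU : IsOpen (Set.univ ×ˢ Set.Ioi 0 : Set (ℝ × ℝ)) := isOpen_univ.prod isOpen_Ioi
  have hU' : IsOpen (Set.univ ×ˢ Set.Ioi 0 : Set ((ℝ × ℝ × ℝ) × ℝ)) := isOpen_univ.prod isOpen_Ioi
  set D : (ℝ × ℝ × ℝ) × ℝ → ℝ := fun z => z.1.2.1 - z.1.2.2 * sndDeriv Φ (z.1.1, z.2) with hD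
  set θ : (ℝ × ℝ × ℝ) × ℝ → ℝ := fun z => z.1.2.1 * z.2 - z.1.2.2 * Φ (z.1.1, z.2) with hθ
  have hmap : ContDiff ℝ ∞ fun z : (ℝ × ℝ × ℝ) × ℝ => (z.1.1, z.2) := by fun_prop
  have hmaps : Set.MapsTo (fun z : (ℝ × ℝ × ℝ) × ℝ => (z.1.1, z.2))
      (Set.univ ×ˢ Set.Ioi 0) (Set.univ ×ˢ Set.Ioi 0) := fun z hz => ⟨trivial, hz.2⟩
  have hθs : ContDiffOn ℝ ∞ θ (Set.univ ×ˢ Set.Ioi 0) := by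
    have := hΦ.comp hmap.contDiffOn hmaps
    have h2 : ContDiffOn ℝ ∞ (fun z : (ℝ × ℝ × ℝ) × ℝ => Φ (z.1.1, z.2))
      (Set.univ ×ˢ Set.Ioi 0) := this
    have h3 : ContDiff ℝ ∞ fun z : (ℝ × ℝ × ℝ) × ℝ => z.1.2.1 * z.2 := by fun_prop
    have h4 : ContDiff ℝ ∞ fun z : (ℝ × ℝ × ℝ) × ℝ => z.1.2.2 := by fun_prop
    exact h3.contDiffOn.sub (h4.contDiffOn.mul h2)
  have hDs : ContinuousOn D (Set.univ ×ˢ Set.Ioi 0) := by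
    have h2 : ContinuousOn (fun z : (ℝ × ℝ × ℝ) × ℝ => sndDeriv Φ (z.1.1, z.2))
      (Set.univ ×ˢ Set.Ioi 0) := ((contDiffOn_sndDeriv hΦ hU).comp hmap.contDiffOn hmaps).continuousOn
    fun_prop
  set W := (Set.univ ×ˢ Set.Ioi 0) ∩ D ⁻¹' {0}ᶜ with hW
  have hWo : IsOpen W := hDs.isOpen_inter_preimage hU' isOpen_compl_singleton
  have hθD : ∀ z ∈ W, sndDeriv θ z ≠ 0 := by
    rintro ⟨⟨p, a, b⟩, u⟩ hz
    have h1 := hasDerivAt_sndDeriv_of_contDiffOn hθs hU' hz.1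
    have h2 := hasDerivAt_sndDeriv_of_contDiffOn hΦ hU (p := p) (u := u) ⟨trivial, hz.1.2⟩
    have h3 := ((hasDerivAt_id u).const_mul a).sub (h2.const_mul b)
    have h4 := h1.unique h3
    rw [h4, mul_one]
    exact hz.2
  obtain ⟨M, hM⟩ := exists_norm_integral_exp_le_pow (isCompact_nonresonant (c / 2) (2 * C))
    (a := 1 / 8) (a₀ := 1 / 4) (b₀ := 4) (b := 8) (by norm_num) (by norm_num) (by norm_num) hWo
    (by
      rintro ⟨⟨p, a, b⟩, u⟩ ⟨⟨hp, hb, hab, h⟩, hu⟩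
      dsimp only at hp hb hab h hu
      refine ⟨⟨trivial, lt_of_lt_of_le (by norm_num) hu.1⟩, ?_⟩
      obtain ⟨h1, h2⟩ := hcΦ p hp u hu
      have hne : a - b * sndDeriv Φ (p, u) ≠ 0 := by
        rcases hb.eq_or_lt with rfl | hb
        · rintro h0
          have : a = 0 := by linarith
          simp [this] at hab
        · rcases h with h | h
          · apply ne_of_lt
            nlinarith
          · apply ne_of_gt
            nlinarith
      exact hne) (hθs.mono Set.inter_subset_left) hθD (k + 2) (fun z => q z.2)
    (by fun_prop) (fun _ u hu => hq0 u hu)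
  refine ⟨M, fun p hp τ hτ s hs => ?_⟩
  have hτ0 : 0 < τ := by linarith
  have hπs : 2 * |s| ≤ 2 * π * |s| := by nlinarith [Real.pi_gt_three, abs_nonneg s]
  set T := 2 * π * |s| + τ with hT
  have hT0 : 0 < T := by positivity
  have key := hM (p, 2 * π * s / T, τ / T) ⟨hp, by positivity, ?_, ?_⟩ T hT0
  · have hM0 : 0 ≤ M := by
      have := (norm_nonneg _).trans key
      by_contra hneg
      have h2 : 0 < T⁻¹ ^ (k + 2) := by positivity
      nlinarith
    rw [fourierInv_real_eq]
    have e : ∫ u, cexp ((2 * π * s * u : ℝ) * I) * (cexp ((-(τ * Φ (p, u)) : ℝ) * I) * (q u : ℂ))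
        = ∫ u in (1 / 8 : ℝ)..8, cexp ((T * θ ((p, 2 * π * s / T, τ / T), u) : ℝ) * I) *
          ((q u : ℝ) : ℂ) := by
      rw [intervalIntegral.integral_of_le (by norm_num), ← integral_Icc_eq_integral_Ioc,
        setIntegral_eq_integral_of_forall_compl_eq_zero]
      · congr 1
        ext u
        rw [← mul_assoc, ← Complex.exp_add, ← add_mul, ← ofReal_add, hθ]
        congr 4
        field_simp
        ring
      · intro u hu
        rw [hq0 u, ofReal_zero, mul_zero]
        exact fun h => hu (Set.Icc_subset_Icc (by norm_num) (by norm_num) h)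
    rw [e]
    refine key.trans ?_
    gcongr
    rw [pow_add]
    gcongr
    · rw [hT]; nlinarith [abs_nonneg s]
    · rw [inv_pow]
      gcongr
      rw [hT, ← sq_abs s]
      nlinarith [abs_nonneg s]
  · dsimp only
    rw [abs_div, abs_of_pos hT0, abs_mul, abs_of_pos (by positivity : (0 : ℝ) < 2 * π), ← add_div,
      div_self hT0.ne']
  · dsimp only
    rcases hs with hs | hs
    · left
      rw [← mul_div_assoc]
      gcongr
    · right
      rw [← mul_div_assoc]
      gcongr

theorem contDiff_of_contDiffOn_Ioi {G : Type*} [NormedAddCommGroup G] [NormedSpace ℝ G]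
    {f : ℝ → G} {δ : ℝ} (hδ : 0 < δ) (hf : ContDiffOn ℝ ∞ f (Set.Ioi 0))
    (h0 : ∀ u < δ, f u = 0) : ContDiff ℝ ∞ f := by
  rw [contDiff_iff_contDiffAt]
  intro u
  rcases lt_or_ge u δ with h | h
  · have : f =ᶠ[nhds u] fun _ => 0 := by
      filter_upwards [isOpen_Iio.mem_nhds h] with v hv using h0 v hv
    exact contDiffAt_const.congr_of_eventuallyEq this
  · exact hf.contDiffAt (isOpen_Ioi.mem_nhds (hδ.trans_le h))

theorem contDiffOn_sqrt_Ioi : ContDiffOn ℝ ∞ (fun u : ℝ => √u) (Set.Ioi 0) :=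
  contDiffOn_id.sqrt fun _ hu => (ne_of_gt hu)

theorem continuous_gaussianKernel {d : ℕ} (x : Euc d) :
    Continuous fun s => gaussianKernel s x := by
  refine continuous_of_dominated (bound := fun η => rexp (-1 * ‖η‖ ^ 2)) (fun s => ?_)
    (fun s => ae_of_all _ fun η => (norm_cexp_gaussian s x η).le)
    (integrable_rexp_neg_mul_sq_norm one_pos) (ae_of_all _ fun η => by fun_prop)
  apply Continuous.aestronglyMeasurable
  fun_prop

theorem sqrt_mem_Icc_iff {u : ℝ} : √u ∈ Set.Icc (1 / 2 : ℝ) 2 ↔ u ∈ Set.Icc (1 / 4 : ℝ) 4 := by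
  rw [Set.mem_Icc, Set.mem_Icc, Real.le_sqrt' (by norm_num), Real.sqrt_le_left (by norm_num)]
  norm_num

theorem exists_bump_Icc {l h : ℝ} (hl : 0 < l) (hlh : l < h) :
    ∃ ψ : ℝ → ℝ, ContDiff ℝ ∞ ψ ∧ (∀ σ, 0 ≤ ψ σ ∧ ψ σ ≤ 1) ∧ (∀ σ ∈ Set.Icc l h, ψ σ = 1) ∧
      ∀ σ, σ ∉ Set.Icc (l / 2) (h + l / 2) → ψ σ = 0 := by
  let f : ContDiffBump ((l + h) / 2) := ⟨(h - l) / 2, h / 2, by linarith, by linarith⟩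
  refine ⟨f, f.contDiff, fun σ => ⟨f.nonneg, f.le_one⟩, fun σ hσ => ?_, fun σ hσ => ?_⟩
  · apply f.one_of_mem_closedBall
    rw [Metric.mem_closedBall, Real.dist_eq, abs_le]
    constructor <;> simp only [f] <;> linarith [hσ.1, hσ.2]
  · apply f.zero_of_le_dist
    by_contra hcon
    rw [not_le, Real.dist_eq, abs_lt] at hcon
    simp only [f] at hcon
    exact hσ ⟨by linarith [hcon.1], by linarith [hcon.2]⟩

/-- Frequency-localised kernel bound on the stationary part of the Gaussian superposition. -/
theorem exists_norm_integral_core_le (d : ℕ) {l h : ℝ} (hl : 0 < l) (hlh : l < h) {ψ : ℝ → ℝ}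
    (hψ : ContDiff ℝ ∞ ψ) (hψ0 : ∀ σ, σ ∉ Set.Icc (l / 2) (h + l / 2) → ψ σ = 0) {α : ℝ → ℝ}
    (hα : ContDiff ℝ ∞ α) (hα2 : α 2 = 0) :
    ∃ C > 0, ∀ sgn : ℝ, sgn = 1 ∨ sgn = -1 → ∀ φ φ' φ'' : ℝ → ℝ, ∀ κ > 0,
      (∀ r ∈ Set.Icc (1 / 2 : ℝ) 2, HasDerivAt φ (φ' r) r) →
      (∀ r ∈ Set.Icc (1 / 2 : ℝ) 2, HasDerivAt φ' (φ'' r) r) →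
      ContinuousOn φ'' (Set.Icc (1 / 2 : ℝ) 2) →
      (∀ r ∈ Set.Icc (1 / 2 : ℝ) 2, κ ≤ sgn * φ'' r) → ∀ τ ≥ 1, ∀ F : ℝ → ℂ, ContDiff ℝ ∞ F →
      (∀ u, u ∉ Set.Icc (1 / 4 : ℝ) 4 → F u = 0) →
      (∀ r ∈ Set.Icc (1 / 2 : ℝ) 2, F (r ^ 2) * (2 * r) = cexp ((-(τ * φ r) : ℝ) * I) * α r) →
      ∀ x : Euc d, ‖∫ s, (ψ (s / τ) * 𝓕⁻ F s) * gaussianKernel s x‖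
        ≤ C * ((√κ)⁻¹ * τ ^ (-(d / 2 : ℝ))) := by
  have hA : ContDiff ℝ ∞ fun σ : ℝ => σ ^ (-(d / 2 : ℝ)) * ψ σ := by
    refine contDiff_of_contDiffOn_Ioi (half_pos hl) ?_ fun σ hσ => ?_
    · exact (contDiffOn_id.rpow_const_of_ne fun σ hσ => (ne_of_gt hσ)).mul hψ.contDiffOn
    · rw [hψ0 σ fun hc => absurd hc.1 (not_le.2 hσ), mul_zero]
  have hA0 : ∀ σ, σ ∉ Set.Icc (l / 2) (h + l / 2) → σ ^ (-(d / 2 : ℝ)) * ψ σ = 0 :=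
    fun σ hσ => by rw [hψ0 σ hσ, mul_zero]
  obtain ⟨C, hC0, hC⟩ := exists_core_bound (σ₀ := l / 4) (a₀ := l / 2) (b₀ := h + l / 2)
    (σ₁ := h + l) (by linarith) (by linarith) (by linarith) (by linarith) hA hA0 hα hα2
  set c₀ := ‖(2 * I / π : ℂ) ^ (-(d / 2 : ℂ))‖ * (∫ z : Euc d, rexp (-π ^ 2 * ‖z‖ ^ 2))
  have hc₀ : 0 ≤ c₀ := mul_nonneg (norm_nonneg _) (integral_nonneg fun _ => (Real.exp_pos _).le)
  refine ⟨(c₀ + 1) * C, by positivity, ?_⟩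
  intro sgn hsgn φ φ' φ'' κ hκ h1 h2 hc h3 τ hτ F hF hF0 hFα x
  have hτ0 : 0 < τ := by linarith
  have hFc : HasCompactSupport F := HasCompactSupport.intro isCompact_Icc hF0
  have hκ0 : 0 < √κ := Real.sqrt_pos.2 hκ
  have hτd : 0 < τ ^ (-(d / 2 : ℝ)) := Real.rpow_pos_of_pos hτ0 _
  have main := norm_integral_mul_gaussianKernel_le (d := d) (G := fun s => ψ (s / τ) * 𝓕⁻ F s)
    (M := C * ((√κ)⁻¹ * τ ^ (-(d / 2 : ℝ)))) (fun s hs => ?_) ?_ (fun Y hY => ?_) x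
  · refine main.trans ?_
    rw [mul_assoc]
    have : 0 ≤ C * ((√κ)⁻¹ * τ ^ (-(d / 2 : ℝ))) := by positivity
    nlinarith
  · have h4 : s / τ ≤ 0 := div_nonpos_of_nonpos_of_nonneg hs hτ0.le
    rw [hψ0 _ fun hcon => by linarith [hcon.1], ofReal_zero, zero_mul]
  · have hg := integrable_fourierInv_of_hasCompactSupport hF hFc
    obtain ⟨B, hB⟩ := (hA.continuous.bounded_above_of_compact_support
      (HasCompactSupport.intro isCompact_Icc hA0))
    have e : ∀ s, ((s ^ (-(d / 2 : ℝ)) : ℝ) : ℂ) * (ψ (s / τ) * 𝓕⁻ F s) =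
        ((τ ^ (-(d / 2 : ℝ)) * ((s / τ) ^ (-(d / 2 : ℝ)) * ψ (s / τ)) : ℝ) : ℂ) * 𝓕⁻ F s := by
      intro s
      rcases le_or_gt s 0 with hs | hs
      · have h4 : s / τ ≤ 0 := div_nonpos_of_nonpos_of_nonneg hs hτ0.le
        rw [hψ0 _ fun hcon => by linarith [hcon.1]]
        simp
      · rw [← mul_assoc (τ ^ _), ← Real.mul_rpow hτ0.le (by positivity), mul_div_cancel₀ _ hτ0.ne']
        push_cast
        ring
    simp_rw [e]
    refine hg.bdd_mul (c := τ ^ (-(d / 2 : ℝ)) * B) ?_ (ae_of_all _ fun s => ?_)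
    · apply Continuous.aestronglyMeasurable
      have := hA.continuous.comp (continuous_id.div_const τ)
      exact continuous_ofReal.comp (continuous_const.mul this)
    · rw [norm_real, norm_mul, Real.norm_of_nonneg hτd.le]
      gcongr
      exact hB _
  · have hY2 : Y = 2 * τ * (Y / (2 * τ)) := by field_simp
    rw [hY2, integral_core_eq d (σ₀ := l / 4) (σ₁ := h + l) (by linarith) (by linarith) hτ0 _
      hF.continuous hF0 hψ.continuous (fun σ hσ => hψ0 σ fun hcon => hσ
        ⟨by linarith [hcon.1], by linarith [hcon.2]⟩), norm_mul, norm_real, Real.norm_of_nonneg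
        (by positivity)]
    have := hC sgn hsgn φ φ' φ'' κ hκ h1 h2 hc h3 τ hτ (Y / (2 * τ)) (by positivity)
    rw [intervalIntegral.integral_congr (g := fun r => (cexp ((-(τ * φ r) : ℝ) * I) * α r) *
      ∫ σ in (l / 4)..(h + l), cexp ((2 * π * τ * (σ * r ^ 2 + (Y / (2 * τ)) ^ 2 / σ) : ℝ) * I) *
        ((σ ^ (-(d / 2 : ℝ)) * ψ σ : ℝ) : ℂ)) (fun r hr => by
          rw [Set.uIcc_of_le (by norm_num)] at hr
          dsimp only
          rw [hFα r hr])]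
    calc _ ≤ τ * τ ^ (-(d / 2 : ℝ)) * (C / (τ * √κ)) := by gcongr
      _ = _ := by field_simp

theorem contDiffOn_comp_sqrt {φ : ℝ × ℝ → ℝ} (hφ : ContDiffOn ℝ ∞ φ (Set.univ ×ˢ Set.Ioi 0)) :
    ContDiffOn ℝ ∞ (fun z : ℝ × ℝ => φ (z.1, √z.2)) (Set.univ ×ˢ Set.Ioi 0) := by
  refine hφ.comp (t := Set.univ ×ˢ Set.Ioi 0) (f := fun z : ℝ × ℝ => (z.1, √z.2)) ?_ ?_
  · exact contDiffOn_fst.prodMk (contDiffOn_snd.sqrt fun z hz => (ne_of_gt hz.2))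
  · exact fun z hz => ⟨trivial, Real.sqrt_pos.2 hz.2⟩

theorem sndDeriv_comp_sqrt {φ : ℝ × ℝ → ℝ} (hφ : ContDiffOn ℝ ∞ φ (Set.univ ×ˢ Set.Ioi 0))
    (p : ℝ) {u : ℝ} (hu : 0 < u) :
    sndDeriv (fun z : ℝ × ℝ => φ (z.1, √z.2)) (p, u)
      = sndDeriv φ (p, √u) * (1 / (2 * √u)) := by
  have hU : IsOpen (Set.univ ×ˢ Set.Ioi 0 : Set (ℝ × ℝ)) := isOpen_univ.prod isOpen_Ioi
  have h1 := hasDerivAt_sndDeriv_of_contDiffOn (contDiffOn_comp_sqrt hφ) hU (p := p) (u := u)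
    ⟨trivial, hu⟩
  have h2 := hasDerivAt_sndDeriv_of_contDiffOn hφ hU (p := p) (u := √u)
    ⟨trivial, Real.sqrt_pos.2 hu⟩
  exact h1.unique (h2.comp u (Real.hasDerivAt_sqrt hu.ne'))

theorem exists_norm_integral_nonresonant_le (d : ℕ) {Φ : ℝ × ℝ → ℝ}
    (hΦ : ContDiffOn ℝ ∞ Φ (Set.univ ×ˢ Set.Ioi 0)) {c C : ℝ} (hc : 0 < c)
    (hcΦ : ∀ p ∈ Set.Icc (0 : ℝ) 1, ∀ u ∈ Set.Icc (1 / 8 : ℝ) 8,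
      c ≤ sndDeriv Φ (p, u) ∧ sndDeriv Φ (p, u) ≤ C) {q : ℝ → ℝ} (hq : ContDiff ℝ ∞ q)
    (hq0 : ∀ u, u ∉ Set.Icc (1 / 4 : ℝ) 4 → q u = 0) {ψ : ℝ → ℝ}
    (hψ : ∀ σ, 0 ≤ ψ σ ∧ ψ σ ≤ 1) (hψ1 : ∀ σ ∈ Set.Icc (c / (4 * π)) (C / π), ψ σ = 1) :
    ∃ M ≥ 0, ∀ p ∈ Set.Icc (0 : ℝ) 1, ∀ τ ≥ 1, ∀ x : Euc d,
      ‖∫ s, ((1 - ψ (s / τ) : ℝ) * 𝓕⁻ (fun u => cexp ((-(τ * Φ (p, u)) : ℝ) * I) * (q u : ℂ)) s) *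
        gaussianKernel s x‖ ≤ M * τ ^ (-(d / 2 : ℝ)) := by
  obtain ⟨M, hM⟩ := exists_norm_fourierInv_nonresonant_le hΦ hc hcΦ hq hq0 d
  set B := ∫ η : Euc d, rexp (-1 * ‖η‖ ^ 2) with hB
  have hB0 : 0 ≤ B := integral_nonneg fun _ => (Real.exp_pos _).le
  refine ⟨|M| * π * B, by positivity, fun p hp τ hτ x => ?_⟩
  have hτ0 : 0 < τ := by linarith
  have hinteg : Integrable fun s : ℝ => |M| * τ⁻¹ ^ d * B * (1 + s ^ 2)⁻¹ :=
    integrable_inv_one_add_sq.const_mul _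
  refine (norm_integral_le_of_norm_le hinteg (ae_of_all _ fun s => ?_)).trans ?_
  · by_cases hs : s / τ ∈ Set.Icc (c / (4 * π)) (C / π)
    · rw [hψ1 _ hs]
      simp only [sub_self, ofReal_zero, zero_mul, norm_zero]
      positivity
    · have hbad : 2 * π * s ≤ c / 2 * τ ∨ 2 * C * τ ≤ 2 * π * s := by
        by_contra! hcon
        apply hs
        rw [Set.mem_Icc, div_le_div_iff₀ (by positivity) hτ0, div_le_div_iff₀ hτ0 (by positivity)]
        constructor <;> nlinarith [hcon.1, hcon.2]
      have h1 := hM p hp τ hτ s hbad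
      have h2 := norm_gaussianKernel_le s x
      rw [norm_mul, norm_mul, norm_real]
      have h3 : ‖1 - ψ (s / τ)‖ ≤ 1 := by
        rw [Real.norm_eq_abs, abs_le]
        constructor <;> linarith [(hψ (s / τ)).1, (hψ (s / τ)).2]
      calc _ ≤ 1 * (|M| * (τ⁻¹ ^ d * (1 + s ^ 2)⁻¹)) * B := by
            gcongr
            exact h1.trans (by gcongr; exact le_abs_self M)
        _ = _ := by ring
  · rw [integral_const_mul, integral_univ_inv_one_add_sq]
    have : τ⁻¹ ^ d ≤ τ ^ (-(d / 2 : ℝ)) := by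
      rw [inv_pow, ← Real.rpow_natCast, ← Real.rpow_neg hτ0.le]
      apply Real.rpow_le_rpow_of_exponent_le hτ
      have : (0 : ℝ) ≤ d := by positivity
      linarith
    calc |M| * τ⁻¹ ^ d * B * π = |M| * π * B * τ⁻¹ ^ d := by ring
      _ ≤ _ := by gcongr

/-- Dispersive bound for radial oscillatory integrals with a compact family of phases; only the
radial second derivative is allowed to degenerate. -/
theorem exists_radial_oscillatory_bound (d : ℕ) {ϱ : ℝ → ℝ} (hϱ : ContDiff ℝ ∞ ϱ)
    (hϱ0 : ∀ r ≥ 0, r ∉ Set.Icc (1 / 2 : ℝ) 2 → ϱ r = 0) (hϱ2 : ϱ 2 = 0)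
    {φ : ℝ × ℝ → ℝ} (hφ : ContDiffOn ℝ ∞ φ (Set.univ ×ˢ Set.Ioi 0))
    (hφ' : ∀ p ∈ Set.Icc (0 : ℝ) 1, ∀ r > 0, 0 < sndDeriv φ (p, r))
    {sgn : ℝ} (hsgn : sgn = 1 ∨ sgn = -1) {ε : ℝ → ℝ}
    (hε : ∀ p ∈ Set.Icc (0 : ℝ) 1, ∀ r ∈ Set.Icc (1 / 2 : ℝ) 2,
      ε p ≤ sgn * sndDeriv (sndDeriv φ) (p, r)) :
    ∃ C > 0, ∀ p ∈ Set.Icc (0 : ℝ) 1, 0 < ε p → ∀ τ > 0, ∀ x : Euc d,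
      ‖∫ η : Euc d, cexp (2 * π * I * ⟪x, η⟫) *
        (cexp ((-(τ * φ (p, ‖η‖)) : ℝ) * I) * (ϱ ‖η‖ : ℂ))‖
        ≤ C * ((√(ε p))⁻¹ * τ ^ (-(d / 2 : ℝ))) := by
  have hU : IsOpen (Set.univ ×ˢ Set.Ioi 0 : Set (ℝ × ℝ)) := isOpen_univ.prod isOpen_Ioi
  have hφs := contDiffOn_sndDeriv hφ hU
  have hφss := contDiffOn_sndDeriv hφs hU
  have hIU : Set.Icc (0 : ℝ) 1 ×ˢ Set.Icc (1 / 2 : ℝ) 2 ⊆ Set.univ ×ˢ Set.Ioi 0 :=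
    fun z hz => ⟨trivial, lt_of_lt_of_le (by norm_num) hz.2.1⟩
  have hIU8 : Set.Icc (0 : ℝ) 1 ×ˢ Set.Icc (1 / 8 : ℝ) 8 ⊆ Set.univ ×ˢ Set.Ioi 0 :=
    fun z hz => ⟨trivial, lt_of_lt_of_le (by norm_num) hz.2.1⟩
  obtain ⟨E, hE⟩ := (isCompact_Icc.prod isCompact_Icc).exists_bound_of_continuousOn
    (hφss.continuousOn.mono hIU)
  have hεE : ∀ p ∈ Set.Icc (0 : ℝ) 1, ε p ≤ E := by
    intro p hp
    have h1 := hε p hp 1 (by norm_num)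
    have h2 := abs_le.1 (hE (p, 1) ⟨hp, by norm_num⟩)
    rcases hsgn with rfl | rfl <;> linarith [h2.1, h2.2]
  set Φ : ℝ × ℝ → ℝ := fun z => φ (z.1, √z.2) with hΦdef
  have hΦ : ContDiffOn ℝ ∞ Φ (Set.univ ×ˢ Set.Ioi 0) := contDiffOn_comp_sqrt hφ
  have hΦ' : ∀ z ∈ Set.Icc (0 : ℝ) 1 ×ˢ Set.Icc (1 / 8 : ℝ) 8, 0 < sndDeriv Φ z := by
    rintro ⟨p, u⟩ hz
    have hu : 0 < u := (hIU8 hz).2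
    rw [sndDeriv_comp_sqrt hφ p hu]
    have := hφ' p hz.1 (√u) (Real.sqrt_pos.2 hu)
    have := Real.sqrt_pos.2 hu
    positivity
  have hΦc := (contDiffOn_sndDeriv hΦ hU).continuousOn.mono hIU8
  have hK : IsCompact (Set.Icc (0 : ℝ) 1 ×ˢ Set.Icc (1 / 8 : ℝ) 8) :=
    isCompact_Icc.prod isCompact_Icc
  have hne : (Set.Icc (0 : ℝ) 1 ×ˢ Set.Icc (1 / 8 : ℝ) 8).Nonempty :=
    ⟨(0, 1), by norm_num, by norm_num⟩
  obtain ⟨z₀, hz₀, hmin⟩ := hK.exists_isMinOn hne hΦc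
  obtain ⟨z₁, hz₁, hmax⟩ := hK.exists_isMaxOn hne hΦc
  set c := sndDeriv Φ z₀
  set C := sndDeriv Φ z₁
  have hc : 0 < c := hΦ' z₀ hz₀
  have hcC : c ≤ C := hmin hz₁
  have hcΦ : ∀ p ∈ Set.Icc (0 : ℝ) 1, ∀ u ∈ Set.Icc (1 / 8 : ℝ) 8,
      c ≤ sndDeriv Φ (p, u) ∧ sndDeriv Φ (p, u) ≤ C :=
    fun p hp u hu => ⟨hmin (Set.mk_mem_prod hp hu), hmax (Set.mk_mem_prod hp hu)⟩
  have hl : 0 < c / (4 * π) := by positivity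
  have hlh : c / (4 * π) < C / π := by
    rw [div_lt_div_iff₀ (by positivity) Real.pi_pos]
    nlinarith [Real.pi_pos]
  obtain ⟨ψ, hψs, hψ, hψ1, hψ0⟩ := exists_bump_Icc hl hlh
  set q : ℝ → ℝ := fun u => rexp u * ϱ √u with hqdef
  have hq0 : ∀ u, u ∉ Set.Icc (1 / 4 : ℝ) 4 → q u = 0 := fun u hu => by
    rw [hqdef]
    dsimp only
    rw [hϱ0 _ (Real.sqrt_nonneg u) (mt sqrt_mem_Icc_iff.1 hu), mul_zero]
  have hq : ContDiff ℝ ∞ q := by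
    refine contDiff_of_contDiffOn_Ioi (δ := 1 / 4) (by norm_num) ?_ fun u hu => hq0 u fun h =>
      absurd h.1 (not_le.2 hu)
    exact Real.contDiff_exp.contDiffOn.mul (hϱ.comp_contDiffOn contDiffOn_sqrt_Ioi)
  set α : ℝ → ℝ := fun r => 2 * r * rexp (r ^ 2) * ϱ r with hα
  have hαs : ContDiff ℝ ∞ α := by fun_prop
  obtain ⟨C₁, hC₁0, hC₁⟩ := exists_norm_integral_core_le d hl hlh hψs hψ0 hαs (by simp [hα, hϱ2])
  obtain ⟨M, hM0, hM⟩ := exists_norm_integral_nonresonant_le d hΦ hc hcΦ hq hq0 hψ hψ1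
  set B := ∫ η : Euc d, |ϱ ‖η‖| with hB
  have hB0 : 0 ≤ B := integral_nonneg fun _ => abs_nonneg _
  refine ⟨(B + M) * √E + C₁, by positivity, fun p hp hεp τ hτ x => ?_⟩
  have hsε : 0 < √(ε p) := Real.sqrt_pos.2 hεp
  have hEε : 1 ≤ √E * (√(ε p))⁻¹ := by
    rw [← div_eq_mul_inv, one_le_div hsε]
    exact Real.sqrt_le_sqrt (hεE p hp)
  have hτd : 0 < τ ^ (-(d / 2 : ℝ)) := Real.rpow_pos_of_pos hτ _
  rcases le_or_gt τ 1 with hτ1 | hτ1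
  · have h1 : ‖∫ η : Euc d, cexp (2 * π * I * ⟪x, η⟫) *
        (cexp ((-(τ * φ (p, ‖η‖)) : ℝ) * I) * (ϱ ‖η‖ : ℂ))‖ ≤ B := by
      refine (norm_integral_le_integral_norm _).trans_eq ?_
      congr 1
      ext η
      have : (2 * π * I * ⟪x, η⟫ : ℂ) = ((2 * π * ⟪x, η⟫ : ℝ) : ℂ) * I := by push_cast; ring
      rw [norm_mul, norm_mul, this, norm_exp_ofReal_mul_I, norm_exp_ofReal_mul_I, norm_real,
        one_mul, one_mul, Real.norm_eq_abs]
    have h2 : 1 ≤ τ ^ (-(d / 2 : ℝ)) :=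
      Real.one_le_rpow_of_pos_of_le_one_of_nonpos hτ hτ1 (by
        have : (0 : ℝ) ≤ d := by positivity
        linarith)
    calc _ ≤ B := h1
      _ ≤ B * ((√E * (√(ε p))⁻¹) * τ ^ (-(d / 2 : ℝ))) :=
        le_mul_of_one_le_right hB0 (one_le_mul_of_one_le_of_one_le hEε h2)
      _ ≤ B * ((√E * (√(ε p))⁻¹) * τ ^ (-(d / 2 : ℝ))) +
          (M * √E + C₁) * ((√(ε p))⁻¹ * τ ^ (-(d / 2 : ℝ))) :=
        le_add_of_nonneg_right (by positivity)
      _ = _ := by ring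
  · set F : ℝ → ℂ := fun u => cexp ((-(τ * Φ (p, u)) : ℝ) * I) * (q u : ℂ) with hFdef
    have hF0 : ∀ u, u ∉ Set.Icc (1 / 4 : ℝ) 4 → F u = 0 := fun u hu => by
      simp only [hFdef, hq0 u hu, ofReal_zero, mul_zero]
    have hF : ContDiff ℝ ∞ F := by
      refine contDiff_of_contDiffOn_Ioi (δ := 1 / 4) (by norm_num) ?_ fun u hu => hF0 u fun h =>
        absurd h.1 (not_le.2 hu)
      have h1 : ContDiffOn ℝ ∞ (fun u => Φ (p, u)) (Set.Ioi 0) :=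
        hΦ.comp (contDiff_prodMk_right p).contDiffOn fun u hu => ⟨trivial, hu⟩
      have h2 : ContDiffOn ℝ ∞ (fun u => ((-(τ * Φ (p, u)) : ℝ) : ℂ)) (Set.Ioi 0) :=
        ofRealCLM.contDiff.comp_contDiffOn (contDiffOn_const.mul h1).neg
      exact (h2.mul contDiffOn_const).cexp.mul (ofRealCLM.contDiff.comp hq).contDiffOn
    have hFc : HasCompactSupport F := HasCompactSupport.intro isCompact_Icc hF0
    have e1 : ∀ η : Euc d, cexp (2 * π * I * ⟪x, η⟫) *
        (cexp ((-(τ * φ (p, ‖η‖)) : ℝ) * I) * (ϱ ‖η‖ : ℂ))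
        = cexp (-‖η‖ ^ 2 + 2 * π * I * ⟪x, η⟫) * F (‖η‖ ^ 2) := by
      intro η
      simp only [hFdef, hqdef, hΦdef, Real.sqrt_sq (norm_nonneg η)]
      rw [Complex.exp_add]
      have : cexp (-(‖η‖ : ℂ) ^ 2) * ((rexp (‖η‖ ^ 2) : ℝ) : ℂ) = 1 := by
        push_cast
        rw [← Complex.exp_add, neg_add_cancel, Complex.exp_zero]
      push_cast at this ⊢
      linear_combination (-1 : ℂ) * (cexp (2 * π * I * ⟪x, η⟫) *
        (cexp (-(τ * φ (p, ‖η‖)) * I) * (ϱ ‖η‖ : ℂ))) * this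
    simp_rw [e1]
    rw [integral_gaussian_mul_comp_sq hF hFc]
    have hg := integrable_fourierInv_of_hasCompactSupport hF hFc
    have hgK : ∀ w : ℝ → ℝ, Continuous w → (∀ s, |w s| ≤ 1) →
        Integrable fun s => (w s * 𝓕⁻ F s) * gaussianKernel s x := by
      intro w hw hw1
      refine Integrable.mul_bdd (c := ∫ η : Euc d, rexp (-1 * ‖η‖ ^ 2))
        (hg.bdd_mul (c := 1) (by fun_prop) (ae_of_all _ fun s => ?_))
        (continuous_gaussianKernel x).aestronglyMeasurable
        (ae_of_all _ fun s => norm_gaussianKernel_le s x)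
      rw [norm_real]
      exact hw1 s
    have hψc := hψs.continuous
    have i1 := hgK (fun s => ψ (s / τ)) (by fun_prop) fun s => by
      rw [abs_of_nonneg (hψ _).1]; exact (hψ _).2
    have i2 := hgK (fun s => 1 - ψ (s / τ)) (by fun_prop) fun s => by
      rw [abs_of_nonneg (by linarith [(hψ (s / τ)).2])]; linarith [(hψ (s / τ)).1]
    have e2 : ∫ s, 𝓕⁻ F s * gaussianKernel s x =
        (∫ s, (ψ (s / τ) * 𝓕⁻ F s) * gaussianKernel s x) +
          ∫ s, ((1 - ψ (s / τ) : ℝ) * 𝓕⁻ F s) * gaussianKernel s x := by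
      rw [← integral_add i1 i2]
      congr 1
      ext s
      push_cast
      ring
    rw [e2]
    have b1 := hC₁ sgn hsgn (fun r => φ (p, r)) (fun r => sndDeriv φ (p, r))
      (fun r => sndDeriv (sndDeriv φ) (p, r)) (ε p) hεp
      (fun r hr => hasDerivAt_sndDeriv_of_contDiffOn hφ hU (hIU (Set.mk_mem_prod hp hr)))
      (fun r hr => hasDerivAt_sndDeriv_of_contDiffOn hφs hU (hIU (Set.mk_mem_prod hp hr)))
      (hφss.continuousOn.comp (by fun_prop) fun r hr => hIU (Set.mk_mem_prod hp hr))
      (hε p hp) τ hτ1.le F hF hF0 (fun r hr => by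
        have hr0 : 0 ≤ r := by linarith [hr.1]
        simp only [hFdef, hqdef, hΦdef, hα, Real.sqrt_sq hr0]
        push_cast
        ring) x
    have b2 := hM p hp τ hτ1.le x
    calc _ ≤ C₁ * ((√(ε p))⁻¹ * τ ^ (-(d / 2 : ℝ))) + M * τ ^ (-(d / 2 : ℝ)) :=
          (norm_add_le _ _).trans (add_le_add b1 b2)
      _ ≤ C₁ * ((√(ε p))⁻¹ * τ ^ (-(d / 2 : ℝ))) +
          M * ((√E * (√(ε p))⁻¹) * τ ^ (-(d / 2 : ℝ))) := by
          gcongr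
          exact le_mul_of_one_le_left hτd.le hEε
      _ ≤ C₁ * ((√(ε p))⁻¹ * τ ^ (-(d / 2 : ℝ))) +
          M * ((√E * (√(ε p))⁻¹) * τ ^ (-(d / 2 : ℝ))) +
          B * √E * ((√(ε p))⁻¹ * τ ^ (-(d / 2 : ℝ))) := le_add_of_nonneg_right (by positivity)
      _ = _ := by ring

/-! ### Convexity of the dispersion relation -/

theorem hasDerivAt_sqrt_comp {W W1 : ℝ → ℝ} {x : ℝ} (hW : 0 < W x)
    (h1 : HasDerivAt W (W1 x) x) :
    HasDerivAt (fun y => √(W y)) (W1 x / (2 * √(W x))) x :=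
  h1.sqrt hW.ne'

theorem hasDerivAt_sqrt_comp_deriv {W W1 : ℝ → ℝ} {w2 x : ℝ} (hW : 0 < W x)
    (h1 : HasDerivAt W (W1 x) x) (h2 : HasDerivAt W1 w2 x) :
    HasDerivAt (fun y => W1 y / (2 * √(W y)))
      ((2 * W x * w2 - W1 x ^ 2) / (4 * W x * √(W x))) x := by
  have hs : 0 < √(W x) := Real.sqrt_pos.2 hW
  have hss : √(W x) ^ 2 = W x := Real.sq_sqrt hW.le
  refine (h2.div ((hasDerivAt_sqrt_comp hW h1).const_mul 2) (by positivity)).congr_deriv ?_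
  rw [div_eq_div_iff (by positivity) (by positivity)]
  generalize √(W x) = s at *
  rw [← hss]
  field_simp
  ring

theorem sinh_le_mul_cosh {x : ℝ} (hx : 0 ≤ x) : Real.sinh x ≤ x * Real.cosh x := by
  have hd : ∀ y, HasDerivAt (fun y => y * Real.cosh y - Real.sinh y) (y * Real.sinh y) y := fun y => by
    refine (((hasDerivAt_id y).mul (Real.hasDerivAt_cosh y)).sub
      (Real.hasDerivAt_sinh y)).congr_deriv ?_
    simp
  have hm : MonotoneOn (fun y => y * Real.cosh y - Real.sinh y) (Set.Ici 0) :=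
    monotoneOn_of_deriv_nonneg (convex_Ici 0)
      (fun y _ => (hd y).continuousAt.continuousWithinAt)
      (fun y _ => (hd y).differentiableAt.differentiableWithinAt) fun y hy => by
        rw [interior_Ici] at hy
        rw [(hd y).deriv]
        exact mul_nonneg hy.le (Real.sinh_nonneg_iff.2 hy.le)
  simpa using hm Set.self_mem_Ici hx hx

theorem one_add_sq_div_two_le_cosh {x : ℝ} (hx : 0 ≤ x) : 1 + x ^ 2 / 2 ≤ Real.cosh x := by
  have h := Real.cosh_two_mul (x / 2)
  rw [show 2 * (x / 2) = x by ring, Real.cosh_sq (x / 2)] at h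
  have h2 : x / 2 ≤ Real.sinh (x / 2) := Real.self_le_sinh_iff.2 (by positivity)
  nlinarith

/-- The square `x (1 + β x²) tanh x` of the dispersion relation. -/
def symbSq (β x : ℝ) : ℝ := (x + β * x ^ 3) * (Real.sinh x / Real.cosh x)

/-- First derivative of `symbSq β`. -/
def symbSqDeriv (β x : ℝ) : ℝ :=
  (1 + 3 * β * x ^ 2) * (Real.sinh x / Real.cosh x) + (x + β * x ^ 3) / Real.cosh x ^ 2

/-- Second derivative of `symbSq β`. -/
def symbSqDeriv₂ (β x : ℝ) : ℝ :=
  6 * β * x * (Real.sinh x / Real.cosh x) + 2 * (1 + 3 * β * x ^ 2) / Real.cosh x ^ 2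
    - 2 * (x + β * x ^ 3) * Real.sinh x / Real.cosh x ^ 3

/-- First derivative of `mSymb β`. -/
def mSymbDeriv (β x : ℝ) : ℝ := symbSqDeriv β x / (2 * √(symbSq β x))

/-- Second derivative of `mSymb β`. -/
def mSymbDeriv₂ (β x : ℝ) : ℝ :=
  (2 * symbSq β x * symbSqDeriv₂ β x - symbSqDeriv β x ^ 2) / (4 * symbSq β x * √(symbSq β x))

theorem mSymb_eq_sqrt (β x : ℝ) : mSymb β x = √(symbSq β x) := by
  rw [mSymb, symbSq, Real.tanh_eq_sinh_div_cosh]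
  congr 1
  ring

theorem hasDerivAt_sinh_div_cosh (x : ℝ) :
    HasDerivAt (fun y => Real.sinh y / Real.cosh y) (1 / Real.cosh x ^ 2) x := by
  have h := (Real.hasDerivAt_sinh x).div (Real.hasDerivAt_cosh x) (Real.cosh_pos x).ne'
  refine h.congr_deriv ?_
  rw [← Real.cosh_sq_sub_sinh_sq x]
  ring

theorem hasDerivAt_symbSq (β x : ℝ) : HasDerivAt (symbSq β) (symbSqDeriv β x) x := by
  have hq : HasDerivAt (fun y : ℝ => y + β * y ^ 3) (1 + β * (3 * x ^ 2)) x := by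
    refine ((hasDerivAt_id x).add ((hasDerivAt_pow 3 x).const_mul β)).congr_deriv ?_
    simp
  refine (hq.mul (hasDerivAt_sinh_div_cosh x)).congr_deriv ?_
  rw [symbSqDeriv]
  ring

theorem hasDerivAt_symbSqDeriv (β x : ℝ) :
    HasDerivAt (symbSqDeriv β) (symbSqDeriv₂ β x) x := by
  have hc : Real.cosh x ≠ 0 := (Real.cosh_pos x).ne'
  have hq : HasDerivAt (fun y : ℝ => y + β * y ^ 3) (1 + β * (3 * x ^ 2)) x := by
    refine ((hasDerivAt_id x).add ((hasDerivAt_pow 3 x).const_mul β)).congr_deriv ?_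
    simp
  have hq1 : HasDerivAt (fun y : ℝ => 1 + 3 * β * y ^ 2) (3 * β * (2 * x)) x := by
    simpa using ((hasDerivAt_pow 2 x).const_mul (3 * β)).const_add 1
  have hc2 : HasDerivAt (fun y : ℝ => Real.cosh y ^ 2) (2 * Real.cosh x * Real.sinh x) x := by
    refine ((Real.hasDerivAt_cosh x).pow 2).congr_deriv ?_
    simp
  refine ((hq1.mul (hasDerivAt_sinh_div_cosh x)).add
    (hq.div hc2 (pow_ne_zero 2 hc))).congr_deriv ?_
  rw [symbSqDeriv₂]
  field_simp
  ring

theorem symbSq_pos {β x : ℝ} (hβ : 0 ≤ β) (hx : 0 < x) : 0 < symbSq β x := by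
  have := Real.sinh_pos_iff.2 hx
  have := Real.cosh_pos x
  unfold symbSq
  positivity

theorem hasDerivAt_mSymb {β x : ℝ} (hβ : 0 ≤ β) (hx : 0 < x) :
    HasDerivAt (mSymb β) (mSymbDeriv β x) x := by
  rw [show mSymb β = fun y => √(symbSq β y) from funext (mSymb_eq_sqrt β)]
  exact hasDerivAt_sqrt_comp (symbSq_pos hβ hx) (hasDerivAt_symbSq β x)

theorem hasDerivAt_mSymbDeriv {β x : ℝ} (hβ : 0 ≤ β) (hx : 0 < x) :
    HasDerivAt (mSymbDeriv β) (mSymbDeriv₂ β x) x :=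
  hasDerivAt_sqrt_comp_deriv (symbSq_pos hβ hx) (hasDerivAt_symbSq β x)
    (hasDerivAt_symbSqDeriv β x)

theorem mSymbDeriv_pos {β x : ℝ} (hβ : 0 ≤ β) (hx : 0 < x) : 0 < mSymbDeriv β x := by
  have h0 := Real.sqrt_pos.2 (symbSq_pos hβ hx)
  have := Real.sinh_pos_iff.2 hx
  have := Real.cosh_pos x
  unfold mSymbDeriv symbSqDeriv
  positivity

theorem symbSq_numerator (β x : ℝ) :
    2 * symbSq β x * symbSqDeriv₂ β x - symbSqDeriv β x ^ 2 =
      ((Real.sinh x * Real.cosh x) ^ 2 * (12 * (x + β * x ^ 3) * β * x - (1 + 3 * β * x ^ 2) ^ 2)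
        + 2 * (x + β * x ^ 3) * (1 + 3 * β * x ^ 2) * (Real.sinh x * Real.cosh x)
        - (x + β * x ^ 3) ^ 2 * (1 + 4 * Real.sinh x ^ 2)) / Real.cosh x ^ 4 := by
  have hc : Real.cosh x ≠ 0 := (Real.cosh_pos x).ne'
  unfold symbSq symbSqDeriv symbSqDeriv₂
  field_simp
  ring

theorem self_le_sinh_mul_cosh {x : ℝ} (hx : 0 ≤ x) : x ≤ Real.sinh x * Real.cosh x := by
  have h1 : x ≤ Real.sinh x := Real.self_le_sinh_iff.2 hx
  nlinarith [Real.one_le_cosh x]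

theorem neg_mul_symbSq_numerator_zero_ge {x : ℝ} (hx : 0 < x) :
    4 * x ^ 4 / Real.cosh x ^ 4 ≤
      -(2 * symbSq 0 x * symbSqDeriv₂ 0 x - symbSqDeriv 0 x ^ 2) := by
  rw [symbSq_numerator, ← neg_div]
  have h1 : x ≤ Real.sinh x := Real.self_le_sinh_iff.2 hx.le
  gcongr
  have : x ^ 2 * x ^ 2 ≤ x ^ 2 * Real.sinh x ^ 2 := by gcongr
  nlinarith [sq_nonneg (Real.sinh x * Real.cosh x - x)]

theorem symbSq_numerator_one_ge {x : ℝ} (hx : 0 < x) :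
    5 * x ^ 4 / Real.cosh x ^ 4 ≤ 2 * symbSq 1 x * symbSqDeriv₂ 1 x - symbSqDeriv 1 x ^ 2 := by
  rw [symbSq_numerator]
  gcongr
  have h1 : x ≤ Real.sinh x := Real.self_le_sinh_iff.2 hx.le
  have hs := Real.sinh_pos_iff.2 hx
  have hc1 := Real.one_le_cosh x
  have hcs := Real.cosh_sq x
  have hc2 := one_add_sq_div_two_le_cosh hx.le
  have hsc := sinh_le_mul_cosh hx.le
  have hhx := self_le_sinh_mul_cosh hx.le
  obtain hlt | hge := lt_or_ge x 1
  · have hA : (1 - x ^ 2) * (Real.sinh x * Real.cosh x) ≤ x := by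
      nlinarith [mul_nonneg (sub_nonneg.2 hsc)
        (by positivity : (0:ℝ) ≤ Real.cosh x + x * Real.sinh x)]
    have hB : (1 + x ^ 2) * Real.sinh x ^ 2 ≤ (Real.sinh x * Real.cosh x) ^ 2 := by
      have : 1 + x ^ 2 ≤ Real.cosh x ^ 2 := by nlinarith
      rw [mul_pow, mul_comm]
      gcongr
    set h := Real.sinh x * Real.cosh x
    have hx2 : 0 ≤ 1 - x ^ 2 := by nlinarith
    have hh : 0 < h := by positivity
    have hD : ((1 - x ^ 2) * h) * ((1 - x ^ 2) * h) ≤ x * ((1 - x ^ 2) * h) := by gcongr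
    have hE := mul_le_mul_of_nonneg_left hB (by positivity : 0 ≤ 4 * x ^ 2 * (1 + x ^ 2))
    have hF := mul_le_mul_of_nonneg_left hhx
      (by positivity : 0 ≤ x * (1 + 9 * x ^ 2 + 6 * x ^ 4))
    have : 0 ≤ x ^ 6 := by positivity
    have : 0 ≤ x ^ 4 := by positivity
    nlinarith
  · have hB : Real.sinh x ^ 2 ≤ Real.sinh x * Real.cosh x := by nlinarith [Real.sinh_lt_cosh x]
    have hC : x + x ^ 3 / 2 ≤ Real.sinh x * Real.cosh x := by nlinarith [mul_le_mul h1 hc2 (by positivity) hs.le]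
    set h := Real.sinh x * Real.cosh x
    have hh : 0 < h := by positivity
    have hA : 0 ≤ 3 * x ^ 4 + 6 * x ^ 2 - 1 := by
      nlinarith [one_le_pow₀ hge (n := 4), one_le_pow₀ hge (n := 2)]
    have hD : 9.5 * x ^ 3 + x ≤ (x + x ^ 3 / 2) * (3 * x ^ 4 + 6 * x ^ 2 - 1)
        + 2 * x * (1 + x ^ 2) * (1 + 3 * x ^ 2) - 4 * x ^ 2 * (1 + x ^ 2) ^ 2 := by
      have e1 : 0 ≤ x ^ 5 * (1.5 * x ^ 2 - 4 * x + 4) :=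
        mul_nonneg (by positivity) (by nlinarith [sq_nonneg (x - 4 / 3)])
      have e2 : 0 ≤ x ^ 4 * (x - 1) := mul_nonneg (by positivity) (by linarith)
      have e3 : 0 ≤ x ^ 2 * (x - 1) := mul_nonneg (by positivity) (by linarith)
      nlinarith
    have hE := mul_le_mul_of_nonneg_left hB (by positivity : 0 ≤ 4 * x ^ 2 * (1 + x ^ 2) ^ 2)
    have hF := mul_le_mul_of_nonneg_left (mul_le_mul_of_nonneg_right hC hA) hh.le
    have hG := mul_le_mul_of_nonneg_left hD hh.le
    have hH := mul_le_mul_of_nonneg_right hC (by positivity : 0 ≤ 9.5 * x ^ 3 + x)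
    have : 0 ≤ x ^ 6 := by positivity
    have : 0 ≤ x ^ 4 := by positivity
    nlinarith

/-- The sign of the second derivative of `mSymb β` for `β = 0, 1`. -/
def symbSgn (β : ℝ) : ℝ := 2 * β - 1

theorem symbSgn_eq {β : ℝ} (hβ : β = 0 ∨ β = 1) : symbSgn β = 1 ∨ symbSgn β = -1 := by
  rcases hβ with rfl | rfl <;> norm_num [symbSgn]

theorem symbSgn_mul_numerator_ge {β x : ℝ} (hβ : β = 0 ∨ β = 1) (hx : 0 < x) :
    4 * x ^ 4 / Real.cosh x ^ 4 ≤
      symbSgn β * (2 * symbSq β x * symbSqDeriv₂ β x - symbSqDeriv β x ^ 2) := by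
  rcases hβ with rfl | rfl
  · rw [show symbSgn 0 = -1 by norm_num [symbSgn], neg_one_mul]
    exact neg_mul_symbSq_numerator_zero_ge hx
  · rw [show symbSgn 1 = 1 by norm_num [symbSgn], one_mul]
    refine le_trans ?_ (symbSq_numerator_one_ge hx)
    gcongr
    norm_num

theorem symbSgn_mul_mSymbDeriv₂_pos {β x : ℝ} (hβ : β = 0 ∨ β = 1) (hx : 0 < x) :
    0 < symbSgn β * mSymbDeriv₂ β x := by
  have hβ0 : 0 ≤ β := by rcases hβ with rfl | rfl <;> norm_num
  have h0 := symbSq_pos hβ0 hx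
  have h1 := Real.sqrt_pos.2 h0
  rw [mSymbDeriv₂, ← mul_div_assoc]
  refine div_pos (lt_of_lt_of_le ?_ (symbSgn_mul_numerator_ge hβ hx)) (by positivity)
  have := Real.cosh_pos x
  positivity

theorem exists_mul_le_symbSgn_mul_mSymbDeriv₂ {β : ℝ} (hβ : β = 0 ∨ β = 1) :
    ∃ c > 0, ∀ x ∈ Set.Ioc (0 : ℝ) 2, c * x ≤ symbSgn β * mSymbDeriv₂ β x := by
  have hβ0 : 0 ≤ β := by rcases hβ with rfl | rfl <;> norm_num
  have hβ1 : β ≤ 1 := by rcases hβ with rfl | rfl <;> norm_num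
  have hc2 := Real.cosh_pos 2
  refine ⟨1 / (25 * Real.cosh 2 ^ 4), by positivity, fun x ⟨hx, hx2⟩ => ?_⟩
  have h0 := symbSq_pos hβ0 hx
  have h1 := Real.sqrt_pos.2 h0
  have hc := Real.cosh_pos x
  have hcc : Real.cosh x ≤ Real.cosh 2 := Real.cosh_le_cosh.2 (by
    rw [abs_of_pos hx, abs_of_pos (by norm_num : (0:ℝ) < 2)]; exact hx2)
  have hW : symbSq β x ≤ 5 * x ^ 2 := by
    have ht : Real.sinh x / Real.cosh x ≤ x := (div_le_iff₀ hc).2 (sinh_le_mul_cosh hx.le)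
    calc symbSq β x ≤ (x + 1 * x ^ 3) * x := by unfold symbSq; gcongr
      _ = x ^ 2 * (1 + x ^ 2) := by ring
      _ ≤ x ^ 2 * (1 + 2 ^ 2) := by gcongr
      _ = _ := by ring
  have hsq : √(symbSq β x) ≤ 5 * x :=
    Real.sqrt_le_iff.2 ⟨by positivity, hW.trans (by nlinarith [sq_nonneg x])⟩
  rw [mSymbDeriv₂, ← mul_div_assoc]
  calc 1 / (25 * Real.cosh 2 ^ 4) * x = (4 * x ^ 4 / Real.cosh 2 ^ 4) / (4 * (5 * x ^ 2) * (5 * x)) := by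
        field_simp
        norm_num
    _ ≤ (4 * x ^ 4 / Real.cosh x ^ 4) / (4 * symbSq β x * √(symbSq β x)) := by gcongr
    _ ≤ _ := by gcongr; exact symbSgn_mul_numerator_ge hβ hx

/-! ### Rescaled phases -/

theorem sndDeriv_eq_of_hasDerivAt {φ : ℝ × ℝ → ℝ}
    (hφ : ContDiffOn ℝ ∞ φ (Set.univ ×ˢ Set.Ioi 0)) {p : ℝ} {g g1 : ℝ → ℝ}
    (hg : ∀ r > 0, φ (p, r) = g r) (h1 : ∀ r > 0, HasDerivAt g (g1 r) r) {r : ℝ} (hr : 0 < r) :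
    sndDeriv φ (p, r) = g1 r := by
  refine (hasDerivAt_sndDeriv_of_contDiffOn hφ (isOpen_univ.prod isOpen_Ioi)
    ⟨trivial, hr⟩).unique ((h1 r hr).congr_of_eventuallyEq ?_)
  filter_upwards [Ioi_mem_nhds hr] with v hv using hg v hv

theorem sndDeriv_sndDeriv_eq_of_hasDerivAt {φ : ℝ × ℝ → ℝ}
    (hφ : ContDiffOn ℝ ∞ φ (Set.univ ×ˢ Set.Ioi 0)) {p : ℝ} {g g1 g2 : ℝ → ℝ}
    (hg : ∀ r > 0, φ (p, r) = g r) (h1 : ∀ r > 0, HasDerivAt g (g1 r) r)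
    (h2 : ∀ r > 0, HasDerivAt g1 (g2 r) r) {r : ℝ} (hr : 0 < r) :
    sndDeriv (sndDeriv φ) (p, r) = g2 r :=
  sndDeriv_eq_of_hasDerivAt (contDiffOn_sndDeriv hφ (isOpen_univ.prod isOpen_Ioi))
    (fun _ hs => sndDeriv_eq_of_hasDerivAt hφ hg h1 hs) h2 hr

theorem contDiff_dslope_sinh : ContDiff ℝ ∞ (dslope Real.sinh 0) := by
  rw [contDiff_iff_contDiffAt]
  intro x
  obtain rfl | hx := eq_or_ne x 0
  · obtain ⟨p, hp⟩ := (Real.contDiff_sinh (n := ω)).contDiffAt (x := (0 : ℝ)) |>.analyticAt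
    exact hp.has_fpower_series_dslope_fslope.analyticAt.contDiffAt
  · have h : dslope Real.sinh 0 =ᶠ[nhds x] fun y => Real.sinh y / y := by
      filter_upwards [isOpen_ne.mem_nhds hx] with y hy
      rw [dslope_of_ne _ hy, slope_def_field]
      simp
    exact (Real.contDiff_sinh.contDiffAt.div contDiffAt_id hx).congr_of_eventuallyEq h

theorem dslope_sinh_of_ne {x : ℝ} (hx : x ≠ 0) : dslope Real.sinh 0 x = Real.sinh x / x := by
  rw [dslope_of_ne _ hx, slope_def_field]
  simp

theorem dslope_sinh_pos (x : ℝ) : 0 < dslope Real.sinh 0 x := by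
  obtain h | rfl | h := lt_trichotomy x 0
  · rw [dslope_sinh_of_ne h.ne]
    exact div_pos_of_neg_of_neg (Real.sinh_neg_iff.2 h) h
  · simp
  · rw [dslope_sinh_of_ne h.ne']
    exact div_pos (Real.sinh_pos_iff.2 h) h

/-- The rescaled phase `m_β(pr) / p`, smooth up to `p = 0`. -/
def lowPhase (β : ℝ) (z : ℝ × ℝ) : ℝ :=
  z.2 * √(dslope Real.sinh 0 (z.1 * z.2) / Real.cosh (z.1 * z.2) * (1 + β * (z.1 * z.2) ^ 2))

theorem contDiff_lowPhase {β : ℝ} (hβ : 0 ≤ β) : ContDiff ℝ ∞ (lowPhase β) := by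
  have hz : ContDiff ℝ ∞ fun z : ℝ × ℝ => z.1 * z.2 := contDiff_fst.mul contDiff_snd
  refine contDiff_snd.mul (ContDiff.sqrt (((contDiff_dslope_sinh.comp hz).div
    (Real.contDiff_cosh.comp hz) fun z => (Real.cosh_pos _).ne').mul
    (contDiff_const.add (contDiff_const.mul (hz.pow 2)))) fun z => ?_)
  have h1 := dslope_sinh_pos (z.1 * z.2)
  have h2 := Real.cosh_pos (z.1 * z.2)
  positivity

theorem lowPhase_eq {β p r : ℝ} (hp : 0 < p) (hr : 0 < r) :
    lowPhase β (p, r) = p⁻¹ * mSymb β (p * r) := by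
  have hpr : 0 < p * r := mul_pos hp hr
  have hc := Real.cosh_pos (p * r)
  rw [lowPhase, mSymb_eq_sqrt, dslope_sinh_of_ne hpr.ne', symbSq]
  rw [show (p * r + β * (p * r) ^ 3) * (Real.sinh (p * r) / Real.cosh (p * r)) =
    (p * r) ^ 2 * (Real.sinh (p * r) / (p * r) / Real.cosh (p * r) * (1 + β * (p * r) ^ 2)) by
      field_simp, Real.sqrt_mul (sq_nonneg _), Real.sqrt_sq hpr.le]
  field_simp

theorem exists_low_frequency_bound {β : ℝ} (hβ : β = 0 ∨ β = 1) (d : ℕ) {ϱ : ℝ → ℝ}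
    (hϱ : ContDiff ℝ ∞ ϱ) (hϱ0 : ∀ r ≥ 0, r ∉ Set.Icc (1 / 2 : ℝ) 2 → ϱ r = 0)
    (hϱ2 : ϱ 2 = 0) :
    ∃ C > 0, ∀ lam > 0, lam ≤ 1 → ∀ t > 0, ∀ x : Euc d,
      ‖∫ η : Euc d, cexp (2 * π * I * ⟪x, η⟫) *
          (cexp ((-(t * mSymb β (lam * ‖η‖)) : ℝ) * I) * (ϱ ‖η‖ : ℂ))‖
        ≤ C * (lam⁻¹ * (t * lam) ^ (-(d / 2 : ℝ))) := by
  have hβ0 : 0 ≤ β := by rcases hβ with rfl | rfl <;> norm_num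
  obtain ⟨c, hc, hcm⟩ := exists_mul_le_symbSgn_mul_mSymbDeriv₂ hβ
  have hφ : ContDiffOn ℝ ∞ (lowPhase β) (Set.univ ×ˢ Set.Ioi 0) := (contDiff_lowPhase hβ0).contDiffOn
  have hlin (p : ℝ) (r : ℝ) : HasDerivAt (fun s => p * s) p r := by
    simpa using (hasDerivAt_id r).const_mul p
  have hg1 (p : ℝ) (hp : 0 < p) (r : ℝ) (hr : r > 0) :
      HasDerivAt (fun s => p⁻¹ * mSymb β (p * s)) (mSymbDeriv β (p * r)) r :=
    (((hasDerivAt_mSymb hβ0 (mul_pos hp hr)).comp r (hlin p r)).const_mul p⁻¹).congr_deriv (by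
      field_simp)
  have hg2 (p : ℝ) (hp : 0 < p) (r : ℝ) (hr : r > 0) :
      HasDerivAt (fun s => mSymbDeriv β (p * s)) (mSymbDeriv₂ β (p * r) * p) r :=
    (hasDerivAt_mSymbDeriv hβ0 (mul_pos hp hr)).comp r (hlin p r)
  have hz0 (r : ℝ) (_ : r > 0) : lowPhase β (0, r) = id r := by
    simp [lowPhase]
  have hz1 (r : ℝ) (_ : r > 0) : HasDerivAt (id : ℝ → ℝ) ((fun _ => (1 : ℝ)) r) r :=
    hasDerivAt_id r
  have hz2 (r : ℝ) (_ : r > 0) : HasDerivAt (fun _ : ℝ => (1 : ℝ)) ((fun _ => (0 : ℝ)) r) r :=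
    hasDerivAt_const r _
  obtain ⟨C, hC, hbd⟩ := exists_radial_oscillatory_bound d hϱ hϱ0 hϱ2 hφ
    (fun p hp r hr => by
      obtain h | h := hp.1.eq_or_lt
      · rw [← h, sndDeriv_eq_of_hasDerivAt hφ hz0 hz1 hr]
        exact one_pos
      · rw [sndDeriv_eq_of_hasDerivAt hφ (fun s hs => lowPhase_eq h hs) (hg1 p h) hr]
        exact mSymbDeriv_pos hβ0 (mul_pos h hr))
    (symbSgn_eq hβ) (ε := fun p => (√(c / 2) * p) ^ 2) (fun p hp r hr => by
      have hr0 : 0 < r := by linarith [hr.1]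
      rw [mul_pow, Real.sq_sqrt (by positivity)]
      obtain h | h := hp.1.eq_or_lt
      · rw [← h, sndDeriv_sndDeriv_eq_of_hasDerivAt hφ hz0 hz1 hz2 hr0]
        simp
      · rw [sndDeriv_sndDeriv_eq_of_hasDerivAt hφ (fun s hs => lowPhase_eq h hs) (hg1 p h)
          (hg2 p h) hr0]
        have h2 : p * r ≤ 2 := by nlinarith [hp.2, hr.2]
        calc c / 2 * p ^ 2 = c * (p * (1 / 2)) * p := by ring
          _ ≤ c * (p * r) * p := by gcongr; exact hr.1
          _ ≤ symbSgn β * mSymbDeriv₂ β (p * r) * p :=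
            mul_le_mul_of_nonneg_right (hcm _ ⟨mul_pos h hr0, h2⟩) h.le
          _ = _ := by ring)
  have hsc : 0 < √(c / 2) := by positivity
  refine ⟨C * (√(c / 2))⁻¹, by positivity, fun lam hl hl1 t ht x => ?_⟩
  have h := hbd lam ⟨hl.le, hl1⟩ (by positivity) (t * lam) (by positivity) x
  rw [Real.sqrt_sq (by positivity)] at h
  refine le_trans (le_of_eq ?_) (h.trans (le_of_eq ?_))
  · congr 1
    refine integral_congr_ae ?_
    filter_upwards with η
    obtain h0 | h0 := (norm_nonneg η).eq_or_lt
    · rw [hϱ0 _ (norm_nonneg η) (by rw [← h0]; norm_num)]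
      simp
    · rw [lowPhase_eq hl h0]
      congr 5
      field_simp
  · rw [mul_inv]
    ring

theorem expNegInvGlue_lt_one (x : ℝ) : expNegInvGlue x < 1 := by
  unfold expNegInvGlue
  split_ifs with h
  · exact one_pos
  · rw [Real.exp_lt_one_iff]
    simpa using h

theorem expNegInvGlue_of_pos {x : ℝ} (hx : 0 < x) : expNegInvGlue x = Real.exp (-x⁻¹) := by
  simp [expNegInvGlue, hx]

/-- The square of the rescaled phase `p^{1/2+β} m_β(r/p)`, smooth up to `p = 0`. -/
def highPhaseSq (β : ℝ) (z : ℝ × ℝ) : ℝ :=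
  z.2 * ((1 - β) + β * (z.1 ^ 2 + z.2 ^ 2)) *
    ((1 - expNegInvGlue (z.1 / (2 * z.2))) / (1 + expNegInvGlue (z.1 / (2 * z.2))))

theorem highPhaseSq_pos {β : ℝ} (hβ : β = 0 ∨ β = 1) {z : ℝ × ℝ} (hz : 0 < z.2) :
    0 < highPhaseSq β z := by
  have h1 := sub_pos.2 (expNegInvGlue_lt_one (z.1 / (2 * z.2)))
  have h2 := expNegInvGlue.nonneg (z.1 / (2 * z.2))
  have h3 : 0 < (1 - β) + β * (z.1 ^ 2 + z.2 ^ 2) := by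
    rcases hβ with rfl | rfl
    · norm_num
    · have := sq_nonneg z.1
      have : 0 < z.2 ^ 2 := by positivity
      linarith
  unfold highPhaseSq
  positivity

theorem contDiffOn_sqrt_highPhaseSq {β : ℝ} (hβ : β = 0 ∨ β = 1) :
    ContDiffOn ℝ ∞ (fun z => √(highPhaseSq β z)) (Set.univ ×ˢ Set.Ioi 0) := by
  have hE : ContDiffOn ℝ ∞ (fun z : ℝ × ℝ => expNegInvGlue (z.1 / (2 * z.2)))
      (Set.univ ×ˢ Set.Ioi 0) :=
    expNegInvGlue.contDiff.comp_contDiffOn (contDiff_fst.contDiffOn.div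
      (contDiff_const.mul contDiff_snd).contDiffOn fun z hz =>
        mul_ne_zero two_ne_zero (ne_of_gt hz.2))
  refine ContDiffOn.sqrt (ContDiffOn.mul (ContDiff.contDiffOn ?_)
    ((contDiffOn_const.sub hE).div (contDiffOn_const.add hE) fun z _ => ?_))
    fun z hz => (highPhaseSq_pos hβ hz.2).ne'
  · fun_prop
  · have := expNegInvGlue.nonneg (z.1 / (2 * z.2))
    positivity

theorem highPhaseSq_eq {β p r : ℝ} (hβ : β = 0 ∨ β = 1) (hp : 0 < p) (hr : 0 < r) :
    highPhaseSq β (p, r) = p * ((1 - β) + β * p ^ 2) * symbSq β (p⁻¹ * r) := by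
  have hE : expNegInvGlue (p / (2 * r)) = Real.exp (-(p⁻¹ * r)) / Real.exp (p⁻¹ * r) := by
    rw [expNegInvGlue_of_pos (by positivity), ← Real.exp_sub]
    congr 1
    field_simp
    norm_num
  have h1 := Real.exp_pos (p⁻¹ * r)
  have h2 := Real.exp_pos (-(p⁻¹ * r))
  rw [highPhaseSq, hE, symbSq, Real.sinh_eq, Real.cosh_eq]
  generalize Real.exp (p⁻¹ * r) = a at *
  generalize Real.exp (-(p⁻¹ * r)) = b at *
  rcases hβ with rfl | rfl
  · field_simp
    ring
  · field_simp
    ring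

theorem highPhaseSq_zero {β r : ℝ} : highPhaseSq β (0, r) = (1 - β) * r + β * r ^ 3 := by
  simp [highPhaseSq]
  ring

theorem exists_high_frequency_bound {β : ℝ} (hβ : β = 0 ∨ β = 1) (d : ℕ) {ϱ : ℝ → ℝ}
    (hϱ : ContDiff ℝ ∞ ϱ) (hϱ0 : ∀ r ≥ 0, r ∉ Set.Icc (1 / 2 : ℝ) 2 → ϱ r = 0)
    (hϱ2 : ϱ 2 = 0) :
    ∃ C > 0, ∀ lam ≥ 1, ∀ t > 0, ∀ x : Euc d,
      ‖∫ η : Euc d, cexp (2 * π * I * ⟪x, η⟫) *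
          (cexp ((-(t * mSymb β (lam * ‖η‖)) : ℝ) * I) * (ϱ ‖η‖ : ℂ))‖
        ≤ C * (t * lam ^ (1 / 2 + β)) ^ (-(d / 2 : ℝ)) := by
  have hβ0 : 0 ≤ β := by rcases hβ with rfl | rfl <;> norm_num
  set φ : ℝ × ℝ → ℝ := fun z => √(highPhaseSq β z)
  have hφ : ContDiffOn ℝ ∞ φ (Set.univ ×ˢ Set.Ioi 0) := contDiffOn_sqrt_highPhaseSq hβ
  set κ : ℝ → ℝ := fun p => √(p * ((1 - β) + β * p ^ 2))
  have hκ0 (p : ℝ) (hp : 0 < p) : 0 < p * ((1 - β) + β * p ^ 2) := by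
    rcases hβ with rfl | rfl
    · simpa using hp
    · simp only [sub_self, one_mul, zero_add]
      positivity
  have hκ (p : ℝ) (hp : 0 < p) : 0 < κ p := Real.sqrt_pos.2 (hκ0 p hp)
  have hφeq (p : ℝ) (hp : 0 < p) (r : ℝ) (hr : r > 0) :
      φ (p, r) = κ p * mSymb β (p⁻¹ * r) := by
    simp only [φ, κ]
    rw [highPhaseSq_eq hβ hp hr, Real.sqrt_mul (hκ0 p hp).le, mSymb_eq_sqrt]
  have hlin (p : ℝ) (r : ℝ) : HasDerivAt (fun s => p⁻¹ * s) p⁻¹ r := by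
    simpa using (hasDerivAt_id r).const_mul p⁻¹
  have hg1 (p : ℝ) (hp : 0 < p) (r : ℝ) (hr : r > 0) :
      HasDerivAt (fun s => κ p * mSymb β (p⁻¹ * s)) (κ p * (mSymbDeriv β (p⁻¹ * r) * p⁻¹)) r :=
    ((hasDerivAt_mSymb hβ0 (mul_pos (inv_pos.2 hp) hr)).comp r (hlin p r)).const_mul _
  have hg2 (p : ℝ) (hp : 0 < p) (r : ℝ) (hr : r > 0) :
      HasDerivAt (fun s => κ p * (mSymbDeriv β (p⁻¹ * s) * p⁻¹))
        (κ p * (mSymbDeriv₂ β (p⁻¹ * r) * p⁻¹ * p⁻¹)) r :=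
    (((hasDerivAt_mSymbDeriv hβ0 (mul_pos (inv_pos.2 hp) hr)).comp r
      (hlin p r)).mul_const p⁻¹).const_mul _
  set W : ℝ → ℝ := fun r => (1 - β) * r + β * r ^ 3
  set W1 : ℝ → ℝ := fun r => (1 - β) + β * (3 * r ^ 2)
  have hW (r : ℝ) (hr : 0 < r) : 0 < W r := by
    simpa only [W, highPhaseSq_zero] using highPhaseSq_pos hβ (z := (0, r)) hr
  have hW1 (r : ℝ) : HasDerivAt W (W1 r) r :=
    (((hasDerivAt_id r).const_mul (1 - β)).add ((hasDerivAt_pow 3 r).const_mul β)).congr_deriv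
      (by simp [W1])
  have hW2 (r : ℝ) : HasDerivAt W1 (β * (6 * r)) r :=
    ((((hasDerivAt_pow 2 r).const_mul 3).const_mul β).const_add (1 - β)).congr_deriv
      (by simp; left; ring)
  have hz0 (r : ℝ) (_ : r > 0) : φ (0, r) = (fun s => √(W s)) r := by
    simp only [φ, W, highPhaseSq_zero]
  have hz1 (r : ℝ) (hr : r > 0) := hasDerivAt_sqrt_comp (hW r hr) (hW1 r)
  have hz2 (r : ℝ) (hr : r > 0) := hasDerivAt_sqrt_comp_deriv (hW r hr) (hW1 r) (hW2 r)
  have hpos : ∀ p ∈ Set.Icc (0 : ℝ) 1, ∀ r > 0,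
      0 < symbSgn β * sndDeriv (sndDeriv φ) (p, r) := fun p hp r hr => by
    obtain h | h := hp.1.eq_or_lt
    · rw [← h, sndDeriv_sndDeriv_eq_of_hasDerivAt hφ hz0 hz1 hz2 hr, ← mul_div_assoc]
      have h1 := hW r hr
      have h2 := Real.sqrt_pos.2 h1
      refine div_pos ?_ (by positivity)
      rcases hβ with rfl | rfl
      · simp [symbSgn, W, W1]
      · have : 0 < r ^ 4 := by positivity
        simp only [symbSgn, W, W1]
        nlinarith
    · rw [sndDeriv_sndDeriv_eq_of_hasDerivAt hφ (hφeq p h) (hg1 p h) (hg2 p h) hr]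
      have h1 := symbSgn_mul_mSymbDeriv₂_pos hβ (mul_pos (inv_pos.2 h) hr)
      have h2 := hκ p h
      rw [show symbSgn β * (κ p * (mSymbDeriv₂ β (p⁻¹ * r) * p⁻¹ * p⁻¹)) =
        symbSgn β * mSymbDeriv₂ β (p⁻¹ * r) * (κ p * p⁻¹ * p⁻¹) by ring]
      positivity
  have hcont : ContinuousOn (fun z => symbSgn β * sndDeriv (sndDeriv φ) z)
      (Set.Icc (0 : ℝ) 1 ×ˢ Set.Icc (1 / 2 : ℝ) 2) := by
    have ho : IsOpen (Set.univ ×ˢ Set.Ioi 0 : Set (ℝ × ℝ)) := isOpen_univ.prod isOpen_Ioi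
    refine (continuousOn_const.mul
      (contDiffOn_sndDeriv (contDiffOn_sndDeriv hφ ho) ho).continuousOn).mono
      (Set.prod_mono (Set.subset_univ _) fun r hr => ?_)
    exact lt_of_lt_of_le (by norm_num) hr.1
  obtain ⟨z₀, hz₀, hmin⟩ := (isCompact_Icc.prod isCompact_Icc).exists_isMinOn
    ⟨((0 : ℝ), (1 : ℝ)), by norm_num⟩ hcont
  set ε := symbSgn β * sndDeriv (sndDeriv φ) z₀
  have hε : 0 < ε := hpos z₀.1 hz₀.1 z₀.2 (lt_of_lt_of_le (by norm_num) hz₀.2.1)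
  obtain ⟨C, hC, hbd⟩ := exists_radial_oscillatory_bound d hϱ hϱ0 hϱ2 hφ
    (fun p hp r hr => by
      obtain h | h := hp.1.eq_or_lt
      · rw [← h, sndDeriv_eq_of_hasDerivAt hφ hz0 hz1 hr]
        have h1 := Real.sqrt_pos.2 (hW r hr)
        have h2 : 0 < W1 r := by
          rcases hβ with rfl | rfl
          · simp [W1]
          · simp only [W1]
            nlinarith [pow_pos hr 2]
        positivity
      · rw [sndDeriv_eq_of_hasDerivAt hφ (hφeq p h) (hg1 p h) hr]
        have h1 := mSymbDeriv_pos hβ0 (mul_pos (inv_pos.2 h) hr)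
        have h2 := hκ p h
        positivity)
    (symbSgn_eq hβ) (ε := fun _ => ε) (fun p hp r hr => hmin (Set.mk_mem_prod hp hr))
  have hsc : 0 < √ε := by positivity
  refine ⟨C * (√ε)⁻¹, by positivity, fun lam hl t ht x => ?_⟩
  have hl0 : 0 < lam := by linarith
  have hκl : (κ lam⁻¹)⁻¹ = lam ^ (1 / 2 + β) := by
    rcases hβ with rfl | rfl
    · simp [κ, Real.sqrt_eq_rpow, Real.inv_rpow hl0.le]
    · simp only [κ, Real.sqrt_eq_rpow, ← Real.inv_rpow (hκ0 _ (inv_pos.2 hl0)).le]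
      rw [show (lam⁻¹ * (1 - 1 + 1 * lam⁻¹ ^ 2))⁻¹ = lam ^ (3 : ℝ) by
        rw [show (3 : ℝ) = (3 : ℕ) by norm_num, Real.rpow_natCast]
        field_simp
        ring, ← Real.rpow_mul hl0.le]
      norm_num
  have hll : 0 < lam ^ (1 / 2 + β) := by positivity
  have h := hbd lam⁻¹ ⟨by positivity, inv_le_one_of_one_le₀ hl⟩ hε (t * lam ^ (1 / 2 + β))
    (by positivity) x
  refine le_trans (le_of_eq ?_) (h.trans (le_of_eq ?_))
  · congr 1
    refine integral_congr_ae ?_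
    filter_upwards with η
    obtain h0 | h0 := (norm_nonneg η).eq_or_lt
    · rw [hϱ0 _ (norm_nonneg η) (by rw [← h0]; norm_num)]
      simp
    · rw [hφeq _ (inv_pos.2 hl0) _ h0, ← hκl, inv_inv]
      have := hκ _ (inv_pos.2 hl0)
      generalize κ lam⁻¹ = k at this ⊢
      congr 5
      field_simp
  · ring

/-! ### Reduction to the kernel bound -/

section cutoff

variable {χ : ℝ → ℝ}

theorem contDiff_rho (hχ : IsCutoff χ) : ContDiff ℝ ∞ (rho χ) :=
  hχ.1.sub (hχ.1.comp (contDiff_const.mul contDiff_id))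

theorem IsCutoff.eq_zero_of_two_lt (hχ : IsCutoff χ) {r : ℝ} (hr : 2 < r) : χ r = 0 := by
  by_contra h
  exact absurd (hχ.2.2.2.2 h).2 (not_le.2 hr)

theorem IsCutoff.eq_zero_of_two_le (hχ : IsCutoff χ) {r : ℝ} (hr : 2 ≤ r) : χ r = 0 := by
  have hcl : IsClosed {r : ℝ | χ r = 0} := isClosed_eq hχ.1.continuous continuous_const
  have hsub : Set.Ioi (2 : ℝ) ⊆ {r : ℝ | χ r = 0} := fun r hr => hχ.eq_zero_of_two_lt hr
  have := closure_minimal hsub hcl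
  rw [closure_Ioi] at this
  exact this hr

theorem rho_two (hχ : IsCutoff χ) : rho χ 2 = 0 := by
  rw [rho, hχ.eq_zero_of_two_le le_rfl, hχ.eq_zero_of_two_le (by norm_num), sub_zero]

theorem rho_eq_zero (hχ : IsCutoff χ) {r : ℝ} (hr : 0 ≤ r) (h : r ∉ Set.Icc (1 / 2 : ℝ) 2) :
    rho χ r = 0 := by
  obtain h1 | h1 := lt_or_ge r (1 / 2)
  · rw [rho, hχ.2.2.2.1 r ⟨by linarith, by linarith⟩,
      hχ.2.2.2.1 (2 * r) ⟨by linarith, by linarith⟩, sub_self]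
  · have h2 : 2 < r := by
      by_contra h2
      exact h ⟨h1, not_lt.1 h2⟩
    rw [rho, hχ.eq_zero_of_two_lt h2, hχ.eq_zero_of_two_lt (by linarith), sub_zero]

theorem contDiff_rho_norm {d : ℕ} (hχ : IsCutoff χ) {lam : ℝ} (hl : 0 < lam) :
    ContDiff ℝ ∞ fun ξ : Euc d => (rho χ (‖ξ‖ / lam) : ℂ) := by
  refine Complex.ofRealCLM.contDiff.comp (contDiff_iff_contDiffAt.2 fun ξ => ?_)
  obtain rfl | hξ := eq_or_ne ξ 0
  · have h : (fun ξ : Euc d => rho χ (‖ξ‖ / lam)) =ᶠ[nhds 0] fun _ => 0 := by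
      have ho : IsOpen {ξ : Euc d | ‖ξ‖ / lam < 1 / 2} :=
        isOpen_lt (continuous_norm.div_const _) continuous_const
      filter_upwards [ho.mem_nhds (by simp)] with η hη
      exact rho_eq_zero hχ (by positivity) fun h => absurd h.1 (not_le.2 hη)
    exact contDiffAt_const.congr_of_eventuallyEq h
  · exact (contDiff_rho hχ).contDiffAt.comp ξ ((contDiffAt_norm ℝ hξ).div_const lam)

theorem hasCompactSupport_rho_norm {d : ℕ} (hχ : IsCutoff χ) {lam : ℝ} (hl : 0 < lam) :
    HasCompactSupport fun ξ : Euc d => (rho χ (‖ξ‖ / lam) : ℂ) := by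
  refine HasCompactSupport.of_support_subset_isCompact
    (isCompact_closedBall (0 : Euc d) (2 * lam)) fun ξ hξ => ?_
  rw [mem_closedBall_zero_iff]
  by_contra h
  refine hξ ?_
  have h0 : rho χ (‖ξ‖ / lam) = 0 :=
    rho_eq_zero hχ (by positivity) fun h' => h ((div_le_iff₀ hl).1 h'.2)
  simp only [h0, ofReal_zero]

end cutoff

theorem continuous_mSymb (β : ℝ) : Continuous (mSymb β) := by
  rw [show mSymb β = fun y => √(symbSq β y) from funext (mSymb_eq_sqrt β)]
  exact (continuous_iff_continuousAt.2 fun x => (hasDerivAt_symbSq β x).continuousAt).sqrt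

/-- The kernel of `S_{m_β}(t) P_λ`. -/
def kernel (β : ℝ) {d : ℕ} (χ : ℝ → ℝ) (lam t : ℝ) (x : Euc d) : ℂ :=
  ∫ ξ : Euc d, cexp (2 * π * I * ⟪x, ξ⟫) *
    (cexp ((-(t * mSymb β ‖ξ‖) : ℝ) * I) * (rho χ (‖ξ‖ / lam) : ℂ))

theorem propg_proj_eq (β : ℝ) {d : ℕ} {χ : ℝ → ℝ} (hχ : IsCutoff χ) {lam : ℝ} (hl : 0 < lam)
    (t : ℝ) (f : SchwartzMap (Euc d) ℂ) (x : Euc d) :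
    propg β t (proj χ lam ⇑f) x = ∫ y, f y * kernel β χ lam t (x - y) := by
  set r : Euc d → ℂ := fun ξ => (rho χ (‖ξ‖ / lam) : ℂ)
  have hr : ContDiff ℝ ∞ r := contDiff_rho_norm hχ hl
  have hrs : HasCompactSupport r := hasCompactSupport_rho_norm hχ hl
  have hinv : 𝓕 (proj χ lam ⇑f) = fun ξ => r ξ * 𝓕 (⇑f) ξ := by
    have hg : ContDiff ℝ ∞ fun ξ => r ξ * 𝓕 (⇑f) ξ := by
      rw [← SchwartzMap.fourier_coe]
      exact hr.mul (𝓕 f).smooth'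
    have hgs : HasCompactSupport fun ξ => r ξ * 𝓕 (⇑f) ξ := hrs.mul_right
    set g : SchwartzMap (Euc d) ℂ := hgs.toSchwartzMap hg
    have h1 : 𝓕 (𝓕⁻ g) = g := FourierTransform.fourier_fourierInv_eq g
    calc 𝓕 (proj χ lam ⇑f) = 𝓕 (𝓕⁻ (⇑g)) := rfl
      _ = ⇑(𝓕 (𝓕⁻ g) : SchwartzMap (Euc d) ℂ) := by rw [SchwartzMap.fourier_coe, SchwartzMap.fourierInv_coe]
      _ = ⇑g := by rw [h1]
      _ = _ := rfl
  set a : Euc d → ℂ := fun ξ => cexp (2 * π * I * ⟪x, ξ⟫) *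
    (cexp ((-(t * mSymb β ‖ξ‖) : ℝ) * I) * r ξ)
  have ha : Integrable a := by
    refine Continuous.integrable_of_hasCompactSupport ?_ ?_
    · have := continuous_mSymb β
      have := hr.continuous
      fun_prop
    · exact (hrs.mul_left).mul_left
  have hflip := VectorFourier.integral_fourierIntegral_smul_eq_flip (L := innerₗ (Euc d))
    Real.continuous_fourierChar continuous_inner (f.integrable (μ := volume)) ha
  calc propg β t (proj χ lam ⇑f) x = ∫ ξ, 𝓕 (⇑f) ξ • a ξ := by
        rw [propg, mulOp, Real.fourierInv_eq']
        refine integral_congr_ae (Filter.Eventually.of_forall fun ξ => ?_)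
        simp only [hinv, a, smul_eq_mul]
        rw [real_inner_comm ξ x]
        push_cast
        ring_nf
    _ = ∫ y, f y • 𝓕 a y := by simpa using! hflip
    _ = _ := by
      refine integral_congr_ae (Filter.Eventually.of_forall fun y => ?_)
      simp only [smul_eq_mul]
      congr 1
      rw [Real.fourier_eq', kernel]
      refine integral_congr_ae (Filter.Eventually.of_forall fun ξ => ?_)
      simp only [a, r, smul_eq_mul, ← mul_assoc, ← Complex.exp_add]
      rw [inner_sub_left, real_inner_comm ξ y]
      push_cast
      ring_nf

theorem norm_kernel_neg (β : ℝ) {d : ℕ} (χ : ℝ → ℝ) (lam t : ℝ) (x : Euc d) :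
    ‖kernel β χ lam (-t) x‖ = ‖kernel β χ lam t (-x)‖ := by
  rw [← Complex.norm_conj, kernel, ← integral_conj]
  congr 1
  refine integral_congr_ae (Filter.Eventually.of_forall fun ξ => ?_)
  simp only [map_mul, ← Complex.exp_conj, conj_ofReal, conj_I, inner_neg_left]
  push_cast
  simp only [map_ofNat]
  ring_nf

theorem kernel_eq_smul (β : ℝ) {d : ℕ} (χ : ℝ → ℝ) {lam : ℝ} (hl : 0 < lam) (t : ℝ) (x : Euc d) :
    kernel β χ lam t x = (lam ^ d : ℝ) • ∫ η : Euc d, cexp (2 * π * I * ⟪lam • x, η⟫) *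
      (cexp ((-(t * mSymb β (lam * ‖η‖)) : ℝ) * I) * (rho χ ‖η‖ : ℂ)) := by
  have h := Measure.integral_comp_smul_of_nonneg (volume : Measure (Euc d))
    (fun ξ : Euc d => cexp (2 * π * I * ⟪x, ξ⟫) *
      (cexp ((-(t * mSymb β ‖ξ‖) : ℝ) * I) * (rho χ (‖ξ‖ / lam) : ℂ))) lam (hR := hl.le)
  rw [finrank_euclideanSpace_fin, eq_inv_smul_iff₀ (by positivity)] at h
  rw [kernel, ← h]
  congr 1
  refine integral_congr_ae (Filter.Eventually.of_forall fun η => ?_)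
  simp only [norm_smul, Real.norm_of_nonneg hl.le, inner_smul_left, inner_smul_right,
    conj_trivial, mul_div_cancel_left₀ _ hl.ne']

theorem eLpNorm_propg_proj_le (β : ℝ) {d : ℕ} {χ : ℝ → ℝ} (hχ : IsCutoff χ) {lam : ℝ}
    (hl : 0 < lam) {t B : ℝ} (hB : ∀ x : Euc d, ‖kernel β χ lam t x‖ ≤ B)
    (f : SchwartzMap (Euc d) ℂ) :
    eLpNorm (propg β t (proj χ lam ⇑f)) ⊤ volume ≤ ENNReal.ofReal B * eLpNorm (⇑f) 1 volume := by
  have hB0 : 0 ≤ B := (norm_nonneg _).trans (hB 0)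
  have hf : Integrable (⇑f) volume := f.integrable
  have h1 : eLpNorm (⇑f) 1 volume = ENNReal.ofReal (∫ y, ‖f y‖) := by
    rw [eLpNorm_one_eq_lintegral_enorm, ofReal_integral_norm_eq_lintegral_enorm hf]
  rw [h1, ← ENNReal.ofReal_mul hB0, eLpNorm_exponent_top]
  refine eLpNormEssSup_le_of_ae_bound (Filter.Eventually.of_forall fun x => ?_)
  rw [propg_proj_eq β hχ hl]
  calc ‖∫ y, f y * kernel β χ lam t (x - y)‖ ≤ ∫ y, ‖f y‖ * B :=
        norm_integral_le_of_norm_le (hf.norm.mul_const B) (Filter.Eventually.of_forall fun y => by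
          rw [norm_mul]
          gcongr
          exact hB _)
    _ = B * ∫ y, ‖f y‖ := by rw [integral_mul_const, mul_comm]

theorem one_le_jap (x : ℝ) : 1 ≤ jap x :=
  Real.one_le_sqrt.2 (by nlinarith [sq_nonneg x])

theorem self_le_jap (x : ℝ) : x ≤ jap x :=
  Real.le_sqrt_of_sq_le (by linarith)

theorem jap_le_two_of_le_one {β lam : ℝ} (hβ : β = 0 ∨ β = 1) (hl : 0 < lam) (hl1 : lam ≤ 1) :
    jap (√β * lam) ≤ 2 := by
  refine Real.sqrt_le_iff.2 ⟨by norm_num, ?_⟩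
  rcases hβ with rfl | rfl
  · norm_num
  · rw [Real.sqrt_one]
    nlinarith

theorem jap_le_two_mul_rpow {β lam : ℝ} (hβ : β = 0 ∨ β = 1) (hl : 1 ≤ lam) :
    jap (√β * lam) ≤ 2 * lam ^ β := by
  rcases hβ with rfl | rfl
  · refine Real.sqrt_le_iff.2 ⟨by norm_num, ?_⟩
    norm_num
  · rw [Real.rpow_one, Real.sqrt_one]
    refine Real.sqrt_le_iff.2 ⟨by positivity, ?_⟩
    nlinarith

theorem low_le_cFactor {β lam : ℝ} (hβ : β = 0 ∨ β = 1) (d : ℕ) (hl : 0 < lam) (hl1 : lam ≤ 1)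
    {t : ℝ} (ht : 0 < t) :
    lam ^ d * (lam⁻¹ * (t * lam) ^ (-(d / 2 : ℝ))) ≤
      2 ^ (d / 2 : ℝ) * (cFactor β d lam * t ^ (-(d : ℝ) / 2)) := by
  have h1 : (2 : ℝ) ^ (-(d : ℝ) / 2) ≤ jap (√β * lam) ^ (-(d : ℝ) / 2) :=
    Real.rpow_le_rpow_of_nonpos (by linarith [one_le_jap (√β * lam)])
      (jap_le_two_of_le_one hβ hl hl1) (by have := d.cast_nonneg (α := ℝ); linarith)
  have h2 : 1 ≤ jap lam ^ ((d : ℝ) / 4 + 1) :=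
    Real.one_le_rpow (one_le_jap lam) (by positivity)
  have h3 : (2 : ℝ) ^ (d / 2 : ℝ) * 2 ^ (-(d : ℝ) / 2) = 1 := by
    rw [← Real.rpow_add two_pos]
    ring_nf
    simp
  have h4 : lam ^ d * (lam⁻¹ * lam ^ (-(d / 2 : ℝ))) = lam ^ ((d : ℝ) / 2 - 1) := by
    rw [← Real.rpow_natCast, ← Real.rpow_neg_one lam, ← Real.rpow_add hl, ← Real.rpow_add hl]
    ring_nf
  calc lam ^ d * (lam⁻¹ * (t * lam) ^ (-(d / 2 : ℝ)))
      = lam ^ ((d : ℝ) / 2 - 1) * (2 ^ (d / 2 : ℝ) * 2 ^ (-(d : ℝ) / 2)) * 1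
          * t ^ (-(d : ℝ) / 2) := by
        rw [h3, Real.mul_rpow ht.le hl.le, ← h4, neg_div]
        ring
    _ ≤ lam ^ ((d : ℝ) / 2 - 1) * (2 ^ (d / 2 : ℝ) * jap (√β * lam) ^ (-(d : ℝ) / 2))
          * jap lam ^ ((d : ℝ) / 4 + 1) * t ^ (-(d : ℝ) / 2) := by
        have := one_le_jap (√β * lam)
        gcongr
    _ = _ := by
        rw [cFactor]
        ring

theorem high_le_cFactor {β lam : ℝ} (hβ : β = 0 ∨ β = 1) (d : ℕ) (hl : 1 ≤ lam)
    {t : ℝ} (ht : 0 < t) :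
    lam ^ d * (t * lam ^ (1 / 2 + β)) ^ (-(d / 2 : ℝ)) ≤
      2 ^ (d / 2 : ℝ) * (cFactor β d lam * t ^ (-(d : ℝ) / 2)) := by
  have hl0 : 0 < lam := by linarith
  have hj := one_le_jap (√β * lam)
  have h1 : (2 * lam ^ β) ^ (-(d : ℝ) / 2) ≤ jap (√β * lam) ^ (-(d : ℝ) / 2) :=
    Real.rpow_le_rpow_of_nonpos (by linarith) (jap_le_two_mul_rpow hβ hl)
      (by have := d.cast_nonneg (α := ℝ); linarith)
  have h2 : lam ^ ((d : ℝ) / 4 + 1) ≤ jap lam ^ ((d : ℝ) / 4 + 1) :=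
    Real.rpow_le_rpow hl0.le (self_le_jap lam) (by positivity)
  have h3 : (2 : ℝ) ^ (d / 2 : ℝ) * 2 ^ (-(d : ℝ) / 2) = 1 := by
    rw [← Real.rpow_add two_pos]
    ring_nf
    simp
  have h4 : lam ^ d * (lam ^ (1 / 2 + β)) ^ (-(d / 2 : ℝ)) =
      lam ^ ((d : ℝ) / 2 - 1) * (lam ^ β) ^ (-(d : ℝ) / 2) * lam ^ ((d : ℝ) / 4 + 1) := by
    rw [← Real.rpow_natCast, ← Real.rpow_mul hl0.le, ← Real.rpow_mul hl0.le,
      ← Real.rpow_add hl0, ← Real.rpow_add hl0, ← Real.rpow_add hl0]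
    ring_nf
  calc lam ^ d * (t * lam ^ (1 / 2 + β)) ^ (-(d / 2 : ℝ))
      = lam ^ ((d : ℝ) / 2 - 1) * (2 ^ (d / 2 : ℝ) * (2 * lam ^ β) ^ (-(d : ℝ) / 2))
          * lam ^ ((d : ℝ) / 4 + 1) * t ^ (-(d : ℝ) / 2) := by
        rw [Real.mul_rpow ht.le (by positivity), Real.mul_rpow two_pos.le (by positivity),
          ← mul_assoc (2 ^ (d / 2 : ℝ) : ℝ), h3, one_mul, ← h4, neg_div]
        ring
    _ ≤ lam ^ ((d : ℝ) / 2 - 1) * (2 ^ (d / 2 : ℝ) * jap (√β * lam) ^ (-(d : ℝ) / 2))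
          * jap lam ^ ((d : ℝ) / 4 + 1) * t ^ (-(d : ℝ) / 2) := by
        gcongr
    _ = _ := by
        rw [cFactor]
        ring

theorem exists_norm_kernel_le {β : ℝ} (hβ : β = 0 ∨ β = 1) (d : ℕ) {χ : ℝ → ℝ}
    (hχ : IsCutoff χ) :
    ∃ C > 0, ∀ lam > 0, ∀ t ≠ 0, ∀ x : Euc d,
      ‖kernel β χ lam t x‖ ≤ C * cFactor β d lam * |t| ^ (-(d : ℝ) / 2) := by
  obtain ⟨C₁, hC₁, h₁⟩ := exists_low_frequency_bound hβ d (contDiff_rho hχ)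
    (fun r => rho_eq_zero hχ) (rho_two hχ)
  obtain ⟨C₂, hC₂, h₂⟩ := exists_high_frequency_bound hβ d (contDiff_rho hχ)
    (fun r => rho_eq_zero hχ) (rho_two hχ)
  refine ⟨max C₁ C₂ * 2 ^ (d / 2 : ℝ), by positivity, fun lam hl => ?_⟩
  have hc : 0 < cFactor β d lam := by
    have := one_le_jap (√β * lam)
    have := one_le_jap lam
    unfold cFactor
    positivity
  have key : ∀ t > 0, ∀ x : Euc d, ‖kernel β χ lam t x‖ ≤
      max C₁ C₂ * 2 ^ (d / 2 : ℝ) * cFactor β d lam * t ^ (-(d : ℝ) / 2) := fun t ht x => by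
    rw [kernel_eq_smul β χ hl, norm_smul, Real.norm_of_nonneg (by positivity)]
    obtain hl1 | hl1 := le_total lam 1
    · calc _ ≤ lam ^ d * (C₁ * (lam⁻¹ * (t * lam) ^ (-(d / 2 : ℝ)))) := by
            gcongr
            exact h₁ lam hl hl1 t ht _
        _ = C₁ * (lam ^ d * (lam⁻¹ * (t * lam) ^ (-(d / 2 : ℝ)))) := by ring
        _ ≤ max C₁ C₂ * (2 ^ (d / 2 : ℝ) * (cFactor β d lam * t ^ (-(d : ℝ) / 2))) :=
            mul_le_mul (le_max_left _ _) (low_le_cFactor hβ d hl hl1 ht) (by positivity) (by positivity)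
        _ = _ := by ring
    · calc _ ≤ lam ^ d * (C₂ * (t * lam ^ (1 / 2 + β)) ^ (-(d / 2 : ℝ))) := by
            gcongr
            exact h₂ lam hl1 t ht _
        _ = C₂ * (lam ^ d * (t * lam ^ (1 / 2 + β)) ^ (-(d / 2 : ℝ))) := by ring
        _ ≤ max C₁ C₂ * (2 ^ (d / 2 : ℝ) * (cFactor β d lam * t ^ (-(d : ℝ) / 2))) :=
            mul_le_mul (le_max_right _ _) (high_le_cFactor hβ d hl1 ht) (by positivity) (by positivity)
        _ = _ := by ring
  intro t ht x
  obtain h | h := lt_or_gt_of_ne ht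
  · rw [abs_of_neg h, ← neg_neg t, norm_kernel_neg, neg_neg]
    exact key (-t) (neg_pos.2 h) (-x)
  · rw [abs_of_pos h]
    exact key t h x

end DispersiveKernel

/-- Theorem 1 (localised dispersive estimate): for `β ∈ {0,1}`, `d ≥ 1` and `λ = 2^n ∈ 2^ℤ`,
`‖S_{m_β}(±t) P_λ f‖_{L^∞} ≤ C c_{β,d}(λ) |t|^{-d/2} ‖f‖_{L^1}` for all Schwartz `f`,
with `C` independent of `λ`, `t` and `f`. -/
theorem dispersive_estimate
    (β : ℝ) (hβ : β = 0 ∨ β = 1) (d : ℕ) (hd : 1 ≤ d)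
    (χ : ℝ → ℝ) (hχ : IsCutoff χ) :
    ∃ C > 0, ∀ (n : ℤ) (t : ℝ), t ≠ 0 → ∀ σ : ℝ, σ = 1 ∨ σ = -1 →
      ∀ f : SchwartzMap (Euc d) ℂ,
        eLpNorm (propg β (σ * t) (proj χ ((2 : ℝ) ^ n) ⇑f)) ∞ volume ≤
          ENNReal.ofReal (C * cFactor β d ((2 : ℝ) ^ n) * |t| ^ (-(d : ℝ) / 2)) *
            eLpNorm (⇑f) 1 volume := by
  obtain ⟨C, hC, h⟩ := exists_norm_kernel_le hβ d hχ
  refine ⟨C, hC, fun n t ht σ hσ f => eLpNorm_propg_proj_le β hχ (by positivity) (fun x => ?_) f⟩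
  have hσt : |σ * t| = |t| := by rcases hσ with rfl | rfl <;> simp
  have hσt0 : σ * t ≠ 0 := by rcases hσ with rfl | rfl <;> simpa using ht
  rw [← hσt]
  exact h _ (by positivity) _ hσt0 x
end
end

section
/- (Van der Corput) There is a constant C > 0 with the following property: for all real a < b, all t > 0, all A > 0, every g ∈ C¹(a,b) and every ψ ∈ C²(a,b) with |ψ''(r)| ≥ A for all r ∈ (a,b), one has |∫_a^b e^{i t ψ(r)} g(r) dr| ≤ C (A t)^{-1/2} [ |g(b)| + ∫_a^b |g'(r)| dr ], whenever the integrals are finite. The constant C is independent of a, b and t. -/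
noncomputable section

open MeasureTheory Complex Real

/-- First-derivative test: if `φ'` is monotone on `[a,b]` and `|φ'| ≥ l > 0` there, then
`|∫_a^b e^{iφ}| ≤ 4 / l`. -/
lemma norm_integral_exp_le_of_le_abs_deriv {a b l : ℝ} (hab : a ≤ b) (hl : 0 < l)
    {φ φ' φ'' : ℝ → ℝ}
    (hφ : ∀ r ∈ Set.Icc a b, HasDerivWithinAt φ (φ' r) (Set.Icc a b) r)
    (hφ' : ∀ r ∈ Set.Icc a b, HasDerivWithinAt φ' (φ'' r) (Set.Icc a b) r)
    (hφ'' : ContinuousOn φ'' (Set.Icc a b))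
    (hnonneg : ∀ r ∈ Set.Icc a b, 0 ≤ φ'' r)
    (hle : ∀ r ∈ Set.Icc a b, l ≤ |φ' r|) :
    ‖∫ r in a..b, Complex.exp (I * φ r)‖ ≤ 4 / l := by
  have hne : ∀ r ∈ Set.Icc a b, φ' r ≠ 0 := fun r hr h => by
    have := hle r hr
    rw [h, abs_zero] at this
    linarith
  have hneC : ∀ r ∈ Set.Icc a b, (φ' r : ℂ) ≠ 0 := fun r hr => ofReal_ne_zero.2 (hne r hr)
  have cφ : ContinuousOn φ (Set.Icc a b) := fun r hr => (hφ r hr).continuousWithinAt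
  have cφ' : ContinuousOn φ' (Set.Icc a b) := fun r hr => (hφ' r hr).continuousWithinAt
  have cφC : ContinuousOn (fun r => (φ r : ℂ)) (Set.Icc a b) :=
    continuous_ofReal.comp_continuousOn cφ
  have cφC' : ContinuousOn (fun r => (φ' r : ℂ)) (Set.Icc a b) :=
    continuous_ofReal.comp_continuousOn cφ'
  have cφC'' : ContinuousOn (fun r => (φ'' r : ℂ)) (Set.Icc a b) :=
    continuous_ofReal.comp_continuousOn hφ''
  have cu : ContinuousOn (fun r => Complex.exp (I * φ r)) (Set.Icc a b) :=
    (continuousOn_const.mul cφC).cexp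
  have cv : ContinuousOn (fun r => Complex.exp (I * φ r) * (I * φ'' r / (φ' r) ^ 2))
      (Set.Icc a b) :=
    cu.mul ((continuousOn_const.mul cφC'').div (cφC'.pow 2) fun r hr => pow_ne_zero 2 (hneC r hr))
  have cw : ContinuousOn (fun r => φ'' r / (φ' r) ^ 2) (Set.Icc a b) :=
    hφ''.div (cφ'.pow 2) fun r hr => pow_ne_zero 2 (hne r hr)
  have iu := cu.intervalIntegrable_of_Icc (μ := volume) hab
  have iv := cv.intervalIntegrable_of_Icc (μ := volume) hab
  have iw := cw.intervalIntegrable_of_Icc (μ := volume) hab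
  have parts : ∫ r in a..b, (Complex.exp (I * φ r) +
        Complex.exp (I * φ r) * (I * φ'' r / (φ' r) ^ 2)) =
      Complex.exp (I * φ b) * (-I / φ' b) - Complex.exp (I * φ a) * (-I / φ' a) := by
    refine intervalIntegral.integral_eq_sub_of_hasDerivAt_of_le
      (f := fun r => Complex.exp (I * φ r) * (-I / φ' r)) hab
      (cu.mul (continuousOn_const.div cφC' hneC)) (fun r hr => ?_) (iu.add iv)
    have hr' := Set.Ioo_subset_Icc_self hr
    have nhds := Icc_mem_nhds hr.1 hr.2
    have d1 := (((hφ r hr').hasDerivAt nhds).ofReal_comp.const_mul I).cexp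
    have d2 := (hasDerivAt_const r (-I)).div ((hφ' r hr').hasDerivAt nhds).ofReal_comp (hneC r hr')
    refine (d1.mul d2).congr_deriv ?_
    have := hneC r hr'
    simp only [Pi.div_apply]
    field_simp
    linear_combination (-(φ' r : ℂ) ^ 2) * I_sq
  have parts' : ∫ r in a..b, φ'' r / (φ' r) ^ 2 = -(φ' b)⁻¹ - -(φ' a)⁻¹ := by
    refine intervalIntegral.integral_eq_sub_of_hasDerivAt_of_le
      (f := fun r => -(φ' r)⁻¹) hab (cφ'.inv₀ hne).neg (fun r hr => ?_) iw
    have hr' := Set.Ioo_subset_Icc_self hr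
    refine (((hφ' r hr').hasDerivAt (Icc_mem_nhds hr.1 hr.2)).inv
      (hne r hr')).neg.congr_deriv ?_
    ring
  have inv_le : ∀ r ∈ Set.Icc a b, |(φ' r)⁻¹| ≤ 1 / l := fun r hr => by
    rw [abs_inv, ← one_div]
    exact one_div_le_one_div_of_le hl (hle r hr)
  have hboundary : ∀ r ∈ Set.Icc a b, ‖Complex.exp (I * φ r) * (-I / φ' r)‖ ≤ 1 / l :=
    fun r hr => by
      simpa [norm_exp_I_mul_ofReal] using inv_le r hr
  have hv : ‖∫ r in a..b, Complex.exp (I * φ r) * (I * φ'' r / (φ' r) ^ 2)‖ ≤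
      ∫ r in a..b, φ'' r / (φ' r) ^ 2 := by
    refine intervalIntegral.norm_integral_le_of_norm_le hab (ae_of_all _ fun r hr => ?_) iw
    have := hnonneg r (Set.Ioc_subset_Icc_self hr)
    simp [norm_exp_I_mul_ofReal, abs_of_nonneg this]
  rw [intervalIntegral.integral_add iu iv] at parts
  have ha := Set.left_mem_Icc.2 hab
  have hb := Set.right_mem_Icc.2 hab
  rw [eq_sub_of_add_eq parts]
  have h1 := norm_sub_le (Complex.exp (I * φ b) * (-I / φ' b) -
    Complex.exp (I * φ a) * (-I / φ' a))
    (∫ r in a..b, Complex.exp (I * φ r) * (I * φ'' r / (φ' r) ^ 2))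
  have h2 := norm_sub_le (Complex.exp (I * φ b) * (-I / φ' b))
    (Complex.exp (I * φ a) * (-I / φ' a))
  have h3 := abs_le.1 (inv_le a ha)
  have h4 := abs_le.1 (inv_le b hb)
  have h5 : 4 / l = 4 * (1 / l) := by ring
  linarith [hboundary a ha, hboundary b hb]

/-- A function whose slopes are at least `m` is bounded away from zero linearly in the
distance to some point of the interval. -/
lemma exists_mul_abs_sub_le_abs {a b m : ℝ} (hab : a ≤ b) {f : ℝ → ℝ}
    (hf : ContinuousOn f (Set.Icc a b))
    (hslope : ∀ x ∈ Set.Icc a b, ∀ y ∈ Set.Icc a b, x ≤ y → m * (y - x) ≤ f y - f x) :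
    ∃ c ∈ Set.Icc a b, ∀ r ∈ Set.Icc a b, m * |r - c| ≤ |f r| := by
  have ha := Set.left_mem_Icc.2 hab
  have hb := Set.right_mem_Icc.2 hab
  by_cases h1 : 0 ≤ f a
  · refine ⟨a, ha, fun r hr => ?_⟩
    rw [abs_of_nonneg (sub_nonneg.2 hr.1)]
    exact le_trans (by linarith [hslope a ha r hr hr.1]) (le_abs_self _)
  by_cases h2 : f b ≤ 0
  · refine ⟨b, hb, fun r hr => ?_⟩
    rw [abs_of_nonpos (sub_nonpos.2 hr.2)]
    exact le_trans (by linarith [hslope r hr b hb hr.2]) (neg_le_abs _)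
  obtain ⟨c, hc, hc0⟩ := intermediate_value_Icc hab hf ⟨(not_le.1 h1).le, (not_le.1 h2).le⟩
  refine ⟨c, hc, fun r hr => ?_⟩
  rcases le_total c r with h | h
  · rw [abs_of_nonneg (sub_nonneg.2 h)]
    exact le_trans (by linarith [hslope c hc r hr h]) (le_abs_self _)
  · rw [abs_of_nonpos (sub_nonpos.2 h)]
    exact le_trans (by linarith [hslope r hr c hc h]) (neg_le_abs _)

/-- Second-derivative test: if `φ'' ≥ m` on `[a,b]` and `m δ² = 1`, then
`|∫_a^b e^{iφ}| ≤ 10 δ`. -/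
lemma norm_integral_exp_le_of_le_second_deriv {a b m δ : ℝ} (hab : a ≤ b) (hm : 0 < m)
    (hδ : 0 < δ) (hmδ : m * δ ^ 2 = 1) {φ φ' φ'' : ℝ → ℝ}
    (hφ : ∀ r ∈ Set.Icc a b, HasDerivWithinAt φ (φ' r) (Set.Icc a b) r)
    (hφ' : ∀ r ∈ Set.Icc a b, HasDerivWithinAt φ' (φ'' r) (Set.Icc a b) r)
    (hφ'' : ContinuousOn φ'' (Set.Icc a b))
    (hle : ∀ r ∈ Set.Icc a b, m ≤ φ'' r) :
    ‖∫ r in a..b, Complex.exp (I * φ r)‖ ≤ 10 * δ := by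
  have cφ' : ContinuousOn φ' (Set.Icc a b) := fun r hr => (hφ' r hr).continuousWithinAt
  have hd : ∀ r ∈ interior (Set.Icc a b), HasDerivAt φ' (φ'' r) r := fun r hr => by
    rw [interior_Icc] at hr
    exact (hφ' r (Set.Ioo_subset_Icc_self hr)).hasDerivAt (Icc_mem_nhds hr.1 hr.2)
  obtain ⟨c, hc, hdist⟩ := exists_mul_abs_sub_le_abs hab cφ'
    ((convex_Icc a b).mul_sub_le_image_sub_of_le_deriv cφ'
      (fun r hr => (hd r hr).differentiableAt.differentiableWithinAt)
      fun r hr => (hd r hr).deriv ▸ hle r (interior_subset hr))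
  have cu : ContinuousOn (fun r => Complex.exp (I * φ r)) (Set.Icc a b) :=
    (continuousOn_const.mul (continuous_ofReal.comp_continuousOn
      fun r hr => (hφ r hr).continuousWithinAt)).cexp
  have far : ∀ x y, a ≤ x → x ≤ y → y ≤ b → (∀ r ∈ Set.Icc x y, δ ≤ |r - c|) →
      ‖∫ r in x..y, Complex.exp (I * φ r)‖ ≤ 4 * δ := by
    intro x y hax hxy hyb hr
    have hsub : Set.Icc x y ⊆ Set.Icc a b := Set.Icc_subset_Icc hax hyb
    have := norm_integral_exp_le_of_le_abs_deriv hxy (mul_pos hm hδ)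
      (fun r hr => (hφ r (hsub hr)).mono hsub) (fun r hr => (hφ' r (hsub hr)).mono hsub)
      (hφ''.mono hsub) (fun r hr => hm.le.trans (hle r (hsub hr)))
      (fun r h => (mul_le_mul_of_nonneg_left (hr r h) hm.le).trans (hdist r (hsub h)))
    refine this.trans_eq ?_
    rw [div_eq_iff (by positivity)]
    linear_combination (-4) * hmδ
  obtain ⟨p, hap, hpc, hpδ, hleft⟩ : ∃ p, a ≤ p ∧ p ≤ c ∧ c - δ ≤ p ∧
      ‖∫ r in a..p, Complex.exp (I * φ r)‖ ≤ 4 * δ := by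
    rcases le_total a (c - δ) with h | h
    · refine ⟨c - δ, h, by linarith, le_rfl, far _ _ le_rfl h (by linarith [hc.2]) fun r hr => ?_⟩
      exact le_trans (by linarith [hr.2]) (neg_le_abs _)
    · exact ⟨a, le_rfl, hc.1, h, by simpa using hδ.le⟩
  obtain ⟨q, hqb, hcq, hqδ, hright⟩ : ∃ q, q ≤ b ∧ c ≤ q ∧ q ≤ c + δ ∧
      ‖∫ r in q..b, Complex.exp (I * φ r)‖ ≤ 4 * δ := by
    rcases le_total (c + δ) b with h | h
    · refine ⟨c + δ, h, by linarith, le_rfl, far _ _ (by linarith [hc.1]) h le_rfl fun r hr => ?_⟩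
      exact le_trans (by linarith [hr.1]) (le_abs_self _)
    · exact ⟨b, le_rfl, hc.2, h, by simpa using hδ.le⟩
  have hmid : ‖∫ r in p..q, Complex.exp (I * φ r)‖ ≤ 2 * δ := by
    refine (intervalIntegral.norm_integral_le_of_norm_le_const (C := 1)
      fun r _ => (norm_exp_I_mul_ofReal _).le).trans ?_
    rw [abs_of_nonneg (by linarith)]
    linarith
  have int : ∀ x y, a ≤ x → x ≤ y → y ≤ b →
      IntervalIntegrable (fun r => Complex.exp (I * φ r)) volume x y := fun x y hx hxy hy =>
    (cu.mono (Set.Icc_subset_Icc hx hy)).intervalIntegrable_of_Icc hxy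
  have hpq := hpc.trans hcq
  rw [← intervalIntegral.integral_add_adjacent_intervals (int a p le_rfl hap (hpq.trans hqb))
      (int p b hap (hpq.trans hqb) le_rfl),
    ← intervalIntegral.integral_add_adjacent_intervals (int p q hap hpq hqb)
      (int q b (hap.trans hpq) hqb le_rfl)]
  refine (norm_add_le _ _).trans ?_
  linarith [norm_add_le (∫ r in p..q, Complex.exp (I * φ r)) (∫ r in q..b, Complex.exp (I * φ r))]

/-- A continuous function on `[a,b]` with `|f| ≥ m > 0` on `(a,b)` satisfies `f ≥ m` on `[a,b]`
or `f ≤ -m` on `[a,b]`. -/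
lemma le_or_le_neg_of_le_abs {a b m : ℝ} (hab : a < b) (hm : 0 < m) {f : ℝ → ℝ}
    (hf : ContinuousOn f (Set.Icc a b)) (hle : ∀ r ∈ Set.Ioo a b, m ≤ |f r|) :
    (∀ r ∈ Set.Icc a b, m ≤ f r) ∨ (∀ r ∈ Set.Icc a b, f r ≤ -m) := by
  have hle' : ∀ r ∈ Set.Icc a b, m ≤ |f r| := by
    rw [← closure_Ioo hab.ne] at hf ⊢
    exact fun r hr => le_on_closure hle continuousOn_const hf.abs hr
  by_contra! h
  obtain ⟨⟨x, hx, hxm⟩, y, hy, hym⟩ := h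
  have hx0 : f x ≤ 0 := by
    rcases le_abs.1 (hle' x hx) with h | h <;> linarith
  have hy0 : 0 ≤ f y := by
    rcases le_abs.1 (hle' y hy) with h | h <;> linarith
  obtain ⟨z, hz, hz0⟩ := isPreconnected_Icc.intermediate_value hx hy hf ⟨hx0, hy0⟩
  have := hle' z hz
  rw [hz0, abs_zero] at this
  linarith

/-- Second-derivative test for phases of either convexity. -/
lemma norm_integral_exp_le_of_le_abs_second_deriv {a b m δ : ℝ} (hab : a < b) (hm : 0 < m)
    (hδ : 0 < δ) (hmδ : m * δ ^ 2 = 1) {φ φ' φ'' : ℝ → ℝ}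
    (hφ : ∀ r ∈ Set.Icc a b, HasDerivWithinAt φ (φ' r) (Set.Icc a b) r)
    (hφ' : ∀ r ∈ Set.Icc a b, HasDerivWithinAt φ' (φ'' r) (Set.Icc a b) r)
    (hφ'' : ContinuousOn φ'' (Set.Icc a b))
    (hle : ∀ r ∈ Set.Ioo a b, m ≤ |φ'' r|) :
    ‖∫ r in a..b, Complex.exp (I * φ r)‖ ≤ 10 * δ := by
  rcases le_or_le_neg_of_le_abs hab hm hφ'' hle with h | h
  · exact norm_integral_exp_le_of_le_second_deriv hab.le hm hδ hmδ hφ hφ' hφ'' h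
  · have key := norm_integral_exp_le_of_le_second_deriv hab.le hm hδ hmδ
      (fun r hr => (hφ r hr).neg) (fun r hr => (hφ' r hr).neg) hφ''.neg
      (fun r hr => le_neg_of_le_neg (h r hr))
    rw [← norm_conj, ← intervalIntegral.intervalIntegral_conj]
    simpa [← Complex.exp_conj] using key

/-- If all primitives `∫_a^x u` are bounded by `M`, then
`|∫_a^b u g| ≤ M (|g(b)| + ∫_a^b |g'|)`. -/
lemma norm_integral_mul_le_of_norm_primitive_le {a b M : ℝ} (hab : a ≤ b) {u g g' : ℝ → ℂ}
    (hu : ContinuousOn u (Set.Icc a b))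
    (hg : ∀ r ∈ Set.Icc a b, HasDerivWithinAt g (g' r) (Set.Icc a b) r)
    (hg' : ContinuousOn g' (Set.Icc a b))
    (hM : ∀ x ∈ Set.Icc a b, ‖∫ r in a..x, u r‖ ≤ M) :
    ‖∫ r in a..b, u r * g r‖ ≤ M * (‖g b‖ + ∫ r in a..b, ‖g' r‖) := by
  have iu := hu.intervalIntegrable_of_Icc (μ := volume) hab
  have ig' := hg'.intervalIntegrable_of_Icc (μ := volume) hab
  have parts := intervalIntegral.integral_mul_deriv_eq_deriv_mul_of_hasDerivAt
    (a := a) (b := b) (u := g) (u' := g') (v := fun x => ∫ r in a..x, u r) (v' := u)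
    (by rw [Set.uIcc_of_le hab]; exact fun r hr => (hg r hr).continuousWithinAt)
    (intervalIntegral.continuousOn_primitive_interval' iu Set.left_mem_uIcc)
    (by
      rw [min_eq_left hab, max_eq_right hab]
      exact fun r hr => (hg r (Set.Ioo_subset_Icc_self hr)).hasDerivAt (Icc_mem_nhds hr.1 hr.2))
    (by
      rw [min_eq_left hab, max_eq_right hab]
      intro r hr
      refine intervalIntegral.integral_hasDerivAt_right
        ((hu.mono (Set.Icc_subset_Icc_right hr.2.le)).intervalIntegrable_of_Icc hr.1.le)
        ((hu.mono Set.Ioo_subset_Icc_self).stronglyMeasurableAtFilter isOpen_Ioo r hr)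
        (hu.continuousAt (Icc_mem_nhds hr.1 hr.2)))
    ig' iu
  have hrem : ‖∫ x in a..b, g' x * ∫ r in a..x, u r‖ ≤ ∫ x in a..b, M * ‖g' x‖ := by
    refine intervalIntegral.norm_integral_le_of_norm_le hab (ae_of_all _ fun x hx => ?_)
      (ig'.norm.const_mul M)
    rw [norm_mul, mul_comm]
    exact mul_le_mul_of_nonneg_right (hM x (Set.Ioc_subset_Icc_self hx)) (norm_nonneg _)
  have hb : ‖g b * ∫ r in a..b, u r‖ ≤ M * ‖g b‖ := by
    rw [norm_mul, mul_comm]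
    exact mul_le_mul_of_nonneg_right (hM b (Set.right_mem_Icc.2 hab)) (norm_nonneg _)
  rw [intervalIntegral.integral_const_mul] at hrem
  simp only [intervalIntegral.integral_same, mul_zero, sub_zero] at parts
  simp only [mul_comm (u _)]
  rw [parts, mul_add]
  exact (norm_sub_le _ _).trans (add_le_add hb hrem)

/-- Van der Corput's Lemma: there is an absolute constant `C > 0` such that for all
`a < b`, `t > 0`, `A > 0`, every `g ∈ C¹` on `[a,b]` (with derivative `g'`) and every
`ψ ∈ C²` on `[a,b]` (with derivatives `ψ'`, `ψ''`) satisfying `|ψ''(r)| ≥ A` on `(a,b)`,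
`|∫_a^b e^{itψ(r)} g(r) dr| ≤ C (At)^{-1/2} (|g(b)| + ∫_a^b |g'(r)| dr)`. -/
theorem van_der_corput :
    ∃ C > 0, ∀ (a b : ℝ), a < b → ∀ (t A : ℝ), 0 < t → 0 < A →
      ∀ (g g' : ℝ → ℂ) (ψ ψ' ψ'' : ℝ → ℝ),
        (∀ r ∈ Set.Icc a b, HasDerivWithinAt g (g' r) (Set.Icc a b) r) →
        ContinuousOn g' (Set.Icc a b) →
        (∀ r ∈ Set.Icc a b, HasDerivWithinAt ψ (ψ' r) (Set.Icc a b) r) →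
        (∀ r ∈ Set.Icc a b, HasDerivWithinAt ψ' (ψ'' r) (Set.Icc a b) r) →
        ContinuousOn ψ'' (Set.Icc a b) →
        (∀ r ∈ Set.Ioo a b, A ≤ |ψ'' r|) →
        ‖∫ r in a..b, Complex.exp (Complex.I * (t * ψ r)) * g r‖ ≤
          C * (A * t) ^ (-(1 : ℝ) / 2) * (‖g b‖ + ∫ r in a..b, ‖g' r‖) := by
  refine ⟨10, by norm_num, ?_⟩
  intro a b hab t A ht hA g g' ψ ψ' ψ'' hg hg' hψ hψ' hψ'' hle
  have hm : 0 < A * t := mul_pos hA ht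
  have hmδ : A * t * ((A * t) ^ (-(1 : ℝ) / 2)) ^ 2 = 1 := by
    rw [← Real.rpow_natCast, ← Real.rpow_mul hm.le]
    norm_num [Real.rpow_neg_one]
    field_simp
  have hδ : 0 < (A * t) ^ (-(1 : ℝ) / 2) := Real.rpow_pos_of_pos hm _
  have cψ : ContinuousOn (fun r => (ψ r : ℂ)) (Set.Icc a b) :=
    continuous_ofReal.comp_continuousOn fun r hr => (hψ r hr).continuousWithinAt
  refine norm_integral_mul_le_of_norm_primitive_le hab.le
    (continuousOn_const.mul (continuousOn_const.mul cψ)).cexp hg hg' fun x hx => ?_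
  rcases hx.1.eq_or_lt with rfl | hax
  · simpa using hδ.le
  have hsub : Set.Icc a x ⊆ Set.Icc a b := Set.Icc_subset_Icc_right hx.2
  have key := norm_integral_exp_le_of_le_abs_second_deriv hax hm hδ hmδ
    (fun r hr => ((hψ r (hsub hr)).mono hsub).const_mul t)
    (fun r hr => ((hψ' r (hsub hr)).mono hsub).const_mul t)
    (continuousOn_const.mul (hψ''.mono hsub))
    (fun r hr => by
      rw [abs_mul, abs_of_pos ht, mul_comm A]
      exact mul_le_mul_of_nonneg_left (hle r (Set.Ioo_subset_Ioo_right hx.2 hr)) ht.le)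
  simpa only [ofReal_mul] using key
end
end

section
/- Let β ∈ {0,1}. For all r > 0, m_β'(r) ∼ ⟨√β r⟩ ⟨r⟩^{-1/2}; that is, there are absolute constants c₁, c₂ > 0 with c₁ ⟨√β r⟩ ⟨r⟩^{-1/2} ≤ m_β'(r) ≤ c₂ ⟨√β r⟩ ⟨r⟩^{-1/2} for all r > 0. In particular m_β' is positive on (0, ∞). -/
noncomputable section

open Real

theorem hasDerivAt_tanh_one_sub_sq (r : ℝ) : HasDerivAt Real.tanh (1 - Real.tanh r ^ 2) r := by
  have hc : Real.cosh r ≠ 0 := (Real.cosh_pos r).ne'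
  have hfun : Real.tanh = fun x => Real.sinh x / Real.cosh x :=
    funext Real.tanh_eq_sinh_div_cosh
  have h : HasDerivAt (fun x => Real.sinh x / Real.cosh x) _ r :=
    (Real.hasDerivAt_sinh r).div (Real.hasDerivAt_cosh r) hc
  rw [← hfun] at h
  refine h.congr_deriv ?_
  rw [Real.tanh_eq_sinh_div_cosh]
  field_simp

theorem le_tanh_mul_one_add {r : ℝ} (hr : 0 ≤ r) : r ≤ Real.tanh r * (1 + r) := by
  have hc := Real.cosh_pos r
  have hs := Real.self_le_sinh_iff.2 hr
  have he : Real.cosh r - Real.sinh r ≤ 1 := by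
    rw [Real.cosh_sub_sinh]; exact Real.exp_le_one_iff.2 (by linarith)
  rw [Real.tanh_eq_sinh_div_cosh, div_mul_eq_mul_div, le_div_iff₀ hc]
  nlinarith

theorem tanh_mul_one_add_le {r : ℝ} (hr : 0 ≤ r) : Real.tanh r * (1 + r) ≤ 3 * r := by
  have hc := Real.cosh_pos r
  have hs := Real.self_le_sinh_iff.2 hr
  have hsc : Real.sinh r ≤ Real.cosh r := (Real.sinh_lt_cosh r).le
  have he : Real.cosh r - Real.sinh r
      = (Real.cosh r + Real.sinh r) * Real.exp (-(2 * r)) := by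
    rw [Real.cosh_sub_sinh, Real.cosh_add_sinh, ← Real.exp_add]; congr 1; ring
  have he' : 1 - 2 * r ≤ Real.exp (-(2 * r)) := by
    linarith [Real.add_one_le_exp (-(2 * r))]
  have h2 : Real.sinh r ≤ 2 * r * Real.cosh r := by
    nlinarith [mul_le_mul_of_nonneg_left he'
      (by linarith : 0 ≤ Real.cosh r + Real.sinh r)]
  rw [Real.tanh_eq_sinh_div_cosh, div_mul_eq_mul_div, div_le_iff₀ hc]
  nlinarith

theorem mul_one_sub_tanh_sq_nonneg {r : ℝ} (hr : 0 ≤ r) : 0 ≤ r * (1 - Real.tanh r ^ 2) := by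
  have h : Real.tanh r ^ 2 ≤ 1 := by
    rw [Real.tanh_eq_sinh_div_cosh, div_pow, div_le_one (by have := Real.cosh_pos r; positivity)]
    linarith [Real.cosh_sq r]
  exact mul_nonneg hr (by linarith)

theorem mul_one_sub_tanh_sq_le {r : ℝ} (hr : 0 ≤ r) : r * (1 - Real.tanh r ^ 2) ≤ Real.tanh r := by
  have hc := Real.cosh_pos r
  have h1 : 1 - Real.tanh r ^ 2 = 1 / Real.cosh r ^ 2 := by
    rw [Real.tanh_eq_sinh_div_cosh]
    field_simp
    linarith [Real.cosh_sq r]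
  rw [h1, Real.tanh_eq_sinh_div_cosh, mul_one_div, div_le_div_iff₀ (by positivity) hc]
  nlinarith [Real.self_le_sinh_iff.2 hr, Real.one_le_cosh r,
    mul_nonneg (Real.sinh_nonneg_iff.2 hr) (sub_nonneg.2 (Real.one_le_cosh r))]

theorem hasDerivAt_mSymb_s8 {β r : ℝ} (hβ : 0 ≤ β) (hr : 0 < r) :
    HasDerivAt (mSymb β)
      (((1 + 3 * β * r ^ 2) * Real.tanh r + (1 + β * r ^ 2) * (r * (1 - Real.tanh r ^ 2)))
        / (2 * mSymb β r)) r := by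
  have hT : 0 < Real.tanh r := by
    have := le_tanh_mul_one_add hr.le
    exact pos_of_mul_pos_left (hr.trans_le this) (by linarith)
  have hpoly : HasDerivAt (fun x : ℝ => x * (1 + β * x ^ 2)) (1 + 3 * β * r ^ 2) r := by
    refine ((hasDerivAt_id' r).mul
      (((hasDerivAt_pow 2 r).const_mul β).const_add 1)).congr_deriv ?_
    push_cast
    ring
  have hF : HasDerivAt (fun x : ℝ => x * (1 + β * x ^ 2) * Real.tanh x)
      ((1 + 3 * β * r ^ 2) * Real.tanh r + r * (1 + β * r ^ 2) * (1 - Real.tanh r ^ 2)) r :=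
    hpoly.mul (hasDerivAt_tanh_one_sub_sq r)
  refine (hF.sqrt (by positivity)).congr_deriv ?_
  rw [← mSymb]
  ring

/-- The two-sided bound `⟨√β r⟩ ⟨r⟩^{-1/2} / 8 ≤ m_β'(r) ≤ 18 ⟨√β r⟩ ⟨r⟩^{-1/2}`,
uniformly in `β ≥ 0` and `r > 0`. -/
theorem deriv_mSymb_bounds {β r : ℝ} (hβ : 0 ≤ β) (hr : 0 < r) :
    1 / 8 * (jap (Real.sqrt β * r) * jap r ^ (-(1 : ℝ) / 2)) ≤ deriv (mSymb β) r ∧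
      deriv (mSymb β) r ≤ 18 * (jap (Real.sqrt β * r) * jap r ^ (-(1 : ℝ) / 2)) := by
  rw [(hasDerivAt_mSymb_s8 hβ hr).deriv]
  have hlow := le_tanh_mul_one_add hr.le
  have hup := tanh_mul_one_add_le hr.le
  have hd0 := mul_one_sub_tanh_sq_nonneg hr.le
  have hd1 := mul_one_sub_tanh_sq_le hr.le
  have hT : 0 < Real.tanh r := pos_of_mul_pos_left (hr.trans_le hlow) (by linarith)
  have hJ1 : 1 ≤ jap r := Real.one_le_sqrt.2 (by nlinarith)
  have hJr : r ≤ jap r := Real.le_sqrt_of_sq_le (by linarith)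
  have hJ2 : jap r ≤ 1 + r := Real.sqrt_le_iff.2 ⟨by linarith, by nlinarith⟩
  have hK : 0 < jap r ^ (-(1 : ℝ) / 2) := Real.rpow_pos_of_pos (by linarith) _
  have hKJ : (jap r ^ (-(1 : ℝ) / 2)) ^ 2 * jap r = 1 := by
    rw [← Real.rpow_natCast, ← Real.rpow_mul (by linarith)]
    norm_num [Real.rpow_neg_one]
    exact inv_mul_cancel₀ (by linarith)
  have hb2 : jap (Real.sqrt β * r) ^ 2 = 1 + β * r ^ 2 := by
    rw [jap, Real.sq_sqrt (by positivity), mul_pow, Real.sq_sqrt hβ]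
  have hb : 0 < jap (Real.sqrt β * r) := Real.sqrt_pos.2 (by positivity)
  have hS : 0 < mSymb β r := Real.sqrt_pos.2 (by positivity)
  have hS2 : mSymb β r ^ 2 = r * (1 + β * r ^ 2) * Real.tanh r := Real.sq_sqrt (by positivity)
  have hβr : 0 ≤ β * r ^ 2 := by positivity
  have h3 : 3 * β * r ^ 2 = 3 * (β * r ^ 2) := by ring
  rw [← hb2] at hS2 ⊢
  rw [h3, show 1 + 3 * (β * r ^ 2) = 3 * jap (Real.sqrt β * r) ^ 2 - 2 by linarith]
  have hB1 : 1 ≤ jap (Real.sqrt β * r) ^ 2 := by linarith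
  generalize jap (Real.sqrt β * r) = b at *
  generalize jap r ^ (-(1 : ℝ) / 2) = K at *
  generalize mSymb β r = S at *
  generalize Real.tanh r = T at *
  generalize jap r = J at *
  generalize r * (1 - T ^ 2) = d at *
  have hTup : T ≤ 3 * r * K ^ 2 := by
    have : T * J ≤ 3 * r := le_trans (by gcongr) hup
    calc T = K ^ 2 * (T * J) := by linear_combination (-T) * hKJ
      _ ≤ K ^ 2 * (3 * r) := by gcongr
      _ = _ := by ring
  have hTlow : r * K ^ 2 ≤ 2 * T := by
    have : r ≤ T * (2 * J) := hlow.trans (by gcongr; linarith)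
    calc r * K ^ 2 ≤ T * (2 * J) * K ^ 2 := by gcongr
      _ = 2 * T := by linear_combination 2 * T * hKJ
  have hSup : S ≤ 2 * (r * b * K) := by
    refine le_of_pow_le_pow_left₀ two_ne_zero (by positivity) ?_
    calc S ^ 2 = r * b ^ 2 * T := hS2
      _ ≤ r * b ^ 2 * (4 * r * K ^ 2) := by
        gcongr; nlinarith [mul_pos hr (pow_pos hK 2)]
      _ = _ := by ring
  have hSlow : r * b * K ≤ 2 * S := by
    refine le_of_pow_le_pow_left₀ two_ne_zero (by positivity) ?_
    calc (r * b * K) ^ 2 = r * b ^ 2 * (r * K ^ 2) := by ring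
      _ ≤ r * b ^ 2 * (4 * T) :=
        mul_le_mul_of_nonneg_left (by linarith) (by positivity)
      _ = (2 * S) ^ 2 := by linear_combination (-4) * hS2
  constructor
  · rw [le_div_iff₀ (by positivity)]
    calc 1 / 8 * (b * K) * (2 * S) ≤ 1 / 8 * (b * K) * (2 * (2 * (r * b * K))) := by gcongr
      _ = b ^ 2 * (r * K ^ 2) / 2 := by ring
      _ ≤ b ^ 2 * (2 * T) / 2 := by gcongr
      _ ≤ (3 * b ^ 2 - 2) * T + b ^ 2 * d := by nlinarith [mul_nonneg (sq_nonneg b) hd0]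
  · rw [div_le_iff₀ (by positivity)]
    calc (3 * b ^ 2 - 2) * T + b ^ 2 * d ≤ 6 * (b ^ 2 * T) := by
          nlinarith [mul_le_mul_of_nonneg_left hd1 (sq_nonneg b), mul_pos (pow_pos hb 2) hT]
      _ ≤ 6 * (b ^ 2 * (3 * r * K ^ 2)) := by gcongr
      _ = 18 * (b * K) * (r * b * K) := by ring
      _ ≤ 18 * (b * K) * (2 * S) := by gcongr

/-- `m_β'(r) ∼ ⟨√β r⟩ ⟨r⟩^{-1/2}` for all `r > 0`, `β ∈ {0,1}`; in particular
`m_β'` is positive on `(0,∞)`. -/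
theorem deriv_mSymb_comparable (β : ℝ) (hβ : β = 0 ∨ β = 1) :
    ∃ c₁ > (0 : ℝ), ∃ c₂ > (0 : ℝ), ∀ r : ℝ, 0 < r →
      (c₁ * (jap (Real.sqrt β * r) * jap r ^ (-(1 : ℝ) / 2)) ≤ deriv (mSymb β) r ∧
        deriv (mSymb β) r ≤ c₂ * (jap (Real.sqrt β * r) * jap r ^ (-(1 : ℝ) / 2))) ∧
      0 < deriv (mSymb β) r := by
  refine ⟨1 / 8, by norm_num, 18, by norm_num, fun r hr => ?_⟩
  have hβ0 : 0 ≤ β := by rcases hβ with rfl | rfl <;> norm_num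
  have h := deriv_mSymb_bounds hβ0 hr
  have hjap : ∀ x, 0 < jap x := fun x => Real.sqrt_pos.2 (by positivity)
  have hpos : 0 < jap (Real.sqrt β * r) * jap r ^ (-(1 : ℝ) / 2) :=
    mul_pos (hjap _) (Real.rpow_pos_of_pos (hjap _) _)
  exact ⟨h, lt_of_lt_of_le (by positivity) h.1⟩
end
end
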